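/- Fix ε > 0. Then uniformly for X ≥ 1, c ∈ [0,1] and 0 ≤ T ≤ X^{−10/3}, one has ∫_{[0,1]² × [c−T, c+T]} |f(α₁, α₂, α₃; X)|^{20} dα₁ dα₂ dα₃ ≪_ε X^{11+ε}, where f(α₁, α₂, α₃; X) = Σ_{|x| ≤ X} e(α₁ x + α₂ x³ + α₃ x⁵), the sum over integers x with |x| ≤ X. -/

import Mathlib

/-!
The variables are written `a = α₁`, `b = α₂`, `t = α₃`. Splitting the range of summation into
dyadic blocks and using `e(-θ) = conj (e(θ))`, it is enough to treat the block sum `F` over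
`Z < x ≤ Z'` with `Z' ≤ 2 Z` (`block_bound`). Put `p = Z^{1/6}`, so `T ≪ p⁻²⁰`.

*Reduction to `c = 0`.* The moment of `F` over `a, b ∈ [0, 1]`, as a function of `t`, is a
trigonometric polynomial with nonnegative coefficients, so its integral over `[c - T, c + T]` is at
most twice the integral over `[-4 T, 4 T]` (`integral_G20_shift`).

*The fourth moment in `a`.* By Parseval, `∫ |F|⁴ da = W(b, t)`, a sum of `e(3 n b + q t)` over
parallelograms `x, x + h, x + k, x + h + k` in the block. Here `n = h k y`, `2 q = 5 n D` with
`y = 2 x + h + k` and `D = h² + k² + y²`. Also `|F|⁴ ≪ Z W` pointwise by Cauchy–Schwarz. Hence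
`∫ |F|²⁰ da ≪ Z W² sup_a |F|¹²`. The parallelograms with `n = 0` contribute `O(Z²)` to `W`; the
rest is split into `Ws` (with `|n| < Z³ / p`) and `Wb`.

*Pointwise bounds for `F`.* Two van der Corput steps followed by the second-derivative test give
`|F|⁴ ≪ Z^{3/2} |t|^{-1/2} + Z^{7/2}` (`F_pow_four_le_small_t`), while two steps of lengths
`Z^{1/3}` and `Z^{2/3}` bound `|F|⁴` by a constant `≪ Z⁴ / p⁴` plus `KR`, a weighted sum of
`Re e(3 n b + q t)` over short parallelograms (`F_pow_four_le_Br`).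

*Means over `b` and `t`.* By the divisor bound, `n ≠ 0` determines the parallelogram up to `Z^ε`
choices, so `∫ |Wb|² db ≪ Z^{3+ε}` and `∫ |Ws|² db ≪ Z^{3+ε} / p`. This settles the range
`|t| ≤ p⁻²⁴`, where `sup |F|¹² ≪ Z¹² / (1 + Z⁵ |t|)`, and the part where `Ws` dominates, where
`sup |F|¹² ≪ p⁶³`. When `Wb` dominates, the bound used is `|F|¹² ≪ p⁴² (Z⁴ / p⁴ + KR)`; after
localisation in `t` by a Dirichlet kernel, the mean of `|Wb|² KR` counts triples of parallelograms
with `n₁ - n₂ + n₃ = 0` and `|q₁ - q₂ + q₃| < R`, where `R` is of order `p²⁰` and the third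
parallelogram is short. Then `n₁ ≈ n₂` and `q₁ ≈ q₂`, which forces `D₁ ≈ D₂`; so `(y₂ ± k₂)²` lie
in short intervals once `h₂` is fixed, and there are only `O(Z⁴ p²)` such pairs
(`card_close_pairs`).
-/

open MeasureTheory Finset

noncomputable def e (θ : ℝ) : ℂ := Complex.exp (2 * Real.pi * Complex.I * θ)

/-- `f(α₁, α₂, α₃; X) = ∑_{|x| ≤ X} e(α₁x + α₂x³ + α₃x⁵)`. -/
noncomputable def f135 (α₁ α₂ α₃ X : ℝ) : ℂ :=
  ∑ x ∈ Finset.Icc (-⌊X⌋) ⌊X⌋,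
    e (α₁ * (x : ℝ) + α₂ * (x : ℝ) ^ 3 + α₃ * (x : ℝ) ^ 5)

/-! ### Exponentials and orthogonality -/

lemma e_zero : e 0 = 1 := by simp [e]

lemma e_add (x y : ℝ) : e (x + y) = e x * e y := by
  simp only [e]; rw [← Complex.exp_add]; congr 1; push_cast; ring

lemma norm_e (x : ℝ) : ‖e x‖ = 1 := by
  have : e x = Complex.exp (((2 * Real.pi * x : ℝ) : ℂ) * Complex.I) := by
    simp only [e]; congr 1; push_cast; ring
  rw [this, Complex.norm_exp_ofReal_mul_I]

lemma e_neg_mul (x : ℝ) : e (-x) * e x = 1 := by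
  rw [← e_add]; simp [e_zero]

lemma conj_e (x : ℝ) : (starRingEnd ℂ) (e x) = e (-x) := by
  simp only [e]; rw [← Complex.exp_conj]; congr 1
  simp [map_ofNat]

lemma e_int (n : ℤ) : e n = 1 := by
  simp only [e]
  rw [Complex.exp_eq_one_iff]
  exact ⟨n, by push_cast; ring⟩

@[fun_prop]
lemma continuous_e : Continuous e := by
  unfold e; fun_prop

lemma norm_e_sub_e (x y : ℝ) : ‖e x - e y‖ ≤ 2 * Real.pi * |x - y| := by
  have h : e x - e y = e y * (Complex.exp (Complex.I * ((2 * Real.pi * (x - y) : ℝ) : ℂ)) - 1) := by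
    have : Complex.exp (Complex.I * ((2 * Real.pi * (x - y) : ℝ) : ℂ)) = e (x - y) := by
      simp only [e]; congr 1; push_cast; ring
    rw [this, mul_sub, ← e_add]; simp
  rw [h, norm_mul, norm_e, one_mul]
  refine (Real.norm_exp_I_mul_ofReal_sub_one_le).trans ?_
  rw [Real.norm_eq_abs, abs_mul, abs_of_pos Real.two_pi_pos]

/-- On `[-3/4, 3/4]` the chord `|e(δ) - 1| = 2 |sin πδ|` dominates `|δ|`. -/
lemma abs_le_norm_e_sub_one {x : ℝ} (hx : |x| ≤ 3 / 4) : |x| ≤ ‖e x - 1‖ := by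
  have h : ‖e x - 1‖ = |2 * Real.sin (Real.pi * x)| := by
    have : e x = Complex.exp (Complex.I * ((2 * Real.pi * x : ℝ) : ℂ)) := by
      simp only [e]; congr 1; push_cast; ring
    rw [this, Complex.norm_exp_I_mul_ofReal_sub_one, Real.norm_eq_abs]
    congr 3; ring
  rw [h, abs_mul, abs_of_pos (by norm_num : (0:ℝ) < 2)]
  wlog hx0 : 0 ≤ x generalizing x
  · have := this (x := -x) (by rwa [abs_neg]) (by
      have : e (-x) - 1 = (starRingEnd ℂ) (e x - 1) := by
        rw [map_sub, conj_e]; simp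
      rw [this, Complex.norm_conj, h]; simp [Real.sin_neg]) (by linarith)
    simpa [Real.sin_neg] using this
  rw [abs_of_nonneg hx0] at hx ⊢
  have hpi := Real.pi_gt_three
  have hs : 0 ≤ Real.sin (Real.pi * x) :=
    Real.sin_nonneg_of_nonneg_of_le_pi (by positivity) (by nlinarith)
  rw [abs_of_nonneg hs]
  by_cases h2 : x ≤ 1 / 2
  · have := Real.mul_le_sin (x := Real.pi * x) (by positivity) (by nlinarith)
    have h3 : 2 / Real.pi * (Real.pi * x) = 2 * x := by field_simp
    rw [h3] at this
    linarith
  · have := Real.mul_le_sin (x := Real.pi * (1 - x)) (by nlinarith) (by nlinarith)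
    have h3 : 2 / Real.pi * (Real.pi * (1 - x)) = 2 * (1 - x) := by field_simp
    have h4 : Real.sin (Real.pi * (1 - x)) = Real.sin (Real.pi * x) := by
      rw [mul_sub, mul_one, Real.sin_pi_sub]
    rw [h3, h4] at this
    linarith

lemma integral_e_int (s : ℝ) (n : ℤ) :
    ∫ θ in s..(s + 1), e (n * θ) = if n = 0 then 1 else 0 := by
  split_ifs with h
  · subst h; simp [e_zero]
  · have hc : (2 * Real.pi * Complex.I * n : ℂ) ≠ 0 := by
      simp [Real.pi_ne_zero, h]
    have : (fun θ : ℝ => e (n * θ)) = fun θ : ℝ => Complex.exp ((2 * Real.pi * Complex.I * n) * θ) := by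
      funext θ; simp only [e]; congr 1; push_cast; ring
    rw [this, integral_exp_mul_complex hc]
    have h2 : Complex.exp (2 * Real.pi * Complex.I * n * ((s + 1 : ℝ) : ℂ))
        = Complex.exp (2 * Real.pi * Complex.I * n * (s : ℂ)) := by
      have := e_add (n * s) n
      rw [e_int, mul_one] at this
      simp only [e] at this
      convert this using 2 <;> push_cast <;> ring
    rw [h2]; simp

/-- Orthogonality in one variable, as an upper bound. -/
lemma norm_integral_trig_le {ι : Type*} (P : Finset ι) (m : ι → ℤ) (w : ι → ℂ)
    (hw : ∀ i ∈ P, ‖w i‖ ≤ 1) (s : ℝ) :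
    ‖∫ θ in s..(s + 1), ∑ i ∈ P, w i * e (m i * θ)‖ ≤ #{i ∈ P | m i = 0} := by
  rw [intervalIntegral.integral_finsetSum]
  · simp only [intervalIntegral.integral_const_mul, integral_e_int]
    simp only [mul_ite, mul_one, mul_zero]
    rw [← Finset.sum_filter]
    refine (norm_sum_le _ _).trans ?_
    refine (Finset.sum_le_sum (g := fun _ => (1 : ℝ)) ?_).trans (by simp)
    intro i hi
    exact hw i (Finset.mem_filter.1 hi).1
  · intro i _
    apply Continuous.intervalIntegrable
    fun_prop

lemma normSq_sum_e {ι : Type*} (P : Finset ι) (φ : ι → ℝ) :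
    ((‖∑ i ∈ P, e (φ i)‖ ^ 2 : ℝ) : ℂ) = ∑ ij ∈ P ×ˢ P, e (φ ij.1 - φ ij.2) := by
  push_cast
  rw [← Complex.mul_conj', map_sum, Finset.sum_mul_sum, ← Finset.sum_product']
  refine Finset.sum_congr rfl fun ij _ => ?_
  rw [conj_e, ← e_add]; rfl

/-! ### Divisor bound -/

/-- The classical divisor bound `d(n) ≪ n ^ η`: primes `p ≥ 2 ^ (1/η)` satisfy
`a + 1 ≤ p ^ (a η)`, and each of the finitely many smaller primes costs a constant factor. -/
lemma card_divisors_le (η : ℝ) (hη : 0 < η) :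
    ∃ C : ℝ, 1 ≤ C ∧ ∀ n : ℕ, n ≠ 0 → (#n.divisors : ℝ) ≤ C * (n : ℝ) ^ η := by
  set K : ℝ := max 1 (1 / (η * Real.log 2)) with hK
  have hK1 : 1 ≤ K := le_max_left _ _
  have hl2 : 0 < Real.log 2 := Real.log_pos (by norm_num)
  set B : ℕ := ⌈(2 : ℝ) ^ (1 / η)⌉₊ with hB
  refine ⟨K ^ B, one_le_pow₀ hK1, fun n hn => ?_⟩
  have hloc : ∀ p ∈ n.primeFactors, ((n.factorization p + 1 : ℕ) : ℝ) ≤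
      (if p < B then K else 1) * ((p : ℝ) ^ (n.factorization p)) ^ η := by
    intro p hp
    have hp2 : 2 ≤ p := (Nat.prime_of_mem_primeFactors hp).two_le
    set a := n.factorization p
    have hp0 : (0 : ℝ) < p := by positivity
    have hcomm : ((p : ℝ) ^ a) ^ η = ((p : ℝ) ^ η) ^ a := by
      rw [← Real.rpow_natCast, ← Real.rpow_mul hp0.le, mul_comm, Real.rpow_mul hp0.le,
        Real.rpow_natCast]
    push_cast
    split_ifs with h
    · have h1 : (2 : ℝ) ^ ((a : ℝ) * η) ≤ ((p : ℝ) ^ a) ^ η := by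
        rw [← Real.rpow_natCast, ← Real.rpow_mul hp0.le]
        exact Real.rpow_le_rpow (by norm_num) (by exact_mod_cast hp2) (by positivity)
      have h2 : 1 + (a : ℝ) * η * Real.log 2 ≤ (2 : ℝ) ^ ((a : ℝ) * η) := by
        rw [Real.rpow_def_of_pos (by norm_num)]
        have := Real.add_one_le_exp (Real.log 2 * (a * η))
        linarith
      have h3 : 1 ≤ K * (η * Real.log 2) := by
        have : 1 / (η * Real.log 2) ≤ K := le_max_right _ _
        rwa [div_le_iff₀ (by positivity)] at this
      calc (a : ℝ) + 1 ≤ K * (1 + a * η * Real.log 2) := by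
            nlinarith [Nat.cast_nonneg (α := ℝ) a]
        _ ≤ _ := by gcongr; linarith
    · rw [one_mul, hcomm]
      have h1 : (2 : ℝ) ≤ (p : ℝ) ^ η := by
        have : (2 : ℝ) ^ (1 / η) ≤ p := by
          refine (Nat.le_ceil _).trans ?_
          exact_mod_cast not_lt.1 h
        calc (2 : ℝ) = ((2 : ℝ) ^ (1 / η)) ^ η := by
              rw [← Real.rpow_mul (by norm_num)]; field_simp; simp
          _ ≤ _ := Real.rpow_le_rpow (by positivity) this hη.le
      calc (a : ℝ) + 1 ≤ 2 ^ a := by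
            exact_mod_cast Nat.lt_two_pow_self
        _ ≤ _ := by gcongr
  rw [Nat.card_divisors hn]
  push_cast
  calc ∏ p ∈ n.primeFactors, ((n.factorization p : ℝ) + 1)
      ≤ ∏ p ∈ n.primeFactors, ((if p < B then K else 1) * ((p : ℝ) ^ (n.factorization p)) ^ η) := by
        refine Finset.prod_le_prod (fun _ _ => by positivity) fun p hp => ?_
        exact_mod_cast hloc p hp
    _ = (∏ p ∈ n.primeFactors, if p < B then K else 1) * (n : ℝ) ^ η := by
        rw [Finset.prod_mul_distrib, Real.finsetProd_rpow _ _ (fun _ _ => by positivity)]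
        congr 2
        conv_rhs => rw [← Nat.prod_factorization_pow_eq_self hn]
        rw [Finsupp.prod]; push_cast; rfl
    _ ≤ K ^ B * (n : ℝ) ^ η := by
        gcongr
        rw [← Finset.prod_filter, Finset.prod_const]
        refine pow_le_pow_right₀ hK1 ?_
        calc _ ≤ #(Finset.range B) := Finset.card_le_card fun p hp => by
              simpa using (Finset.mem_filter.1 hp).2
          _ = B := by simp

/-- Integer divisors come in pairs `±d`. -/
lemma card_int_divisors_le (S : Finset ℤ) (n : ℤ) (hn : n ≠ 0) :
    #{h ∈ S | h ∣ n} ≤ 2 * #n.natAbs.divisors := by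
  classical
  have hsub : {h ∈ S | h ∣ n} ⊆ n.natAbs.divisors.image (fun d : ℕ => (d : ℤ)) ∪
      n.natAbs.divisors.image (fun d : ℕ => -(d : ℤ)) := by
    intro h hh
    have hd := (Finset.mem_filter.1 hh).2
    have hmem : h.natAbs ∈ n.natAbs.divisors :=
      Nat.mem_divisors.2 ⟨Int.natAbs_dvd_natAbs.2 hd, by simpa using hn⟩
    rw [Finset.mem_union, Finset.mem_image, Finset.mem_image]
    rcases Int.natAbs_eq h with h1 | h1
    · exact Or.inl ⟨_, hmem, h1.symm⟩
    · exact Or.inr ⟨_, hmem, h1.symm⟩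
  calc _ ≤ _ := Finset.card_le_card hsub
    _ ≤ _ := Finset.card_union_le _ _
    _ ≤ _ := by rw [two_mul]; exact add_le_add Finset.card_image_le Finset.card_image_le

/-! ### Correlations and the van der Corput inequality -/

/-- Those `x ∈ A` whose translate `x + h` also lies in `A`. -/
def sh (A : Finset ℤ) (h : ℤ) : Finset ℤ := {x ∈ A | x + h ∈ A}

lemma mem_sh {A : Finset ℤ} {h x : ℤ} : x ∈ sh A h ↔ x ∈ A ∧ x + h ∈ A := by
  simp [sh]

lemma sh_subset (A : Finset ℤ) (h : ℤ) : sh A h ⊆ A := Finset.filter_subset _ _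

/-- The correlation of `u`, restricted to `A`, with its translate by `h`. -/
noncomputable def corr (A : Finset ℤ) (u : ℤ → ℂ) (h : ℤ) : ℂ :=
  ∑ x ∈ sh A h, u (x + h) * (starRingEnd ℂ) (u x)

lemma corr_e (A : Finset ℤ) (φ : ℤ → ℝ) (h : ℤ) :
    corr A (fun x => e (φ x)) h = ∑ x ∈ sh A h, e (φ (x + h) - φ x) := by
  unfold corr
  refine Finset.sum_congr rfl fun x _ => ?_
  rw [conj_e, ← e_add]; rfl

lemma corr_neg (A : Finset ℤ) (u : ℤ → ℂ) (h : ℤ) :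
    corr A u (-h) = (starRingEnd ℂ) (corr A u h) := by
  unfold corr
  rw [map_sum]
  refine Finset.sum_nbij' (fun x => x - h) (fun x => x + h) ?_ ?_ ?_ ?_ ?_
  · intro x hx; rw [mem_sh] at hx ⊢
    exact ⟨by simpa [sub_eq_add_neg] using hx.2, by simpa using hx.1⟩
  · intro x hx; rw [mem_sh] at hx ⊢
    exact ⟨hx.2, by simpa using hx.1⟩
  · intro x _; ring
  · intro x _; ring
  · intro x _
    simp [sub_eq_add_neg, mul_comm]

/-- A squared sum is the sum of all its correlations. -/
lemma normSq_sum_eq_corr (A : Finset ℤ) (Z : ℤ) (hA : A ⊆ Ioc Z (2 * Z)) (u : ℤ → ℂ) :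
    ((‖∑ x ∈ A, u x‖ ^ 2 : ℝ) : ℂ) = ∑ h ∈ Icc (-Z) Z, corr A u h := by
  push_cast
  rw [← Complex.mul_conj', map_sum, Finset.sum_mul_sum, Finset.sum_comm]
  have : ∀ x ∈ A, ∑ y ∈ A, u y * (starRingEnd ℂ) (u x) =
      ∑ h ∈ Icc (-Z) Z with x + h ∈ A, u (x + h) * (starRingEnd ℂ) (u x) := by
    intro x hx
    refine Finset.sum_nbij' (fun y => y - x) (fun h => x + h) ?_ ?_ ?_ ?_ ?_
    · intro y hy
      have h1 := hA hx; have h2 := hA hy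
      rw [mem_Ioc] at h1 h2
      rw [mem_filter, mem_Icc]
      refine ⟨⟨by linarith, by linarith⟩, by simpa using hy⟩
    · intro h hh; exact (mem_filter.1 hh).2
    · intro y _; ring
    · intro y _; ring
    · intro y _; simp
  rw [Finset.sum_congr rfl this]
  unfold corr
  refine Finset.sum_comm' ?_
  intro x h
  rw [mem_filter, mem_sh]; tauto

lemma sum_sum_even (R : ℤ → ℝ) (hR : ∀ h, R (-h) = R h) (H : ℕ) :
    ∑ j ∈ range H, ∑ k ∈ range H, R ((k : ℤ) - j) =
      2 * ∑ h ∈ range H, ((H : ℝ) - h) * R h - H * R 0 := by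
  induction H with
  | zero => simp
  | succ H ih =>
    have h1 : ∑ j ∈ range (H + 1), ∑ k ∈ range (H + 1), R ((k : ℤ) - j) =
        ∑ j ∈ range H, ∑ k ∈ range H, R ((k : ℤ) - j) +
          2 * ∑ j ∈ range H, R ((H : ℤ) - j) + R 0 := by
      rw [Finset.sum_range_succ]
      simp_rw [Finset.sum_range_succ (n := H)]
      rw [Finset.sum_add_distrib]
      have : ∑ x ∈ range H, R ((x : ℤ) - H) = ∑ x ∈ range H, R ((H : ℤ) - x) :=
        Finset.sum_congr rfl fun x _ => by rw [← hR]; congr 1; ring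
      rw [this, sub_self]; ring
    have h2 : ∑ j ∈ range H, R ((H : ℤ) - j) + R 0 = ∑ j ∈ range (H + 1), R j := by
      rw [← Finset.sum_range_reflect (fun j : ℕ => R j), Finset.sum_range_succ]
      congr 1
      · refine Finset.sum_congr rfl fun j hj => ?_
        have := mem_range.1 hj
        congr 1
        push_cast [show j ≤ H from this.le, Nat.cast_sub]
        omega
      · simp
    have h3 : ∑ h ∈ range (H + 1), (((H + 1 : ℕ) : ℝ) - h) * R h =
        ∑ h ∈ range H, ((H : ℝ) - h) * R h + ∑ j ∈ range (H + 1), R j := by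
      have : ∑ h ∈ range (H + 1), (((H + 1 : ℕ) : ℝ) - h) * R h =
        ∑ h ∈ range (H + 1), ((H : ℝ) - h) * R h + ∑ j ∈ range (H + 1), R j := by
        rw [← Finset.sum_add_distrib]
        refine Finset.sum_congr rfl fun h _ => ?_
        push_cast; ring
      rw [this, Finset.sum_range_succ (fun h : ℕ => ((H : ℝ) - h) * R h)]
      simp
    rw [h1, h3, ih]
    push_cast
    linarith

lemma norm_sum_sq_le {ι : Type*} (s : Finset ι) (w : ι → ℂ) :
    ‖∑ i ∈ s, w i‖ ^ 2 ≤ #s * ∑ i ∈ s, ‖w i‖ ^ 2 :=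
  (pow_le_pow_left₀ (norm_nonneg _) (norm_sum_le _ _) 2).trans sq_sum_le_card_mul_sum_sq

/-- van der Corput's inequality for a set contained in a dyadic interval. -/
lemma vdC (A : Finset ℤ) (Z : ℕ) (hA : A ⊆ Ioc (Z : ℤ) (2 * Z)) (u : ℤ → ℂ) (H : ℕ)
    (hHZ : H ≤ Z) :
    (H : ℝ) ^ 2 * ‖∑ x ∈ A, u x‖ ^ 2 ≤ 2 * Z * (H * ∑ x ∈ A, ‖u x‖ ^ 2 +
      2 * ∑ h ∈ Ico (1 : ℤ) H, ((H : ℝ) - h) * (corr A u h).re) := by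
  set v : ℤ → ℂ := fun x => if x ∈ A then u x else 0 with hv
  set M : Finset ℤ := Ioc (Z : ℤ) (2 * Z + H) with hM
  -- every translate of the sum is captured by `M`
  have hshift : ∀ j ∈ range H, ∑ m ∈ M, v (m - j) = ∑ x ∈ A, u x := by
    intro j hj
    have hj' := mem_range.1 hj
    symm
    have : ∑ x ∈ A, u x = ∑ m ∈ A.image (fun x => x + (j : ℤ)), v (m - j) := by
      rw [Finset.sum_image (by intro a _ b _ h; simpa using h)]
      refine Finset.sum_congr rfl fun x hx => ?_
      simp [hv, hx]
    rw [this]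
    refine Finset.sum_subset ?_ ?_
    · intro m hm
      obtain ⟨x, hx, rfl⟩ := mem_image.1 hm
      have := mem_Ioc.1 (hA hx)
      rw [hM, mem_Ioc]; constructor <;> [omega; omega]
    · intro m _ hm
      simp only [hv]
      rw [if_neg]
      intro h
      exact hm (mem_image.2 ⟨_, h, by ring⟩)
  have hcorr : ∀ j ∈ range H, ∀ k ∈ range H,
      ∑ m ∈ M, v (m - j) * (starRingEnd ℂ) (v (m - k)) = corr A u ((k : ℤ) - j) := by
    intro j hj k hk
    have hk' := mem_range.1 hk
    symm
    unfold corr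
    have : ∑ x ∈ sh A ((k : ℤ) - j), u (x + ((k : ℤ) - j)) * (starRingEnd ℂ) (u x) =
        ∑ m ∈ (sh A ((k : ℤ) - j)).image (fun x => x + (k : ℤ)),
          v (m - j) * (starRingEnd ℂ) (v (m - k)) := by
      rw [Finset.sum_image (by intro a _ b _ h; simpa using h)]
      refine Finset.sum_congr rfl fun x hx => ?_
      obtain ⟨h1, h2⟩ := mem_sh.1 hx
      have h3 : x + (k : ℤ) - j = x + ((k : ℤ) - j) := by ring
      simp [hv, h1, h3, h2]
    rw [this]
    refine Finset.sum_subset ?_ ?_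
    · intro m hm
      obtain ⟨x, hx, rfl⟩ := mem_image.1 hm
      have := mem_Ioc.1 (hA (sh_subset _ _ hx))
      rw [hM, mem_Ioc]; constructor <;> [omega; omega]
    · intro m _ hm
      by_contra hne
      apply hm
      have h1 : m - (j : ℤ) ∈ A := by
        by_contra h; simp [hv, h] at hne
      have h2 : m - (k : ℤ) ∈ A := by
        by_contra h; simp [hv, h] at hne
      refine mem_image.2 ⟨m - k, mem_sh.2 ⟨h2, ?_⟩, by ring⟩
      have : m - (k : ℤ) + (k - j) = m - j := by ring
      rwa [this]
  have h1 : (H : ℂ) * ∑ x ∈ A, u x = ∑ m ∈ M, ∑ j ∈ range H, v (m - j) := by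
    rw [Finset.sum_comm, Finset.sum_congr rfl hshift]; simp
  have h2 : ∑ m ∈ M, ‖∑ j ∈ range H, v (m - j)‖ ^ 2 =
      ∑ j ∈ range H, ∑ k ∈ range H, (corr A u ((k : ℤ) - j)).re := by
    have : ((∑ m ∈ M, ‖∑ j ∈ range H, v (m - j)‖ ^ 2 : ℝ) : ℂ) =
        ∑ j ∈ range H, ∑ k ∈ range H, corr A u ((k : ℤ) - j) := by
      push_cast
      simp_rw [← Complex.mul_conj', map_sum, Finset.sum_mul_sum]
      rw [Finset.sum_comm]
      refine Finset.sum_congr rfl fun j hj => ?_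
      rw [Finset.sum_comm]
      refine Finset.sum_congr rfl fun k hk => hcorr j hj k hk
    have h := congrArg Complex.re this
    rw [Complex.ofReal_re] at h
    rw [h, Complex.re_sum]
    simp_rw [Complex.re_sum]
  have h3 := sum_sum_even (fun h => (corr A u h).re) (fun h => by rw [corr_neg]; simp) H
  have h0 : (corr A u 0).re = ∑ x ∈ A, ‖u x‖ ^ 2 := by
    have : sh A 0 = A := by ext x; simp [mem_sh]
    unfold corr
    rw [this, Complex.re_sum]
    refine Finset.sum_congr rfl fun x _ => ?_
    rw [add_zero, Complex.mul_conj']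
    norm_cast
  have h4 : ∑ h ∈ range H, ((H : ℝ) - h) * (corr A u h).re = H * (corr A u 0).re +
      ∑ h ∈ Ico (1 : ℤ) H, ((H : ℝ) - h) * (corr A u h).re := by
    rcases H with _ | H
    · simp
    · rw [Finset.sum_range_succ']
      rw [add_comm]
      congr 1
      · simp
      · refine Finset.sum_nbij' (fun j : ℕ => (j : ℤ) + 1) (fun h => (h - 1).toNat) ?_ ?_ ?_ ?_ ?_
        · intro j hj; have := mem_range.1 hj; rw [mem_Ico]; push_cast; omega
        · intro h hh; have := mem_Ico.1 hh; rw [mem_range]; push_cast at this; omega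
        · intro j _; simp
        · intro h hh; have := mem_Ico.1 hh; omega
        · intro j _; push_cast; rfl
  have hcard : (#M : ℝ) ≤ 2 * Z := by
    have : #M ≤ 2 * Z := by rw [hM, Int.card_Ioc]; omega
    exact_mod_cast this
  have hns : (H : ℝ) ^ 2 * ‖∑ x ∈ A, u x‖ ^ 2 = ‖(H : ℂ) * ∑ x ∈ A, u x‖ ^ 2 := by
    rw [norm_mul, mul_pow]; simp
  have hpos : (0 : ℝ) ≤ ∑ m ∈ M, ‖∑ j ∈ range H, v (m - j)‖ ^ 2 :=
    Finset.sum_nonneg fun _ _ => by positivity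
  calc (H : ℝ) ^ 2 * ‖∑ x ∈ A, u x‖ ^ 2
      ≤ #M * ∑ m ∈ M, ‖∑ j ∈ range H, v (m - j)‖ ^ 2 := by
        rw [hns, h1]; exact norm_sum_sq_le _ _
    _ ≤ 2 * Z * ∑ m ∈ M, ‖∑ j ∈ range H, v (m - j)‖ ^ 2 := by gcongr
    _ = _ := by rw [h2, h3, h4, h0]; ring

/-! ### Kusmin–Landau and the second-derivative test -/

/-- Kusmin–Landau: if the increments `δ` of the phase increase, keep one sign and stay at distance
at least `θ` from the integers, the exponential sum is `O(1/θ)`.  The proof is the usual partial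
summation with `z_j = (z_{j+1} - z_j) / (e(δ_j) - 1)`. -/
lemma kusmin_landau (G : ℕ → ℝ) (δ : ℕ → ℝ) (m : ℕ) (θ : ℝ) (hθ : 0 < θ)
    (hδ : ∀ j, δ j = G (j + 1) - G j)
    (habs : ∀ j ≤ m, |δ j| ≤ 3 / 4) (hmono : ∀ j < m, δ j ≤ δ (j + 1))
    (hs : (∀ j ≤ m, θ ≤ δ j) ∨ (∀ j ≤ m, δ j ≤ -θ)) :
    ‖∑ j ∈ range (m + 1), e (G j)‖ ≤ 9 / θ := by
  set c : ℕ → ℂ := fun j => 1 / (e (δ j) - 1) with hc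
  have habsθ : ∀ j ≤ m, θ ≤ |δ j| := by
    intro j hj
    rcases hs with h | h
    · exact (h j hj).trans (le_abs_self _)
    · have := h j hj
      exact (by linarith : θ ≤ -δ j).trans (neg_le_abs _)
  have hden : ∀ j ≤ m, |δ j| ≤ ‖e (δ j) - 1‖ := fun j hj => abs_le_norm_e_sub_one (habs j hj)
  have hne : ∀ j ≤ m, e (δ j) - 1 ≠ 0 := by
    intro j hj h
    have := hden j hj
    rw [h, norm_zero] at this
    linarith [habsθ j hj]
  have hz : ∀ j ≤ m, e (G j) = c j * (e (G (j + 1)) - e (G j)) := by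
    intro j hj
    have : e (G (j + 1)) = e (G j) * e (δ j) := by rw [← e_add, hδ]; congr 1; ring
    rw [this, hc]
    field_simp [hne j hj]
  have hcn : ∀ j ≤ m, ‖c j‖ ≤ 1 / θ := by
    intro j hj
    simp only [hc, norm_div, norm_one]
    exact one_div_le_one_div_of_le hθ ((habsθ j hj).trans (hden j hj))
  have hprod : ∀ j < m, 0 < δ j * δ (j + 1) := by
    intro j hj
    rcases hs with h | h
    · have h1 := h j hj.le; have h2 := h (j + 1) hj
      exact mul_pos (by linarith) (by linarith)
    · have h1 := h j hj.le; have h2 := h (j + 1) hj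
      exact mul_pos_of_neg_of_neg (by linarith) (by linarith)
  have hcd : ∀ j < m, ‖c j - c (j + 1)‖ ≤ 2 * Real.pi * (1 / δ j - 1 / δ (j + 1)) := by
    intro j hj
    have e1 := hne j hj.le; have e2 := hne (j + 1) hj
    have h1 : c j - c (j + 1) =
        (e (δ (j + 1)) - e (δ j)) / ((e (δ j) - 1) * (e (δ (j + 1)) - 1)) := by
      simp only [hc]; field_simp; ring
    have hp := hprod j hj
    have hne1 : δ j ≠ 0 := left_ne_zero_of_mul hp.ne'
    have hne2 : δ (j + 1) ≠ 0 := right_ne_zero_of_mul hp.ne'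
    have h2 : 1 / δ j - 1 / δ (j + 1) = (δ (j + 1) - δ j) / (δ j * δ (j + 1)) := by
      field_simp
    rw [h1, h2, norm_div, ← mul_div_assoc, norm_mul]
    have h3 := norm_e_sub_e (δ (j + 1)) (δ j)
    rw [abs_of_nonneg (by linarith [hmono j hj])] at h3
    have h4 : δ j * δ (j + 1) ≤ ‖e (δ j) - 1‖ * ‖e (δ (j + 1)) - 1‖ := by
      calc δ j * δ (j + 1) = |δ j| * |δ (j + 1)| := by rw [← abs_mul, abs_of_pos hp]
        _ ≤ _ := mul_le_mul (hden j hj.le) (hden _ hj) (abs_nonneg _) (norm_nonneg _)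
    exact div_le_div₀ ((norm_nonneg _).trans h3) h3 hp h4
  have key : ∀ k ≤ m, ‖∑ j ∈ range (k + 1), e (G j) - c k * e (G (k + 1)) + c 0 * e (G 0)‖ ≤
      2 * Real.pi * (1 / δ 0 - 1 / δ k) := by
    intro k
    induction k with
    | zero =>
      intro _
      have h0 := hz 0 (Nat.zero_le _)
      rw [mul_sub] at h0
      simp only [zero_add, Finset.sum_range_one, sub_self, mul_zero] at h0 ⊢
      rw [norm_le_zero_iff]
      linear_combination h0
    | succ k ih =>
      intro hk
      have ih := ih (by omega)
      have h0 := hz (k + 1) hk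
      rw [mul_sub] at h0
      have heq : ∑ j ∈ range (k + 1 + 1), e (G j) - c (k + 1) * e (G (k + 1 + 1)) + c 0 * e (G 0) =
          (∑ j ∈ range (k + 1), e (G j) - c k * e (G (k + 1)) + c 0 * e (G 0)) +
          (c k - c (k + 1)) * e (G (k + 1)) := by
        rw [Finset.sum_range_succ]; linear_combination h0
      rw [heq]
      refine (norm_add_le _ _).trans ?_
      rw [norm_mul, norm_e, mul_one]
      have := hcd k (by omega)
      linarith
  have hk := key m le_rfl
  have hfin : 1 / δ 0 - 1 / δ m ≤ 1 / θ := by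
    rcases hs with h | h
    · have h1 := h 0 (Nat.zero_le _); have h2 := h m le_rfl
      have h3 : 1 / δ 0 ≤ 1 / θ := one_div_le_one_div_of_le hθ h1
      have h4 : 0 < 1 / δ m := by apply one_div_pos.2; linarith
      linarith
    · have h1 := h 0 (Nat.zero_le _); have h2 := h m le_rfl
      have h3 : 1 / (-δ m) ≤ 1 / θ := one_div_le_one_div_of_le hθ (by linarith)
      have h4 : 1 / δ 0 < 0 := by apply one_div_neg.2; linarith
      rw [one_div_neg_eq_neg_one_div] at h3
      linarith
  have hdecomp : ∑ j ∈ range (m + 1), e (G j) =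
      (∑ j ∈ range (m + 1), e (G j) - c m * e (G (m + 1)) + c 0 * e (G 0)) +
        (c m * e (G (m + 1)) - c 0 * e (G 0)) := by ring
  rw [hdecomp]
  refine (norm_add_le _ _).trans ?_
  have h5 : ‖c m * e (G (m + 1)) - c 0 * e (G 0)‖ ≤ 1 / θ + 1 / θ := by
    refine (norm_sub_le _ _).trans ?_
    rw [norm_mul, norm_mul, norm_e, norm_e, mul_one, mul_one]
    exact add_le_add (hcn m le_rfl) (hcn 0 (Nat.zero_le _))
  have hpi := Real.pi_lt_d2
  have h6 : 2 * Real.pi * (1 / δ 0 - 1 / δ m) ≤ 2 * Real.pi * (1 / θ) := by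
    have := Real.pi_pos; gcongr
  have h7 : 0 < 1 / θ := by positivity
  have h8 : 9 / θ = 9 * (1 / θ) := by ring
  rw [h8]
  nlinarith

lemma exists_threshold (P : ℕ → Prop) (n : ℕ) (hP : ∀ i j, i ≤ j → j < n → P j → P i) :
    ∃ k ≤ n, ∀ j < n, (P j ↔ j < k) := by
  induction n with
  | zero => exact ⟨0, le_rfl, fun j hj => by omega⟩
  | succ n ih =>
    obtain ⟨k, hk, h⟩ := ih fun i j hij hj => hP i j hij (by omega)
    by_cases hn : P n
    · exact ⟨n + 1, le_rfl, fun j hj => ⟨fun _ => hj, fun _ => hP j n (by omega) (by omega) hn⟩⟩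
    · refine ⟨k, by omega, fun j hj => ?_⟩
      rcases Nat.lt_succ_iff_lt_or_eq.1 hj with h1 | h1
      · exact h j h1
      · subst h1; exact ⟨fun h => absurd h hn, fun h => by omega⟩

/-- The second-derivative test, for a phase whose increments have total variation at most `1/2`. -/
lemma second_derivative_test (G : ℕ → ℝ) (n : ℕ) (lam : ℝ) (hl : 0 < lam) (hl1 : lam ≤ 1)
    (h2 : ∀ j < n, lam ≤ (G (j + 2) - G (j + 1)) - (G (j + 1) - G j))
    (hr : (G (n + 1) - G n) - (G 1 - G 0) ≤ 1 / 2) :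
    ‖∑ j ∈ range n, e (G j)‖ ≤ 21 / √lam := by
  -- Subtracting `ℓ j` from the phase changes nothing and puts the increments in `[-3/4, 3/4]`.
  set l : ℤ := ⌊(G 1 - G 0) + 3 / 4⌋ with hl'
  set G' : ℕ → ℝ := fun j => G j - l * j with hG'
  have hsum : ∑ j ∈ range n, e (G j) = ∑ j ∈ range n, e (G' j) := by
    refine Finset.sum_congr rfl fun j _ => ?_
    have : G j = G' j + ((l * j : ℤ) : ℝ) := by simp [hG']
    rw [this, e_add, e_int, mul_one]
  rw [hsum]
  set δ : ℕ → ℝ := fun j => G' (j + 1) - G' j with hδ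
  have hδG : ∀ j, δ j = (G (j + 1) - G j) - l := by
    intro j; simp only [hδ, hG']; push_cast; ring
  have hinc : ∀ j < n, lam ≤ δ (j + 1) - δ j := by
    intro j hj; rw [hδG, hδG]; have := h2 j hj
    have h3 : j + 1 + 1 = j + 2 := rfl
    rw [h3]; linarith
  have hinc' : ∀ i j, i ≤ j → j ≤ n → ((j : ℝ) - i) * lam ≤ δ j - δ i := by
    intro i j hij hj
    induction j, hij using Nat.le_induction with
    | base => simp
    | succ j hij ih =>
      have h3 := ih (by omega)
      have h4 := hinc j (by omega)
      push_cast; linarith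
  have hmono : ∀ i j, i ≤ j → j ≤ n → δ i ≤ δ j := by
    intro i j hij hj
    have h3 := hinc' i j hij hj
    have : (0 : ℝ) ≤ ((j : ℝ) - i) * lam := by
      have : (i : ℝ) ≤ j := by exact_mod_cast hij
      apply mul_nonneg <;> linarith
    linarith
  have hd0 : -(3 / 4) ≤ δ 0 ∧ δ 0 ≤ 1 / 4 := by
    rw [hδG]
    have h3 := Int.floor_le ((G 1 - G 0) + 3 / 4)
    have h4 := Int.lt_floor_add_one ((G 1 - G 0) + 3 / 4)
    rw [← hl'] at h3 h4
    simp only [zero_add]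
    constructor <;> linarith
  have hdn : δ n ≤ 3 / 4 := by
    have : δ n - δ 0 ≤ 1 / 2 := by rw [hδG, hδG]; simp only [zero_add]; linarith
    linarith
  have habs : ∀ j ≤ n, |δ j| ≤ 3 / 4 := by
    intro j hj
    rw [abs_le]
    exact ⟨hd0.1.trans (hmono 0 j (Nat.zero_le _) hj), (hmono j n hj le_rfl).trans hdn⟩
  set θ := √lam with hθ
  have hθ0 : 0 < θ := Real.sqrt_pos.2 hl
  have hθ2 : θ ^ 2 = lam := Real.sq_sqrt hl.le
  have hθ1 : θ ≤ 1 := by nlinarith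
  obtain ⟨n1, hn1, ht1⟩ := exists_threshold (fun j => δ j ≤ -θ) n
    fun i j hij hj h => (hmono i j hij hj.le).trans h
  obtain ⟨n2, hn2, ht2⟩ := exists_threshold (fun j => δ j < θ) n
    fun i j hij hj h => (hmono i j hij hj.le).trans_lt h
  have h12 : n1 ≤ n2 := by
    by_contra hlt
    push Not at hlt
    have h3 := (ht1 n2 (by omega)).2 hlt
    have h4 := (ht2 n2 (by omega)).1 (by linarith)
    omega
  have hseg1 : ‖∑ j ∈ range n1, e (G' j)‖ ≤ 9 / θ := by
    rcases n1 with _ | k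
    · simp; positivity
    · refine kusmin_landau G' δ k θ hθ0 (fun _ => rfl) (fun j hj => habs j (by omega))
        (fun j hj => hmono _ _ (by omega) (by omega)) (Or.inr fun j hj => ?_)
      exact (ht1 j (by omega)).2 (by omega)
  have hseg3 : ‖∑ j ∈ Ico n2 n, e (G' j)‖ ≤ 9 / θ := by
    rw [Finset.sum_Ico_eq_sum_range]
    obtain ⟨k, hk⟩ : ∃ k, k = n - n2 := ⟨_, rfl⟩
    rw [← hk]
    rcases k with _ | k
    · simp; positivity
    · refine kusmin_landau (fun j => G' (n2 + j)) (fun j => δ (n2 + j)) k θ hθ0 (fun _ => rfl)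
        (fun j hj => habs _ (by omega))
        (fun j hj => hmono _ _ (by omega) (by omega)) (Or.inl fun j hj => ?_)
      by_contra hlt
      have := (ht2 (n2 + j) (by omega)).1 (by linarith)
      omega
  have hseg2 : ‖∑ j ∈ Ico n1 n2, e (G' j)‖ ≤ 2 / θ + 1 := by
    have hb : ‖∑ j ∈ Ico n1 n2, e (G' j)‖ ≤ ((n2 - n1 : ℕ) : ℝ) := by
      refine (norm_sum_le _ _).trans ?_
      simp [norm_e]
    refine hb.trans ?_
    rcases Nat.eq_or_lt_of_le h12 with h | h
    · rw [h]; simp; positivity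
    · have h3 := (ht2 (n2 - 1) (by omega)).2 (by omega)
      have h4 : -θ < δ n1 := by
        by_contra hle
        have := (ht1 n1 (by omega)).1 (by linarith)
        omega
      have h5 := hinc' n1 (n2 - 1) (by omega) (by omega)
      have h6 : ((n2 - 1 : ℕ) : ℝ) = n2 - 1 := by
        rw [Nat.cast_sub (by omega)]; simp
      rw [h6] at h5
      rw [Nat.cast_sub h12]
      have h7 : ((n2 : ℝ) - 1 - n1) * θ ≤ 2 := by
        have : ((n2 : ℝ) - 1 - n1) * θ * θ ≤ 2 * θ := by
          rw [mul_assoc, ← sq, hθ2]; linarith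
        exact le_of_mul_le_mul_right this hθ0
      have h8 : (n2 : ℝ) - 1 - n1 ≤ 2 / θ := by rwa [le_div_iff₀ hθ0]
      linarith
  have hsplit : ∑ j ∈ range n, e (G' j) = ∑ j ∈ range n1, e (G' j) + ∑ j ∈ Ico n1 n2, e (G' j)
      + ∑ j ∈ Ico n2 n, e (G' j) := by
    rw [Finset.range_eq_Ico, Finset.range_eq_Ico, Finset.sum_Ico_consecutive _ (Nat.zero_le _) h12,
      Finset.sum_Ico_consecutive _ (Nat.zero_le _) hn2]
  rw [hsplit]
  refine (norm_add₃_le).trans ?_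
  have h1θ : 1 ≤ 1 / θ := by rw [le_div_iff₀ hθ0]; linarith
  have : 21 / θ = 9 / θ + (2 / θ + 1 / θ) + 9 / θ := by ring
  rw [this]; linarith

/-! ### Correlations of the block sum -/

/-- The exponential sum over one block `(Z, Z']`, where in practice `Z' ≤ 2 Z`. -/
noncomputable def F (Z Z' : ℕ) (a b t : ℝ) : ℂ :=
  ∑ x ∈ Ioc (Z : ℤ) Z', e (a * (x : ℝ) + b * (x : ℝ) ^ 3 + t * (x : ℝ) ^ 5)

/-- For `τ = (h, k, x)`, the number `h k y` with `y = 2 x + h + k`; three times it is the second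
difference of `x ↦ x³` with steps `h`, `k`. -/
def frN (τ : ℤ × ℤ × ℤ) : ℤ := τ.1 * τ.2.1 * (2 * τ.2.2 + τ.1 + τ.2.1)

/-- The second difference of `x ↦ x⁵` with steps `h`, `k`, for `τ = (h, k, x)`. -/
def frQ (τ : ℤ × ℤ × ℤ) : ℤ :=
  (τ.2.2 + τ.2.1 + τ.1) ^ 5 - (τ.2.2 + τ.2.1) ^ 5 - ((τ.2.2 + τ.1) ^ 5 - τ.2.2 ^ 5)

/-- `h² + k² + y²`, for `τ = (h, k, x)` and `y = 2 x + h + k`. -/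
def frT (τ : ℤ × ℤ × ℤ) : ℤ := τ.1 ^ 2 + τ.2.1 ^ 2 + (2 * τ.2.2 + τ.1 + τ.2.1) ^ 2

/-- The factorisation behind the counting arguments: once `n = h k y` is fixed, `q` records
`h² + k² + y²`. -/
lemma two_frQ (τ : ℤ × ℤ × ℤ) : 2 * frQ τ = 5 * frN τ * frT τ := by
  simp only [frQ, frN, frT]; ring

/-- The second difference of the phase `b x³ + t x⁵`. -/
noncomputable def ph (τ : ℤ × ℤ × ℤ) (b t : ℝ) : ℝ := 3 * (frN τ : ℝ) * b + (frQ τ : ℝ) * t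

/-- All `(h, k, x)` for which the four points `x, x+h, x+k, x+h+k` lie in `(Z, Z']`. -/
noncomputable def quadBox (Z Z' : ℕ) : Finset (ℤ × ℤ × ℤ) :=
  {τ ∈ Icc (-(Z : ℤ)) Z ×ˢ Icc (-(Z : ℤ)) Z ×ˢ Ioc (Z : ℤ) Z' |
    τ.2.2 ∈ sh (sh (Ioc (Z : ℤ) Z') τ.1) τ.2.1}

lemma mem_shsh {A : Finset ℤ} {h k x : ℤ} :
    x ∈ sh (sh A h) k ↔ x ∈ A ∧ x + h ∈ A ∧ x + k ∈ A ∧ x + k + h ∈ A := by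
  simp only [mem_sh]; tauto

/-- The `h`-th correlation of the block sum. -/
noncomputable def gcor (Z Z' : ℕ) (h : ℤ) (b t : ℝ) : ℂ :=
  ∑ x ∈ sh (Ioc (Z : ℤ) Z') h,
    e ((b * ((x + h : ℤ) : ℝ) ^ 3 + t * ((x + h : ℤ) : ℝ) ^ 5) - (b * (x : ℝ) ^ 3 + t * (x : ℝ) ^ 5))

/-- The sum of the squared correlations, equal to the fourth moment of `F` over `a ∈ [0,1]`. -/
noncomputable def W (Z Z' : ℕ) (b t : ℝ) : ℝ := ∑ h ∈ Icc (-(Z : ℤ)) Z, ‖gcor Z Z' h b t‖ ^ 2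

lemma W_nonneg (Z Z' : ℕ) (b t : ℝ) : 0 ≤ W Z Z' b t :=
  Finset.sum_nonneg fun _ _ => by positivity

lemma block_subset {Z Z' : ℕ} (h : Z' ≤ 2 * Z) : Ioc (Z : ℤ) Z' ⊆ Ioc (Z : ℤ) (2 * Z) :=
  Finset.Ioc_subset_Ioc_right (by exact_mod_cast h)

lemma card_block_le {Z Z' : ℕ} (h : Z' ≤ 2 * Z) {A : Finset ℤ} (hA : A ⊆ Ioc (Z : ℤ) Z') :
    (#A : ℝ) ≤ Z := by
  have h1 := Finset.card_le_card hA
  rw [Int.card_Ioc] at h1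
  have : #A ≤ Z := by omega
  exact_mod_cast this

lemma corr_block (Z Z' : ℕ) (a b t : ℝ) (h : ℤ) :
    corr (Ioc (Z : ℤ) Z') (fun x => e (a * (x : ℝ) + b * (x : ℝ) ^ 3 + t * (x : ℝ) ^ 5)) h =
      e (h * a) * gcor Z Z' h b t := by
  rw [corr_e, gcor, Finset.mul_sum]
  refine Finset.sum_congr rfl fun x _ => ?_
  rw [← e_add]; congr 1; push_cast; ring

/-- The sum over `x` belonging to fixed steps `h`, `k`. -/
noncomputable def Shk (Z Z' : ℕ) (h k : ℤ) (b t : ℝ) : ℂ :=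
  ∑ x ∈ sh (sh (Ioc (Z : ℤ) Z') h) k, e (ph (h, k, x) b t)

lemma corr_gcor (Z Z' : ℕ) (b t : ℝ) (h k : ℤ) :
    corr (sh (Ioc (Z : ℤ) Z') h) (fun x => e ((b * ((x + h : ℤ) : ℝ) ^ 3 + t * ((x + h : ℤ) : ℝ) ^ 5)
      - (b * (x : ℝ) ^ 3 + t * (x : ℝ) ^ 5))) k = Shk Z Z' h k b t := by
  rw [corr_e (sh (Ioc (Z : ℤ) Z') h) (fun x : ℤ => (b * ((x + h : ℤ) : ℝ) ^ 3 +
    t * ((x + h : ℤ) : ℝ) ^ 5) - (b * (x : ℝ) ^ 3 + t * (x : ℝ) ^ 5)), Shk]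
  refine Finset.sum_congr rfl fun x _ => ?_
  congr 1
  simp only [ph, frN, frQ]; push_cast; ring

/-- `W` is a sum over parallelograms: its phase is the second difference of `b x³ + t x⁵`. -/
lemma W_eq (Z Z' : ℕ) (hZ : Z' ≤ 2 * Z) (b t : ℝ) :
    (W Z Z' b t : ℂ) = ∑ τ ∈ quadBox Z Z', e (ph τ b t) := by
  unfold W quadBox
  rw [Complex.ofReal_sum]
  rw [Finset.sum_filter, Finset.sum_product]
  refine Finset.sum_congr rfl fun h _ => ?_
  rw [gcor, normSq_sum_eq_corr _ Z ((sh_subset _ _).trans (block_subset hZ)), Finset.sum_product]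
  refine Finset.sum_congr rfl fun k _ => ?_
  rw [corr_gcor, Shk, ← Finset.sum_filter]
  refine Finset.sum_congr ?_ fun _ _ => rfl
  ext x
  rw [mem_filter]
  constructor
  · intro hx; exact ⟨sh_subset _ _ (sh_subset _ _ hx), hx⟩
  · intro hx; exact hx.2

lemma normSq_F (Z Z' : ℕ) (hZ : Z' ≤ 2 * Z) (a b t : ℝ) :
    ((‖F Z Z' a b t‖ ^ 2 : ℝ) : ℂ) =
      ∑ h ∈ Icc (-(Z : ℤ)) Z, gcor Z Z' h b t * e (h * a) := by
  rw [F, normSq_sum_eq_corr _ Z (block_subset hZ)]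
  refine Finset.sum_congr rfl fun h _ => ?_
  rw [corr_block, mul_comm]

lemma norm_F_pow_four (Z Z' : ℕ) (hZ : Z' ≤ 2 * Z) (a b t : ℝ) :
    ‖F Z Z' a b t‖ ^ 4 = ‖∑ h ∈ Icc (-(Z : ℤ)) Z, gcor Z Z' h b t * e (h * a)‖ ^ 2 := by
  rw [← normSq_F Z Z' hZ, Complex.norm_real, Real.norm_eq_abs, sq_abs]; ring

/-- Cauchy–Schwarz over the `2 Z + 1 ≤ 3 Z` correlations. -/
lemma F_pow_four_le_W (Z Z' : ℕ) (hZ1 : 1 ≤ Z) (hZ : Z' ≤ 2 * Z) (a b t : ℝ) :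
    ‖F Z Z' a b t‖ ^ 4 ≤ 3 * Z * W Z Z' b t := by
  rw [norm_F_pow_four Z Z' hZ]
  refine (norm_sum_sq_le _ _).trans ?_
  have h1 : ∑ h ∈ Icc (-(Z : ℤ)) Z, ‖gcor Z Z' h b t * e (h * a)‖ ^ 2 = W Z Z' b t := by
    unfold W
    refine Finset.sum_congr rfl fun h _ => ?_
    rw [norm_mul, norm_e, mul_one]
  rw [h1]
  have h2 : (#(Icc (-(Z : ℤ)) Z) : ℝ) ≤ 3 * Z := by
    have : #(Icc (-(Z : ℤ)) Z) ≤ 3 * Z := by rw [Int.card_Icc]; omega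
    exact_mod_cast this
  have := W_nonneg Z Z' b t
  gcongr

lemma parseval (S : Finset ℤ) (g : ℤ → ℂ) :
    ∫ a in (0 : ℝ)..1, ‖∑ h ∈ S, g h * e (h * a)‖ ^ 2 = ∑ h ∈ S, ‖g h‖ ^ 2 := by
  have h1 : ∀ a : ℝ, ((‖∑ h ∈ S, g h * e (h * a)‖ ^ 2 : ℝ) : ℂ) =
      ∑ h ∈ S, ∑ k ∈ S, g h * (starRingEnd ℂ) (g k) * e ((h - k : ℤ) * a) := by
    intro a
    push_cast
    rw [← Complex.mul_conj', map_sum, Finset.sum_mul_sum]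
    refine Finset.sum_congr rfl fun h _ => Finset.sum_congr rfl fun k _ => ?_
    rw [map_mul, conj_e]
    have : ((h : ℝ) - k) * a = h * a + -(k * a) := by ring
    rw [this, e_add]; ring
  have h2 : ((∫ a in (0 : ℝ)..1, ‖∑ h ∈ S, g h * e (h * a)‖ ^ 2 : ℝ) : ℂ) =
      ((∑ h ∈ S, ‖g h‖ ^ 2 : ℝ) : ℂ) := by
    rw [← intervalIntegral.integral_ofReal]
    simp_rw [h1]
    rw [intervalIntegral.integral_finsetSum
      (fun i _ => Continuous.intervalIntegrable (by fun_prop) _ _)]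
    rw [Complex.ofReal_sum]
    refine Finset.sum_congr rfl fun h hh => ?_
    rw [intervalIntegral.integral_finsetSum
      (fun i _ => Continuous.intervalIntegrable (by fun_prop) _ _)]
    simp_rw [intervalIntegral.integral_const_mul]
    have h3 : ∀ k : ℤ, ∫ a in (0 : ℝ)..1, e ((h - k : ℤ) * a) = if h = k then 1 else 0 := by
      intro k
      have := integral_e_int 0 (h - k)
      rw [zero_add] at this
      rw [this]; simp [sub_eq_zero]
    simp_rw [h3]
    simp [hh, Complex.mul_conj']
  exact_mod_cast h2

lemma integral_F_pow_four (Z Z' : ℕ) (hZ : Z' ≤ 2 * Z) (b t : ℝ) :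
    ∫ a in (0 : ℝ)..1, ‖F Z Z' a b t‖ ^ 4 = W Z Z' b t := by
  simp_rw [norm_F_pow_four Z Z' hZ]
  exact parseval _ _

/-- van der Corput's inequality applied twice. -/
lemma F_pow_four_le_vdC (Z Z' : ℕ) (hZ : Z' ≤ 2 * Z) (a b t : ℝ)
    (H₁ H₂ : ℕ) (h1 : 1 ≤ H₁) (h2 : 1 ≤ H₂) (h1Z : H₁ ≤ Z) (h2Z : H₂ ≤ Z) :
    ‖F Z Z' a b t‖ ^ 4 ≤ 8 * (Z : ℝ) ^ 4 / H₁ ^ 2 + 64 * (Z : ℝ) ^ 4 / H₂ +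
      128 * (Z : ℝ) ^ 3 / (H₁ * H₂) * ∑ h ∈ Ico (1 : ℤ) H₁, ∑ k ∈ Ico (1 : ℤ) H₂,
        (((H₂ : ℝ) - k) / H₂) * (Shk Z Z' h k b t).re := by
  have hH1 : (0 : ℝ) < H₁ := by exact_mod_cast h1
  have hH2 : (0 : ℝ) < H₂ := by exact_mod_cast h2
  have hcard : ∀ A ⊆ Ioc (Z : ℤ) Z', ∀ φ : ℤ → ℝ, ∑ x ∈ A, ‖e (φ x)‖ ^ 2 ≤ (Z : ℝ) := by
    intro A hA φ
    simp only [norm_e, one_pow, Finset.sum_const, nsmul_eq_mul, mul_one]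
    exact card_block_le hZ hA
  have hA := vdC (Ioc (Z : ℤ) Z') Z (block_subset hZ)
    (fun x => e (a * (x : ℝ) + b * (x : ℝ) ^ 3 + t * (x : ℝ) ^ 5)) H₁ h1Z
  simp_rw [corr_block] at hA
  set g : ℤ → ℝ := fun h => ‖gcor Z Z' h b t‖ with hg
  have hA2 : (H₁ : ℝ) ^ 2 * ‖F Z Z' a b t‖ ^ 2 ≤
      2 * Z * (H₁ * (Z + 2 * ∑ h ∈ Ico (1 : ℤ) H₁, g h)) := by
    refine hA.trans ?_
    have e1 : ∑ h ∈ Ico (1 : ℤ) H₁, ((H₁ : ℝ) - h) * (e (h * a) * gcor Z Z' h b t).re ≤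
        ∑ h ∈ Ico (1 : ℤ) H₁, H₁ * g h := by
      refine Finset.sum_le_sum fun h hh => ?_
      have hh' := mem_Ico.1 hh
      have c1 : (1 : ℝ) ≤ h := by exact_mod_cast hh'.1
      have c2 : (h : ℝ) ≤ H₁ := by exact_mod_cast hh'.2.le
      have c3 : (e (h * a) * gcor Z Z' h b t).re ≤ g h := by
        refine (Complex.re_le_norm _).trans ?_
        rw [norm_mul, norm_e, one_mul]
      have c4 : 0 ≤ g h := norm_nonneg _
      nlinarith
    rw [← Finset.mul_sum] at e1
    have e2 := hcard _ subset_rfl (fun x : ℤ => a * (x : ℝ) + b * (x : ℝ) ^ 3 + t * (x : ℝ) ^ 5)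
    have : (0 : ℝ) ≤ Z := by positivity
    gcongr
    nlinarith
  have hA3 : H₁ * ‖F Z Z' a b t‖ ^ 2 ≤ 2 * Z * (Z + 2 * ∑ h ∈ Ico (1 : ℤ) H₁, g h) := by
    have : (H₁ : ℝ) * (H₁ * ‖F Z Z' a b t‖ ^ 2) ≤
        H₁ * (2 * Z * (Z + 2 * ∑ h ∈ Ico (1 : ℤ) H₁, g h)) := by linarith
    exact le_of_mul_le_mul_left this hH1
  have hB : ∀ h ∈ Ico (1 : ℤ) H₁, H₂ * g h ^ 2 ≤ 2 * Z * (Z + 2 * ∑ k ∈ Ico (1 : ℤ) H₂,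
        (((H₂ : ℝ) - k) / H₂) * (Shk Z Z' h k b t).re) := by
    intro h _
    have hB := vdC (sh (Ioc (Z : ℤ) Z') h) Z ((sh_subset _ _).trans (block_subset hZ))
      (fun x => e ((b * ((x + h : ℤ) : ℝ) ^ 3 + t * ((x + h : ℤ) : ℝ) ^ 5)
      - (b * (x : ℝ) ^ 3 + t * (x : ℝ) ^ 5))) H₂ h2Z
    simp_rw [corr_gcor] at hB
    have e2 := hcard _ (sh_subset (Ioc (Z : ℤ) Z') h)
      (fun x : ℤ => (b * ((x + h : ℤ) : ℝ) ^ 3 + t * ((x + h : ℤ) : ℝ) ^ 5)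
      - (b * (x : ℝ) ^ 3 + t * (x : ℝ) ^ 5))
    have e3 : ∑ k ∈ Ico (1 : ℤ) H₂, ((H₂ : ℝ) - k) * (Shk Z Z' h k b t).re =
        H₂ * ∑ k ∈ Ico (1 : ℤ) H₂, (((H₂ : ℝ) - k) / H₂) * (Shk Z Z' h k b t).re := by
      rw [Finset.mul_sum]
      refine Finset.sum_congr rfl fun k _ => ?_
      field_simp
    rw [e3] at hB
    change (H₂ : ℝ) ^ 2 * g h ^ 2 ≤ _ at hB
    have : (0 : ℝ) ≤ Z := by positivity
    set Sg := ∑ k ∈ Ico (1 : ℤ) H₂, (((H₂ : ℝ) - k) / H₂) * (Shk Z Z' h k b t).re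
    have e4 : (H₂ : ℝ) * (H₂ * g h ^ 2) ≤ H₂ * (2 * Z * (Z + 2 * Sg)) := by
      calc (H₂ : ℝ) * (H₂ * g h ^ 2) = (H₂ : ℝ) ^ 2 * g h ^ 2 := by ring
        _ ≤ _ := hB
        _ ≤ 2 * Z * (H₂ * (Z : ℝ) + 2 * (H₂ * Sg)) :=
          mul_le_mul_of_nonneg_left (by gcongr) (by positivity)
        _ = _ := by ring
    exact le_of_mul_le_mul_left e4 hH2
  have hsq : (∑ h ∈ Ico (1 : ℤ) H₁, g h) ^ 2 ≤ H₁ * ∑ h ∈ Ico (1 : ℤ) H₁, g h ^ 2 := by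
    refine sq_sum_le_card_mul_sum_sq.trans ?_
    have : (#(Ico (1 : ℤ) H₁) : ℝ) ≤ H₁ := by
      have : #(Ico (1 : ℤ) H₁) ≤ H₁ := by rw [Int.card_Ico]; omega
      exact_mod_cast this
    gcongr
  have hB' := Finset.sum_le_sum hB
  rw [← Finset.mul_sum, ← Finset.mul_sum, Finset.sum_add_distrib, ← Finset.mul_sum] at hB'
  set Kd := ∑ h ∈ Ico (1 : ℤ) H₁, ∑ k ∈ Ico (1 : ℤ) H₂,
        (((H₂ : ℝ) - k) / H₂) * (Shk Z Z' h k b t).re with hKd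
  have hB2 : H₂ * ∑ h ∈ Ico (1 : ℤ) H₁, g h ^ 2 ≤ 2 * Z * (H₁ * Z + 2 * Kd) := by
    refine hB'.trans ?_
    have : ∑ h ∈ Ico (1 : ℤ) H₁, (Z : ℝ) ≤ H₁ * Z := by
      rw [Finset.sum_const, nsmul_eq_mul]
      have : (#(Ico (1 : ℤ) H₁) : ℝ) ≤ H₁ := by
        have : #(Ico (1 : ℤ) H₁) ≤ H₁ := by rw [Int.card_Ico]; omega
        exact_mod_cast this
      gcongr
    gcongr
  set lin := ∑ h ∈ Ico (1 : ℤ) H₁, g h with hl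
  set sqs := ∑ h ∈ Ico (1 : ℤ) H₁, g h ^ 2 with hsqs
  have hsqs' : sqs ≤ 2 * Z * (H₁ * Z + 2 * Kd) / H₂ := by
    rw [le_div_iff₀ hH2]; linarith
  have hl0 : 0 ≤ lin := Finset.sum_nonneg fun _ _ => norm_nonneg _
  have hF2 : ‖F Z Z' a b t‖ ^ 2 ≤ 2 * Z * (Z + 2 * lin) / H₁ := by
    rw [le_div_iff₀ hH1]; linarith
  calc ‖F Z Z' a b t‖ ^ 4 = (‖F Z Z' a b t‖ ^ 2) ^ 2 := by ring
    _ ≤ (2 * Z * (Z + 2 * lin) / H₁) ^ 2 := by gcongr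
    _ = 4 * Z ^ 2 / H₁ ^ 2 * (Z + 2 * lin) ^ 2 := by field_simp; ring
    _ ≤ 4 * Z ^ 2 / H₁ ^ 2 * (2 * Z ^ 2 + 8 * (H₁ * (2 * Z * (H₁ * Z + 2 * Kd) / H₂))) := by
        gcongr
        have c1 : lin ^ 2 ≤ H₁ * (2 * Z * (H₁ * Z + 2 * Kd) / H₂) := hsq.trans (by gcongr)
        nlinarith [sq_nonneg ((Z : ℝ) - 2 * lin)]
    _ = _ := by field_simp; ring

/-! ### The pointwise bound for small `t` -/

lemma shsh_block (Z Z' : ℕ) (h k : ℤ) (hh : 1 ≤ h) (hk : 1 ≤ k) :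
    sh (sh (Ioc (Z : ℤ) Z') h) k = Ioc (Z : ℤ) (Z' - h - k) := by
  ext x
  simp only [mem_shsh, mem_Ioc]
  omega

/-- The second-derivative test for the sum over `x`. The phase `ph` is a cubic polynomial in `x`
whose `b`-part is linear, so its second differences come from `t` alone and have size
`h k t Z`. -/
lemma Shk_bound_pos (Z Z' : ℕ) (hZ1 : 1 ≤ Z) (hZ : Z' ≤ 2 * Z) (h k : ℤ) (hh : 1 ≤ h) (hk : 1 ≤ k)
    (b t : ℝ) (ht : 0 < t) (hsm : (h : ℝ) * k * t * Z ^ 2 ≤ 1 / 480) :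
    ‖Shk Z Z' h k b t‖ ≤ 21 / √(120 * (h * k * t * Z)) := by
  set n : ℕ := (Z' - h - k - Z : ℤ).toNat with hn
  set G : ℕ → ℝ := fun j => ph (h, k, (Z : ℤ) + 1 + j) b t with hG
  have hZr : (1 : ℝ) ≤ Z := by exact_mod_cast hZ1
  have hhr : (1 : ℝ) ≤ h := by exact_mod_cast hh
  have hkr : (1 : ℝ) ≤ k := by exact_mod_cast hk
  have hP : 0 < (h : ℝ) * k * t := by positivity
  have hsum : Shk Z Z' h k b t = ∑ j ∈ range n, e (G j) := by
    unfold Shk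
    rw [shsh_block Z Z' h k hh hk]
    refine Finset.sum_nbij' (fun x => (x - Z - 1).toNat) (fun j => (Z : ℤ) + 1 + j) ?_ ?_ ?_ ?_ ?_
    · intro x hx; rw [mem_Ioc] at hx; rw [mem_range]; omega
    · intro j hj; rw [mem_range] at hj; rw [mem_Ioc]; omega
    · intro x hx; rw [mem_Ioc] at hx; omega
    · intro j hj; omega
    · intro x hx; rw [mem_Ioc] at hx
      simp only [hG]
      congr 4; omega
  rw [hsum]
  have hsd : ∀ j : ℕ, (G (j + 2) - G (j + 1)) - (G (j + 1) - G j) =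
      60 * (h * k * t) * (2 * (Z + 1 + j) + h + k + 2) := by
    intro j
    simp only [hG, ph, frN, frQ]; push_cast; ring
  refine second_derivative_test G n _ (by positivity) ?_ ?_ ?_
  · have : (h : ℝ) * k * t * Z ≤ h * k * t * Z ^ 2 := by
      gcongr; nlinarith
    linarith
  · intro j _
    rw [hsd]
    have : (0 : ℝ) ≤ j := by positivity
    nlinarith
  · have htel : ∀ m : ℕ, m ≤ n → (G (m + 1) - G m) - (G 1 - G 0) ≤ m * (240 * (h * k * t) * Z) := by
      intro m
      induction m with
      | zero => intro _; simp
      | succ m ih =>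
        intro hm
        have h3 := ih (by omega)
        have h4 := hsd m
        have h5 : (2 * ((Z : ℝ) + 1 + m) + h + k + 2) ≤ 4 * Z := by
          have : 2 * ((Z : ℤ) + 1 + m) + h + k + 2 ≤ 4 * Z := by omega
          exact_mod_cast this
        have h6 : 60 * ((h : ℝ) * k * t) * (2 * (Z + 1 + m) + h + k + 2) ≤
            240 * (h * k * t) * Z := by nlinarith
        have h7 : m + 1 + 1 = m + 2 := rfl
        rw [h7]; push_cast
        linarith
    refine (htel n le_rfl).trans ?_
    have hnZ : (n : ℝ) ≤ Z := by
      have : n ≤ Z := by omega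
      exact_mod_cast this
    have : (n : ℝ) * (240 * (h * k * t) * Z) ≤ Z * (240 * (h * k * t) * Z) := by gcongr
    nlinarith

lemma Shk_bound (Z Z' : ℕ) (hZ1 : 1 ≤ Z) (hZ : Z' ≤ 2 * Z) (h k : ℤ) (hh : 1 ≤ h) (hk : 1 ≤ k)
    (b t : ℝ) (ht : t ≠ 0) (hsm : (h : ℝ) * k * |t| * Z ^ 2 ≤ 1 / 480) :
    ‖Shk Z Z' h k b t‖ ≤ 21 / √(120 * (h * k * |t| * Z)) := by
  rcases lt_or_gt_of_ne ht with h0 | h0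
  · have h1 : Shk Z Z' h k b t = (starRingEnd ℂ) (Shk Z Z' h k (-b) (-t)) := by
      unfold Shk
      rw [map_sum]
      refine Finset.sum_congr rfl fun x _ => ?_
      rw [conj_e]; congr 1; simp only [ph]; ring
    rw [h1, Complex.norm_conj]
    rw [abs_of_neg h0] at hsm ⊢
    exact Shk_bound_pos Z Z' hZ1 hZ h k hh hk _ _ (by linarith) hsm
  · rw [abs_of_pos h0] at hsm ⊢
    exact Shk_bound_pos Z Z' hZ1 hZ h k hh hk _ _ h0 hsm

lemma sum_inv_sqrt_le (H : ℕ) : ∑ h ∈ Ico (1 : ℤ) H, 1 / √(h : ℝ) ≤ 2 * √(H : ℝ) := by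
  have key : ∀ m : ℕ, ∑ h ∈ Ico (1 : ℤ) ((m + 1 : ℕ) : ℤ), 1 / √(h : ℝ) ≤ 2 * √(m : ℝ) := by
    intro m
    induction m with
    | zero => simp
    | succ m ih =>
      have h1 : Ico (1 : ℤ) ((m + 1 + 1 : ℕ) : ℤ) =
          insert ((m + 1 : ℕ) : ℤ) (Ico (1 : ℤ) ((m + 1 : ℕ) : ℤ)) := by
        ext x; simp only [mem_Ico, mem_insert]; push_cast; omega
      rw [h1, Finset.sum_insert (by simp)]
      refine (add_le_add_right ih _).trans ?_
      push_cast
      have ht : 0 < √((m : ℝ) + 1) := Real.sqrt_pos.2 (by positivity)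
      have hs2 : √(m : ℝ) ^ 2 = m := Real.sq_sqrt (by positivity)
      have ht2 : √((m : ℝ) + 1) ^ 2 = m + 1 := Real.sq_sqrt (by positivity)
      have h2 : 1 / √((m : ℝ) + 1) ≤ 2 * √((m : ℝ) + 1) - 2 * √(m : ℝ) := by
        rw [div_le_iff₀ ht]
        nlinarith [sq_nonneg (√((m : ℝ) + 1) - √(m : ℝ))]
      linarith
  rcases H with _ | m
  · simp
  · refine (key m).trans ?_
    gcongr
    simp

/-- The pointwise bound `|F|⁴ ≪ Z^{3/2} |t|^{-1/2} + Z^{7/2}`, with `Z = p⁶`, from two van der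
Corput steps followed by the second-derivative test. -/
lemma F_pow_four_le_small_t (Z Z' : ℕ) (hZ1 : 1000 ≤ Z) (hZ : Z' ≤ 2 * Z) (p : ℝ) (hp : 0 < p)
    (hpZ : p ^ 6 = Z) (a b t : ℝ) (ht : t ≠ 0) (htp : |t| ≤ 4 / p ^ 20) :
    ‖F Z Z' a b t‖ ^ 4 ≤ 100000 * (p ^ 9 / √|t| + p ^ 21) := by
  set r := √|t| with hr
  have hr0 : 0 < r := Real.sqrt_pos.2 (abs_pos.2 ht)
  have hr2 : r ^ 2 = |t| := Real.sq_sqrt (abs_nonneg _)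
  have hZr : (1000 : ℝ) ≤ Z := by exact_mod_cast hZ1
  have hp1 : 1 ≤ p := by
    by_contra hlt
    have : p ^ 6 ≤ 1 := pow_le_one₀ hp.le (by linarith)
    linarith
  have hrp : r * p ^ 10 ≤ 2 := by
    have : (r * p ^ 10) ^ 2 ≤ 2 ^ 2 := by
      rw [mul_pow, hr2]
      rw [le_div_iff₀ (by positivity)] at htp
      calc |t| * (p ^ 10) ^ 2 = |t| * p ^ 20 := by ring
        _ ≤ _ := by linarith
    exact le_of_sq_le_sq this (by norm_num)
  have hp4 : 100 ≤ p ^ 4 := by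
    by_contra hlt
    push Not at hlt
    have h1 : (p ^ 4) ^ 3 < 100 ^ 3 := by gcongr
    have h2 : (p ^ 6) ^ 2 ≥ 1000 ^ 2 := by rw [hpZ]; gcongr
    nlinarith
  have hrZ : 22 * r * Z ≤ 1 := by
    rw [← hpZ]
    have : r * p ^ 6 * p ^ 4 ≤ 2 := by calc r * p ^ 6 * p ^ 4 = r * p ^ 10 := by ring
                                        _ ≤ 2 := hrp
    have h0 : 0 < r * p ^ 6 := by positivity
    nlinarith
  have hrZ0 : 0 < 22 * r * Z := by positivity
  -- both step lengths are as large as the smallness condition `h k |t| Z² ≤ 1/480` permits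
  set μ : ℝ := min Z (1 / (22 * r * Z)) with hμ
  have hμ1 : 1 ≤ μ := le_min (by linarith) (by rw [le_div_iff₀ hrZ0]; linarith)
  set H : ℕ := ⌊μ⌋₊ with hH
  have hH1 : 1 ≤ H := Nat.le_floor (by simpa using hμ1)
  have hHμ : (H : ℝ) ≤ μ := Nat.floor_le (by linarith)
  have hμH : μ ≤ 2 * H := by
    have h1 := Nat.lt_floor_add_one μ
    rw [← hH] at h1
    have : (1 : ℝ) ≤ H := by exact_mod_cast hH1
    linarith
  have hHZ : H ≤ Z := by
    have : (H : ℝ) ≤ Z := hHμ.trans (min_le_left _ _)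
    exact_mod_cast this
  have hHr : (H : ℝ) * (22 * r * Z) ≤ 1 := by
    have := hHμ.trans (min_le_right _ _)
    rwa [le_div_iff₀ hrZ0] at this
  have hH0 : (0 : ℝ) < H := by exact_mod_cast hH1
  have hinv : 1 / (H : ℝ) ≤ 2 * (1 / Z + 22 * r * Z) := by
    have h1 : 1 / μ ≤ 1 / Z + 22 * r * Z := by
      rcases min_choice (Z : ℝ) (1 / (22 * r * Z)) with h | h
      · rw [hμ, h]; linarith
      · rw [hμ, h, one_div_one_div]; have : (0 : ℝ) < 1 / Z := by positivity
        linarith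
    have h2 : 1 / (H : ℝ) ≤ 2 * (1 / μ) := by
      rw [mul_one_div, div_le_div_iff₀ hH0 (by linarith)]; linarith
    linarith
  have hvdc := F_pow_four_le_vdC Z Z' hZ a b t H H hH1 hH1 hHZ hHZ
  have hK : ∑ h ∈ Ico (1 : ℤ) H, ∑ k ∈ Ico (1 : ℤ) H,
      (((H : ℝ) - k) / H) * (Shk Z Z' h k b t).re ≤ 12 * H / (r * p ^ 3) := by
    have hterm : ∀ h ∈ Ico (1 : ℤ) H, ∀ k ∈ Ico (1 : ℤ) H,
        (((H : ℝ) - k) / H) * (Shk Z Z' h k b t).re ≤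
          (1 / √(h : ℝ)) * (1 / √(k : ℝ)) * (3 / (r * p ^ 3)) := by
      intro h hh k hk
      rw [mem_Ico] at hh hk
      have hhr : (1 : ℝ) ≤ h := by exact_mod_cast hh.1
      have hkr : (1 : ℝ) ≤ k := by exact_mod_cast hk.1
      have hhH : (h : ℝ) ≤ H := by exact_mod_cast hh.2.le
      have hkH : (k : ℝ) ≤ H := by exact_mod_cast hk.2.le
      have hw0 : 0 ≤ ((H : ℝ) - k) / H := div_nonneg (by linarith) hH0.le
      have hw1 : ((H : ℝ) - k) / H ≤ 1 := by rw [div_le_one hH0]; linarith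
      have hS := Shk_bound Z Z' (by omega) hZ h k hh.1 hk.1 b t ht (by
        have h1 : (h : ℝ) * k ≤ H * H := by gcongr
        have h2 : (H * (22 * r * Z)) ^ 2 ≤ (1 : ℝ) := pow_le_one₀ (by positivity) hHr
        have h3 : (h : ℝ) * k * |t| * Z ^ 2 ≤ H * H * |t| * Z ^ 2 := by gcongr
        rw [← hr2] at h3 ⊢
        nlinarith)
      have hsq : 10 * (√(h : ℝ) * √(k : ℝ) * (r * p ^ 3)) ≤ √(120 * (h * k * |t| * Z)) := by
        apply Real.le_sqrt_of_sq_le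
        have h1 : √(h : ℝ) ^ 2 = h := Real.sq_sqrt (by linarith)
        have h2 : √(k : ℝ) ^ 2 = k := Real.sq_sqrt (by linarith)
        calc (10 * (√(h : ℝ) * √(k : ℝ) * (r * p ^ 3))) ^ 2
            = 100 * (√(h : ℝ) ^ 2 * √(k : ℝ) ^ 2 * r ^ 2 * p ^ 6) := by ring
          _ = 100 * (h * k * |t| * Z) := by rw [h1, h2, hr2, hpZ]
          _ ≤ _ := by
            have : 0 ≤ (h : ℝ) * k * |t| * Z := by positivity
            linarith
      have hsh : 0 < √(h : ℝ) := Real.sqrt_pos.2 (by linarith)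
      have hsk : 0 < √(k : ℝ) := Real.sqrt_pos.2 (by linarith)
      have hSn : ‖Shk Z Z' h k b t‖ ≤ (1 / √(h : ℝ)) * (1 / √(k : ℝ)) * (3 / (r * p ^ 3)) := by
        refine hS.trans ?_
        calc 21 / √(120 * (h * k * |t| * Z)) ≤ 21 / (10 * (√(h : ℝ) * √(k : ℝ) * (r * p ^ 3))) := by
              gcongr
          _ = (21 / 10) * (1 / (√(h : ℝ) * √(k : ℝ) * (r * p ^ 3))) := by field_simp
          _ ≤ 3 * (1 / (√(h : ℝ) * √(k : ℝ) * (r * p ^ 3))) := by gcongr; norm_num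
          _ = _ := by field_simp
      calc (((H : ℝ) - k) / H) * (Shk Z Z' h k b t).re
          ≤ (((H : ℝ) - k) / H) * ‖Shk Z Z' h k b t‖ := by
            gcongr; exact Complex.re_le_norm _
        _ ≤ 1 * ‖Shk Z Z' h k b t‖ := by gcongr
        _ ≤ _ := by rw [one_mul]; exact hSn
    calc _ ≤ ∑ h ∈ Ico (1 : ℤ) H, ∑ k ∈ Ico (1 : ℤ) H,
          (1 / √(h : ℝ)) * (1 / √(k : ℝ)) * (3 / (r * p ^ 3)) :=
          Finset.sum_le_sum fun h hh => Finset.sum_le_sum fun k hk => hterm h hh k hk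
      _ = (∑ h ∈ Ico (1 : ℤ) H, 1 / √(h : ℝ)) * (∑ k ∈ Ico (1 : ℤ) H, 1 / √(k : ℝ)) *
          (3 / (r * p ^ 3)) := by
          rw [Finset.sum_mul_sum, Finset.sum_mul]
          refine Finset.sum_congr rfl fun h _ => ?_
          rw [Finset.sum_mul]
      _ ≤ (2 * √(H : ℝ)) * (2 * √(H : ℝ)) * (3 / (r * p ^ 3)) := by
          have h1 := sum_inv_sqrt_le H
          have h2 : 0 ≤ ∑ h ∈ Ico (1 : ℤ) H, 1 / √(h : ℝ) :=
            Finset.sum_nonneg fun _ _ => by positivity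
          gcongr
      _ = 4 * (√(H : ℝ)) ^ 2 * (3 / (r * p ^ 3)) := by ring
      _ = _ := by rw [Real.sq_sqrt hH0.le]; ring
  have hstep : ‖F Z Z' a b t‖ ^ 4 ≤ (72 * p ^ 24 + 1536 * (p ^ 15 / r)) * (1 / H) := by
    refine hvdc.trans ?_
    calc _ ≤ 8 * (Z : ℝ) ^ 4 / H ^ 2 + 64 * (Z : ℝ) ^ 4 / H +
          128 * (Z : ℝ) ^ 3 / (H * H) * (12 * H / (r * p ^ 3)) := by gcongr
      _ ≤ 8 * (Z : ℝ) ^ 4 / H + 64 * (Z : ℝ) ^ 4 / H +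
          128 * (Z : ℝ) ^ 3 / (H * H) * (12 * H / (r * p ^ 3)) := by
          have : (1 : ℝ) ≤ H := by exact_mod_cast hH1
          gcongr
          nlinarith
      _ = _ := by rw [← hpZ]; field_simp; ring
  refine hstep.trans ?_
  calc (72 * p ^ 24 + 1536 * (p ^ 15 / r)) * (1 / H)
      ≤ (72 * p ^ 24 + 1536 * (p ^ 15 / r)) * (2 * (1 / Z + 22 * r * Z)) := by gcongr
    _ = 144 * p ^ 18 + 3168 * (r * p ^ 10) * p ^ 20 + 3072 * (p ^ 9 / r) + 67584 * p ^ 21 := by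
        rw [← hpZ]; field_simp; ring
    _ ≤ 144 * p ^ 21 + 3168 * 2 * p ^ 21 + 3072 * (p ^ 9 / r) + 67584 * p ^ 21 := by
        have h1 : p ^ 18 ≤ p ^ 21 := pow_le_pow_right₀ hp1 (by norm_num)
        have h2 : p ^ 20 ≤ p ^ 21 := pow_le_pow_right₀ hp1 (by norm_num)
        gcongr
    _ ≤ _ := by
        have h1 : 0 ≤ p ^ 9 / r := by positivity
        have h2 : 0 ≤ p ^ 21 := by positivity
        linarith

/-! ### Parallelograms with a given `n` -/

lemma card_filter_product_le {α β : Type*} [DecidableEq α] [DecidableEq β] (S : Finset α)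
    (T : Finset β) (r : α → β → Prop) [∀ a b, Decidable (r a b)] (B : ℝ)
    (h : ∀ a ∈ S, (#{b ∈ T | r a b} : ℝ) ≤ B) :
    (#{ab ∈ S ×ˢ T | r ab.1 ab.2} : ℝ) ≤ #S * B := by
  have h1 : (#{ab ∈ S ×ˢ T | r ab.1 ab.2} : ℝ) = ∑ a ∈ S, (#{b ∈ T | r a b} : ℝ) := by
    simp only [Finset.card_filter]
    push_cast
    rw [Finset.sum_product]
  rw [h1]
  refine (Finset.sum_le_sum h).trans ?_
  rw [Finset.sum_const, nsmul_eq_mul]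

lemma card_le_of_diam (S : Finset ℤ) (D : ℕ) (h : ∀ u ∈ S, ∀ v ∈ S, u - v ≤ D) : #S ≤ D + 1 := by
  rcases S.eq_empty_or_nonempty with h0 | h0
  · simp [h0]
  · have hsub : S ⊆ Icc (S.min' h0) (S.min' h0 + D) := by
      intro u hu
      have h1 := h u hu _ (S.min'_mem h0)
      have h2 := S.min'_le u hu
      rw [mem_Icc]; omega
    refine (Finset.card_le_card hsub).trans ?_
    rw [Int.card_Icc]; omega

/-- Elementary size information on a parallelogram of `quadBox`. -/
lemma mem_quadBox {Z Z' : ℕ} {τ : ℤ × ℤ × ℤ} (hτ : τ ∈ quadBox Z Z') :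
    τ.1 ∈ Icc (-(Z : ℤ)) Z ∧ τ.2.1 ∈ Icc (-(Z : ℤ)) Z ∧ τ.2.2 ∈ Ioc (Z : ℤ) Z' ∧
    τ.2.2 + τ.1 ∈ Ioc (Z : ℤ) Z' ∧ τ.2.2 + τ.2.1 ∈ Ioc (Z : ℤ) Z' ∧
    τ.2.2 + τ.2.1 + τ.1 ∈ Ioc (Z : ℤ) Z' := by
  rw [quadBox, mem_filter, mem_product, mem_product, mem_shsh] at hτ
  tauto

lemma frT_le {Z Z' : ℕ} (hZ : Z' ≤ 2 * Z) {τ : ℤ × ℤ × ℤ} (hτ : τ ∈ quadBox Z Z') :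
    0 ≤ frT τ ∧ frT τ ≤ 18 * (Z : ℤ) ^ 2 := by
  obtain ⟨h1, h2, h3, h4, h5, h6⟩ := mem_quadBox hτ
  rw [mem_Icc] at h1 h2
  rw [mem_Ioc] at h3 h4 h5 h6
  unfold frT
  constructor
  · positivity
  · have a1 : τ.1 ^ 2 ≤ (Z : ℤ) ^ 2 := sq_le_sq' (by omega) (by omega)
    have a2 : τ.2.1 ^ 2 ≤ (Z : ℤ) ^ 2 := sq_le_sq' (by omega) (by omega)
    have a3 : (2 * τ.2.2 + τ.1 + τ.2.1) ^ 2 ≤ (4 * (Z : ℤ)) ^ 2 := sq_le_sq' (by omega) (by omega)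
    nlinarith

lemma abs_frN_le {Z Z' : ℕ} (hZ : Z' ≤ 2 * Z) {τ : ℤ × ℤ × ℤ} (hτ : τ ∈ quadBox Z Z') :
    |frN τ| ≤ 4 * (Z : ℤ) ^ 3 := by
  obtain ⟨h1, h2, h3, h4, h5, h6⟩ := mem_quadBox hτ
  rw [mem_Icc] at h1 h2
  rw [mem_Ioc] at h3 h4 h5 h6
  unfold frN
  rw [abs_mul, abs_mul]
  have a1 : |τ.1| ≤ Z := abs_le.2 ⟨by omega, by omega⟩
  have a2 : |τ.2.1| ≤ Z := abs_le.2 ⟨by omega, by omega⟩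
  have a3 : |2 * τ.2.2 + τ.1 + τ.2.1| ≤ 4 * Z := abs_le.2 ⟨by omega, by omega⟩
  calc |τ.1| * |τ.2.1| * |2 * τ.2.2 + τ.1 + τ.2.1| ≤ Z * Z * (4 * Z) := by gcongr
    _ = _ := by ring

lemma card_quadBox_le (Z Z' : ℕ) (hZ1 : 1 ≤ Z) (hZ : Z' ≤ 2 * Z) :
    (#(quadBox Z Z') : ℝ) ≤ 9 * (Z : ℝ) ^ 3 := by
  have h1 : #(quadBox Z Z') ≤ (3 * Z) * ((3 * Z) * Z) := by
    refine (Finset.card_filter_le _ _).trans ?_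
    rw [Finset.card_product, Finset.card_product, Int.card_Icc, Int.card_Ioc]
    gcongr <;> omega
  calc (#(quadBox Z Z') : ℝ) ≤ ((3 * Z) * ((3 * Z) * Z) : ℕ) := by exact_mod_cast h1
    _ = _ := by push_cast; ring

/-- Degenerate parallelograms: since `y > 0`, the vanishing of `n` forces `h = 0` or `k = 0`. -/
lemma card_quadBox_zero_le (Z Z' : ℕ) (hZ1 : 1 ≤ Z) (hZ : Z' ≤ 2 * Z) :
    (#{τ ∈ quadBox Z Z' | frN τ = 0} : ℝ) ≤ 6 * (Z : ℝ) ^ 2 := by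
  classical
  have hsub : {τ ∈ quadBox Z Z' | frN τ = 0} ⊆
      (({0} : Finset ℤ) ×ˢ Icc (-(Z : ℤ)) Z ×ˢ Ioc (Z : ℤ) Z') ∪
      (Icc (-(Z : ℤ)) Z ×ˢ ({0} : Finset ℤ) ×ˢ Ioc (Z : ℤ) Z') := by
    intro τ hτ
    rw [mem_filter] at hτ
    obtain ⟨h1, h2, h3, h4, h5, h6⟩ := mem_quadBox hτ.1
    have hy : 2 * τ.2.2 + τ.1 + τ.2.1 ≠ 0 := by
      rw [mem_Ioc] at h3 h6; omega
    have := hτ.2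
    unfold frN at this
    rcases mul_eq_zero.1 this with h | h
    · rcases mul_eq_zero.1 h with h | h
      · rw [mem_union, mem_product, mem_product]
        exact Or.inl ⟨by simpa using h, h2, h3⟩
      · rw [mem_union, mem_product, mem_product, mem_product, mem_product]
        exact Or.inr ⟨h1, by simpa using h, h3⟩
    · exact absurd h hy
  have h1 : #{τ ∈ quadBox Z Z' | frN τ = 0} ≤ 1 * ((3 * Z) * Z) + (3 * Z) * (1 * Z) := by
    refine (Finset.card_le_card hsub).trans ((Finset.card_union_le _ _).trans ?_)
    simp only [Finset.card_product, Int.card_Icc, Int.card_Ioc, Finset.card_singleton]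
    gcongr <;> omega
  calc (#{τ ∈ quadBox Z Z' | frN τ = 0} : ℝ) ≤ (1 * ((3 * Z) * Z) + (3 * Z) * (1 * Z) : ℕ) := by
        exact_mod_cast h1
    _ = _ := by push_cast; ring

/-- `V` bounds the number of divisors, in `[-Z, Z]`, of every nonzero integer of size `≤ 4 Z³`. -/
def DivBound (Z : ℕ) (V : ℝ) : Prop :=
  ∀ n : ℤ, n ≠ 0 → |n| ≤ 4 * (Z : ℤ) ^ 3 → (#{h ∈ Icc (-(Z : ℤ)) Z | h ∣ n} : ℝ) ≤ V

/-- The steps `h`, `k` divide `n = h k y` and, together with `n ≠ 0`, they determine `x`. -/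
lemma card_fiber_le (Z Z' : ℕ) (hZ : Z' ≤ 2 * Z) (V : ℝ) (hV0 : 0 ≤ V) (hV : DivBound Z V)
    (n : ℤ) (hn : n ≠ 0) : (#{τ ∈ quadBox Z Z' | frN τ = n} : ℝ) ≤ V ^ 2 := by
  classical
  rcases Finset.eq_empty_or_nonempty {τ ∈ quadBox Z Z' | frN τ = n} with h0 | ⟨τ₀, hτ₀⟩
  · rw [h0]; simp; positivity
  · have hn4 : |n| ≤ 4 * (Z : ℤ) ^ 3 := by
      rw [mem_filter] at hτ₀
      rw [← hτ₀.2]; exact abs_frN_le hZ hτ₀.1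
    set D := {h ∈ Icc (-(Z : ℤ)) Z | h ∣ n} with hD
    have hc : #{τ ∈ quadBox Z Z' | frN τ = n} ≤ #(D ×ˢ D) := by
      refine Finset.card_le_card_of_injOn (fun τ => (τ.1, τ.2.1)) ?_ ?_
      · intro τ hτ
        have hτ := mem_filter.1 (Finset.mem_coe.1 hτ)
        obtain ⟨h1, h2, -⟩ := mem_quadBox hτ.1
        have hN := hτ.2
        unfold frN at hN
        refine Finset.mem_coe.2 (mem_product.2 ⟨mem_filter.2 ⟨h1, ?_⟩, mem_filter.2 ⟨h2, ?_⟩⟩)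
        · exact ⟨τ.2.1 * (2 * τ.2.2 + τ.1 + τ.2.1), by rw [← hN]; ring⟩
        · exact ⟨τ.1 * (2 * τ.2.2 + τ.1 + τ.2.1), by rw [← hN]; ring⟩
      · rintro ⟨h, k, x⟩ hτ ⟨h', k', x'⟩ hτ' heq
        have hτ := (mem_filter.1 (Finset.mem_coe.1 hτ)).2
        have hτ' := (mem_filter.1 (Finset.mem_coe.1 hτ')).2
        simp only [Prod.mk.injEq] at heq
        obtain ⟨rfl, rfl⟩ := heq
        simp only [frN] at hτ hτ'
        have hhk : h * k ≠ 0 := by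
          intro h0; rw [h0, zero_mul] at hτ; exact hn hτ.symm
        have := mul_left_cancel₀ hhk (hτ.trans hτ'.symm)
        simp only [Prod.mk.injEq, true_and]; omega
    have hDV := hV n hn hn4
    calc (#{τ ∈ quadBox Z Z' | frN τ = n} : ℝ) ≤ (#(D ×ˢ D) : ℕ) := by exact_mod_cast hc
      _ = (#D : ℝ) * #D := by rw [Finset.card_product]; push_cast; ring
      _ ≤ V * V := by gcongr
      _ = _ := by ring

open Classical in
/-- Parallelograms with `|n| ≥ Z³ / p`. -/
noncomputable def bigBox (Z Z' : ℕ) (p : ℝ) : Finset (ℤ × ℤ × ℤ) :=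
  {τ ∈ quadBox Z Z' | (Z : ℝ) ^ 3 ≤ p * |(frN τ : ℝ)|}

open Classical in
/-- Nondegenerate parallelograms with `|n| < Z³ / p`. -/
noncomputable def smallBox (Z Z' : ℕ) (p : ℝ) : Finset (ℤ × ℤ × ℤ) :=
  {τ ∈ quadBox Z Z' | frN τ ≠ 0 ∧ p * |(frN τ : ℝ)| < (Z : ℝ) ^ 3}

lemma frN_ne_zero_of_big {Z Z' : ℕ} (hZ1 : 1 ≤ Z) {p : ℝ} {τ : ℤ × ℤ × ℤ}
    (hτ : τ ∈ bigBox Z Z' p) : frN τ ≠ 0 := by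
  intro h
  have := (mem_filter.1 hτ).2
  rw [h] at this
  have hZ : (0 : ℝ) < Z := by exact_mod_cast hZ1
  have : (0 : ℝ) < (Z : ℝ) ^ 3 := by positivity
  simp at *
  linarith

lemma pairs_big_le (Z Z' : ℕ) (hZ1 : 1 ≤ Z) (hZ : Z' ≤ 2 * Z) (p V : ℝ) (hV0 : 0 ≤ V)
    (hV : DivBound Z V) :
    (#{ij ∈ bigBox Z Z' p ×ˢ bigBox Z Z' p | frN ij.1 = frN ij.2} : ℝ) ≤ 9 * (Z : ℝ) ^ 3 * V ^ 2 := by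
  classical
  have h1 := card_filter_product_le (bigBox Z Z' p) (bigBox Z Z' p)
    (fun i j => frN i = frN j) (V ^ 2) (by
      intro i hi
      refine le_trans ?_ (card_fiber_le Z Z' hZ V hV0 hV (frN i) (frN_ne_zero_of_big hZ1 hi))
      norm_cast
      refine Finset.card_le_card fun j hj => ?_
      rw [mem_filter] at hj ⊢
      exact ⟨(mem_filter.1 hj.1).1, hj.2.symm⟩)
  refine h1.trans ?_
  gcongr
  refine le_trans ?_ (card_quadBox_le Z Z' hZ1 hZ)
  exact_mod_cast Finset.card_le_card (Finset.filter_subset _ _)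

lemma card_smallBox_le (Z Z' : ℕ) (hZ1 : 1 ≤ Z) (hZ : Z' ≤ 2 * Z) (p V : ℝ) (hp : 0 < p)
    (hpZ : p ≤ (Z : ℝ) ^ 3) (hV0 : 0 ≤ V) (hV : DivBound Z V) :
    (#(smallBox Z Z' p) : ℝ) ≤ 3 * ((Z : ℝ) ^ 3 / p) * V ^ 2 := by
  classical
  set m : ℕ := ⌊(Z : ℝ) ^ 3 / p⌋₊ with hm
  have h1 : (#(smallBox Z Z' p) : ℝ) = ∑ n ∈ Icc (-(m : ℤ)) m,
      (#{τ ∈ smallBox Z Z' p | frN τ = n} : ℝ) := by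
    rw [Finset.card_eq_sum_card_fiberwise (f := frN) (t := Icc (-(m : ℤ)) m)]
    · push_cast; rfl
    · intro τ hτ
      have h2 := (mem_filter.1 (Finset.mem_coe.1 hτ)).2.2
      have h3 : |(frN τ : ℝ)| ≤ (Z : ℝ) ^ 3 / p := by
        rw [le_div_iff₀ hp]; linarith
      have h4 : (frN τ).natAbs ≤ m := by
        refine Nat.le_floor ?_
        rw [Nat.cast_natAbs]; simpa using h3
      refine Finset.mem_coe.2 (mem_Icc.2 ⟨by omega, by omega⟩)
  have h2 : ∀ n ∈ Icc (-(m : ℤ)) m, (#{τ ∈ smallBox Z Z' p | frN τ = n} : ℝ) ≤ V ^ 2 := by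
    intro n _
    by_cases hn : n = 0
    · have : {τ ∈ smallBox Z Z' p | frN τ = n} = ∅ := by
        rw [Finset.filter_eq_empty_iff]
        intro τ hτ h
        exact (mem_filter.1 hτ).2.1 (h.trans hn)
      rw [this]; simp; positivity
    · refine le_trans ?_ (card_fiber_le Z Z' hZ V hV0 hV n hn)
      norm_cast
      refine Finset.card_le_card fun j hj => ?_
      rw [mem_filter] at hj ⊢
      exact ⟨(mem_filter.1 hj.1).1, hj.2⟩
  rw [h1]
  refine (Finset.sum_le_sum h2).trans ?_
  rw [Finset.sum_const, nsmul_eq_mul, Int.card_Icc]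
  have h3 : (((m : ℤ) + 1 - -(m : ℤ)).toNat : ℝ) = 2 * m + 1 := by
    have : ((m : ℤ) + 1 - -(m : ℤ)).toNat = 2 * m + 1 := by omega
    rw [this]; push_cast; ring
  rw [h3]
  have h4 : (m : ℝ) ≤ (Z : ℝ) ^ 3 / p := Nat.floor_le (by positivity)
  have h5 : 1 ≤ (Z : ℝ) ^ 3 / p := by rw [le_div_iff₀ hp]; linarith
  gcongr
  linarith

lemma pairs_small_le (Z Z' : ℕ) (hZ1 : 1 ≤ Z) (hZ : Z' ≤ 2 * Z) (p V : ℝ) (hp : 0 < p)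
    (hpZ : p ≤ (Z : ℝ) ^ 3) (hV0 : 0 ≤ V) (hV : DivBound Z V) :
    (#{ij ∈ smallBox Z Z' p ×ˢ smallBox Z Z' p | frN ij.1 = frN ij.2} : ℝ) ≤
      3 * ((Z : ℝ) ^ 3 / p) * V ^ 4 := by
  classical
  have h1 := card_filter_product_le (smallBox Z Z' p) (smallBox Z Z' p)
    (fun i j => frN i = frN j) (V ^ 2) (by
      intro i hi
      refine le_trans ?_ (card_fiber_le Z Z' hZ V hV0 hV (frN i) (mem_filter.1 hi).2.1)
      norm_cast
      refine Finset.card_le_card fun j hj => ?_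
      rw [mem_filter] at hj ⊢
      exact ⟨(mem_filter.1 hj.1).1, hj.2.symm⟩)
  refine h1.trans ?_
  calc _ ≤ 3 * ((Z : ℝ) ^ 3 / p) * V ^ 2 * V ^ 2 := by
        gcongr; exact card_smallBox_le Z Z' hZ1 hZ p V hp hpZ hV0 hV
    _ = _ := by ring

/-! ### Close pairs of parallelograms -/

/-- If `n₁ ≈ n₂` and `q₁ ≈ q₂` with `n₁` large, then `D₁ ≈ D₂`, where `D = h² + k² + y²`: this is
division of `2 q = 5 n D` by `n`. -/
lemma frT_close {Z Z' : ℕ} (hZ1 : 1 ≤ Z) (hZ : Z' ≤ 2 * Z) {p : ℝ} (hp : 0 < p)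
    {τ₁ τ₂ : ℤ × ℤ × ℤ} (h₁ : τ₁ ∈ bigBox Z Z' p) (h₂ : τ₂ ∈ bigBox Z Z' p)
    (hn : |(frN τ₁ : ℝ) - frN τ₂| ≤ 16 * (Z : ℝ) ^ 2)
    (hq : |(frQ τ₁ : ℝ) - frQ τ₂| ≤ 721 * (Z : ℝ) ^ 4) :
    |(frT τ₁ : ℝ) - frT τ₂| ≤ 577 * Z * p := by
  have hZ0 : (0 : ℝ) < Z := by exact_mod_cast hZ1
  have hbig := (mem_filter.1 h₁).2
  obtain ⟨t0, t1⟩ := frT_le hZ (mem_filter.1 h₂).1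
  have t0' : (0 : ℝ) ≤ frT τ₂ := by exact_mod_cast t0
  have t1' : (frT τ₂ : ℝ) ≤ 18 * (Z : ℝ) ^ 2 := by exact_mod_cast t1
  have q1 : 2 * (frQ τ₁ : ℝ) = 5 * frN τ₁ * frT τ₁ := by exact_mod_cast two_frQ τ₁
  have q2 : 2 * (frQ τ₂ : ℝ) = 5 * frN τ₂ * frT τ₂ := by exact_mod_cast two_frQ τ₂
  have e1 : (frN τ₁ : ℝ) * (frT τ₁ - frT τ₂) =
      2 / 5 * (frQ τ₁ - frQ τ₂) - (frN τ₁ - frN τ₂) * frT τ₂ := by linarith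
  have e2 : |(frN τ₁ : ℝ)| * |(frT τ₁ : ℝ) - frT τ₂| ≤ 577 * (Z : ℝ) ^ 4 := by
    rw [← abs_mul, e1]
    refine (abs_sub _ _).trans ?_
    rw [abs_mul, abs_mul, abs_of_nonneg t0', abs_of_pos (by norm_num : (0 : ℝ) < 2 / 5)]
    have : |(frN τ₁ : ℝ) - frN τ₂| * frT τ₂ ≤ 16 * (Z : ℝ) ^ 2 * (18 * (Z : ℝ) ^ 2) := by gcongr
    have : 0 ≤ (Z : ℝ) ^ 4 := by positivity
    nlinarith
  set d := |(frT τ₁ : ℝ) - frT τ₂| with hd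
  have hd0 : 0 ≤ d := abs_nonneg _
  have e3 : (Z : ℝ) ^ 3 * d ≤ (Z : ℝ) ^ 3 * (577 * Z * p) := by
    calc (Z : ℝ) ^ 3 * d ≤ p * |(frN τ₁ : ℝ)| * d := by gcongr
      _ = p * (|(frN τ₁ : ℝ)| * d) := by ring
      _ ≤ p * (577 * (Z : ℝ) ^ 4) := by gcongr
      _ = _ := by ring
  exact le_of_mul_le_mul_left e3 (by positivity)

lemma abs_sub_le_of_sq_close {Z u v p : ℝ} (hZ : 0 < Z) (_hu : 2 * Z ≤ u) (hv : 2 * Z ≤ v)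
    (h : u ^ 2 - v ^ 2 ≤ 1410 * Z * p) (hp : 0 < p) : u - v ≤ 353 * p := by
  by_contra hlt
  push Not at hlt
  have : 353 * p * (4 * Z) < (u - v) * (u + v) := by
    have h1 : 353 * p * (4 * Z) < (u - v) * (4 * Z) := by gcongr
    have h2 : (u - v) * (4 * Z) ≤ (u - v) * (u + v) := by
      have : 0 ≤ u - v := by nlinarith
      gcongr; linarith
    linarith
  nlinarith

open Classical in
/-- For a given `τ₁` and given first step `h₂` there are `O(p²)` possibilities for the remaining
coordinates of `τ₂`, because `(y₂ ± k₂)² = D₂ - h₂² ± 2 n₂ / h₂` are confined to short intervals. -/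
lemma card_close_fiber (Z Z' : ℕ) (hZ1 : 1 ≤ Z) (hZ : Z' ≤ 2 * Z) (p : ℝ) (hp : 1 ≤ p)
    (τ₁ : ℤ × ℤ × ℤ) (h₁ : τ₁ ∈ bigBox Z Z' p) (h₂ : ℤ) :
    #{τ ∈ bigBox Z Z' p | (|(frN τ₁ : ℝ) - frN τ| ≤ 16 * (Z : ℝ) ^ 2 ∧
      |(frQ τ₁ : ℝ) - frQ τ| ≤ 721 * (Z : ℝ) ^ 4) ∧ τ.1 = h₂} ≤ (⌊353 * p⌋₊ + 1) ^ 2 := by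
  set S := {τ ∈ bigBox Z Z' p | (|(frN τ₁ : ℝ) - frN τ| ≤ 16 * (Z : ℝ) ^ 2 ∧
      |(frQ τ₁ : ℝ) - frQ τ| ≤ 721 * (Z : ℝ) ^ 4) ∧ τ.1 = h₂} with hS
  have hp0 : 0 < p := by linarith
  have hZ0 : (0 : ℝ) < Z := by exact_mod_cast hZ1
  -- the two relevant linear forms `y + k` and `y - k`
  set fu : ℤ × ℤ × ℤ → ℤ := fun τ => 2 * τ.2.2 + τ.1 + 2 * τ.2.1 with hfu
  set fv : ℤ × ℤ × ℤ → ℤ := fun τ => 2 * τ.2.2 + τ.1 with hfv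
  have hmem : ∀ τ ∈ S, τ ∈ bigBox Z Z' p ∧ |(frN τ₁ : ℝ) - frN τ| ≤ 16 * (Z : ℝ) ^ 2 ∧
      |(frQ τ₁ : ℝ) - frQ τ| ≤ 721 * (Z : ℝ) ^ 4 ∧ τ.1 = h₂ := by
    intro τ hτ
    have := mem_filter.1 hτ
    exact ⟨this.1, this.2.1.1, this.2.1.2, this.2.2⟩
  have hclose : ∀ τ ∈ S, ∀ σ ∈ S, (fu τ : ℝ) - fu σ ≤ 353 * p ∧ (fv τ : ℝ) - fv σ ≤ 353 * p := by
    intro τ hτ σ hσ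
    obtain ⟨b1, n1, q1, e1⟩ := hmem τ hτ
    obtain ⟨b2, n2, q2, e2⟩ := hmem σ hσ
    have c1 := frT_close hZ1 hZ hp0 h₁ b1 n1 q1
    have c2 := frT_close hZ1 hZ hp0 h₁ b2 n2 q2
    have m1 := mem_quadBox (mem_filter.1 b1).1
    have m2 := mem_quadBox (mem_filter.1 b2).1
    have B1 := (mem_filter.1 b1).2
    obtain ⟨h, k, x⟩ := τ
    obtain ⟨h', k', x'⟩ := σ
    simp only at e1 e2
    have hhh : h = h' := e1.trans e2.symm
    subst hhh
    simp only [mem_Icc, mem_Ioc] at m1 m2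
    -- as `|n| ≥ Z³ / p` and `|k y| ≤ 4 Z²`, the step `h` satisfies `|h| ≥ Z / (4 p)`
    have hy4 : |(k : ℝ) * (2 * x + h + k)| ≤ 4 * (Z : ℝ) ^ 2 := by
      rw [abs_mul]
      have a1 : |(k : ℝ)| ≤ Z := by
        have : |k| ≤ Z := abs_le.2 ⟨by omega, by omega⟩
        exact_mod_cast this
      have a2 : |(2 * x + h + k : ℝ)| ≤ 4 * Z := by
        have : |2 * x + h + k| ≤ 4 * Z := abs_le.2 ⟨by omega, by omega⟩
        exact_mod_cast this
      calc |(k : ℝ)| * |(2 * x + h + k : ℝ)| ≤ Z * (4 * Z) := by gcongr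
        _ = _ := by ring
    simp only [frN, frT] at c1 c2 n1 n2 B1
    push_cast at c1 c2 n1 n2 B1
    have hh : (Z : ℝ) ≤ 4 * p * |(h : ℝ)| := by
      have : (Z : ℝ) ^ 2 * Z ≤ (Z : ℝ) ^ 2 * (4 * p * |(h : ℝ)|) := by
        calc (Z : ℝ) ^ 2 * Z = (Z : ℝ) ^ 3 := by ring
          _ ≤ p * |(h : ℝ) * k * (2 * x + h + k)| := B1
          _ = p * (|(h : ℝ)| * |(k : ℝ) * (2 * x + h + k)|) := by rw [← abs_mul]; ring_nf
          _ ≤ p * (|(h : ℝ)| * (4 * (Z : ℝ) ^ 2)) := by gcongr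
          _ = _ := by ring
      exact le_of_mul_le_mul_left this (by positivity)
    set P : ℝ := (k : ℝ) * (2 * x + h + k) - (k' : ℝ) * (2 * x' + h + k') with hP
    have hPs : |P| ≤ 128 * Z * p := by
      have d1 : |(h : ℝ)| * |P| ≤ 32 * (Z : ℝ) ^ 2 := by
        rw [← abs_mul]
        rw [abs_le] at n1 n2 ⊢
        constructor <;> rw [hP] <;> linarith
      have d2 : (Z : ℝ) * |P| ≤ Z * (128 * Z * p) := by
        calc (Z : ℝ) * |P| ≤ 4 * p * |(h : ℝ)| * |P| := by gcongr
          _ = 4 * p * (|(h : ℝ)| * |P|) := by ring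
          _ ≤ 4 * p * (32 * (Z : ℝ) ^ 2) := by gcongr
          _ = _ := by ring
      exact le_of_mul_le_mul_left d2 hZ0
    rw [abs_le] at c1 c2 hPs
    have lb : ∀ w : ℤ, 2 * (Z : ℤ) ≤ w → 2 * (Z : ℝ) ≤ w := fun w hw => by exact_mod_cast hw
    constructor
    · refine abs_sub_le_of_sq_close hZ0 (lb _ ?_) (lb _ ?_) ?_ hp0
      · simp only [hfu]; omega
      · simp only [hfu]; omega
      · simp only [hfu]; push_cast
        nlinarith
    · refine abs_sub_le_of_sq_close hZ0 (lb _ ?_) (lb _ ?_) ?_ hp0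
      · simp only [hfv]; omega
      · simp only [hfv]; omega
      · simp only [hfv]; push_cast
        nlinarith
  have hdiam : ∀ f : ℤ × ℤ × ℤ → ℤ, (∀ τ ∈ S, ∀ σ ∈ S, (f τ : ℝ) - f σ ≤ 353 * p) →
      #(S.image f) ≤ ⌊353 * p⌋₊ + 1 := by
    intro f hf
    refine card_le_of_diam _ _ ?_
    intro u hu v hv
    obtain ⟨τ, hτ, rfl⟩ := mem_image.1 hu
    obtain ⟨σ, hσ, rfl⟩ := mem_image.1 hv
    have h3 := hf τ hτ σ hσ
    have h4 : f τ - f σ ≤ ⌊353 * p⌋ := Int.le_floor.2 (by push_cast; exact h3)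
    have h5 : ((⌊353 * p⌋₊ : ℕ) : ℤ) = ⌊353 * p⌋ := Int.natCast_floor_eq_floor (by positivity)
    omega
  have hu := hdiam fu fun τ hτ σ hσ => (hclose τ hτ σ hσ).1
  have hv := hdiam fv fun τ hτ σ hσ => (hclose τ hτ σ hσ).2
  calc #S ≤ #(S.image fu ×ˢ S.image fv) := by
        refine Finset.card_le_card_of_injOn (fun τ => (fu τ, fv τ)) ?_ ?_
        · intro τ hτ
          exact Finset.mem_coe.2 (mem_product.2 ⟨mem_image_of_mem _ hτ, mem_image_of_mem _ hτ⟩)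
        · intro τ hτ σ hσ heq
          have e1 := (hmem τ hτ).2.2.2
          have e2 := (hmem σ hσ).2.2.2
          simp only [hfu, hfv, Prod.mk.injEq] at heq
          obtain ⟨h, k, x⟩ := τ
          obtain ⟨h', k', x'⟩ := σ
          simp only at e1 e2 heq
          simp only [Prod.mk.injEq]
          omega
    _ = #(S.image fu) * #(S.image fv) := Finset.card_product _ _
    _ ≤ (⌊353 * p⌋₊ + 1) * (⌊353 * p⌋₊ + 1) := by gcongr
    _ = _ := by ring

open Classical in
/-- The number of pairs with both `n` and `q` close is `O(Z⁴ p²)`. -/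
lemma card_close_pairs (Z Z' : ℕ) (hZ1 : 1 ≤ Z) (hZ : Z' ≤ 2 * Z) (p : ℝ) (hp : 1 ≤ p) :
    (#{ij ∈ bigBox Z Z' p ×ˢ bigBox Z Z' p | |(frN ij.1 : ℝ) - frN ij.2| ≤ 16 * (Z : ℝ) ^ 2 ∧
      |(frQ ij.1 : ℝ) - frQ ij.2| ≤ 721 * (Z : ℝ) ^ 4} : ℝ) ≤ 27 * 354 ^ 2 * ((Z : ℝ) ^ 4 * p ^ 2) := by
  have h1 := card_filter_product_le (bigBox Z Z' p) (bigBox Z Z' p)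
    (fun i j => |(frN i : ℝ) - frN j| ≤ 16 * (Z : ℝ) ^ 2 ∧
      |(frQ i : ℝ) - frQ j| ≤ 721 * (Z : ℝ) ^ 4) (3 * Z * (354 * p) ^ 2) (by
      intro i hi
      have h2 := Finset.card_le_mul_card_image_of_maps_to (s := {b ∈ bigBox Z Z' p |
          |(frN i : ℝ) - frN b| ≤ 16 * (Z : ℝ) ^ 2 ∧ |(frQ i : ℝ) - frQ b| ≤ 721 * (Z : ℝ) ^ 4})
        (f := fun τ => τ.1) (t := Icc (-(Z : ℤ)) Z) (by
          intro τ hτ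
          exact (mem_quadBox (mem_filter.1 (mem_filter.1 hτ).1).1).1) ((⌊353 * p⌋₊ + 1) ^ 2) (by
          intro h₂ _
          rw [Finset.filter_filter]
          exact card_close_fiber Z Z' hZ1 hZ p hp i hi h₂)
      have h3 : #(Icc (-(Z : ℤ)) Z) ≤ 3 * Z := by rw [Int.card_Icc]; omega
      have h4 : ((⌊353 * p⌋₊ + 1 : ℕ) : ℝ) ≤ 354 * p := by
        push_cast
        have := Nat.floor_le (show 0 ≤ 353 * p by positivity)
        linarith
      calc _ ≤ (((⌊353 * p⌋₊ + 1) ^ 2 * #(Icc (-(Z : ℤ)) Z) : ℕ) : ℝ) := by exact_mod_cast h2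
        _ ≤ (((⌊353 * p⌋₊ + 1) ^ 2 * (3 * Z) : ℕ) : ℝ) := by
            exact_mod_cast Nat.mul_le_mul_left _ h3
        _ = ((⌊353 * p⌋₊ + 1 : ℕ) : ℝ) ^ 2 * (3 * Z) := by push_cast; ring
        _ ≤ (354 * p) ^ 2 * (3 * Z) := by gcongr
        _ = _ := by ring)
  refine h1.trans ?_
  have h2 : (#(bigBox Z Z' p) : ℝ) ≤ 9 * (Z : ℝ) ^ 3 := by
    refine le_trans ?_ (card_quadBox_le Z Z' hZ1 hZ)
    exact_mod_cast Finset.card_le_card (Finset.filter_subset _ _)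
  calc _ ≤ 9 * (Z : ℝ) ^ 3 * (3 * Z * (354 * p) ^ 2) := by gcongr
    _ = _ := by ring

/-- The parallelograms with steps `1 ≤ h < H₁`, `1 ≤ k < H₂`. -/
noncomputable def kBox (Z Z' H₁ H₂ : ℕ) : Finset (ℤ × ℤ × ℤ) :=
  {τ ∈ Ico (1 : ℤ) H₁ ×ˢ Ico (1 : ℤ) H₂ ×ˢ Ioc (Z : ℤ) Z' |
    τ.2.2 ∈ sh (sh (Ioc (Z : ℤ) Z') τ.1) τ.2.1}

lemma mem_kBox {Z Z' H₁ H₂ : ℕ} (h1 : H₁ ≤ Z) (h2 : H₂ ≤ Z) {τ : ℤ × ℤ × ℤ}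
    (hτ : τ ∈ kBox Z Z' H₁ H₂) :
    τ ∈ quadBox Z Z' ∧ (1 ≤ τ.1 ∧ τ.1 < H₁) ∧ (1 ≤ τ.2.1 ∧ τ.2.1 < H₂) := by
  rw [kBox, mem_filter, mem_product, mem_product, mem_Ico, mem_Ico] at hτ
  refine ⟨?_, hτ.1.1, hτ.1.2.1⟩
  rw [quadBox, mem_filter, mem_product, mem_product, mem_Icc, mem_Icc]
  exact ⟨⟨⟨by omega, by omega⟩, ⟨by omega, by omega⟩, hτ.1.2.2⟩, hτ.2⟩

lemma frN_kBox {Z Z' H₁ H₂ : ℕ} (hZ : Z' ≤ 2 * Z) (h1 : H₁ ≤ Z) (h2 : H₂ ≤ Z)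
    (hH : H₁ * H₂ ≤ 4 * Z) {τ : ℤ × ℤ × ℤ} (hτ : τ ∈ kBox Z Z' H₁ H₂) :
    0 < frN τ ∧ frN τ ≤ 16 * (Z : ℤ) ^ 2 := by
  obtain ⟨hq, ha, hb⟩ := mem_kBox h1 h2 hτ
  obtain ⟨-, -, h3, h4, h5, h6⟩ := mem_quadBox hq
  rw [mem_Ioc] at h3 h4 h5 h6
  unfold frN
  have hy : 0 < 2 * τ.2.2 + τ.1 + τ.2.1 := by omega
  have hy4 : 2 * τ.2.2 + τ.1 + τ.2.1 ≤ 4 * Z := by omega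
  have p1 : 0 < τ.1 := by omega
  have p2 : 0 < τ.2.1 := by omega
  constructor
  · positivity
  · have hH' : (H₁ : ℤ) * H₂ ≤ 4 * Z := by exact_mod_cast hH
    have : τ.1 * τ.2.1 ≤ H₁ * H₂ := mul_le_mul ha.2.le hb.2.le p2.le (by positivity)
    calc τ.1 * τ.2.1 * (2 * τ.2.2 + τ.1 + τ.2.1) ≤ (4 * Z) * (4 * Z) := by
          refine mul_le_mul (by linarith) hy4 hy.le (by positivity)
      _ = _ := by ring

/-- The count controlling the main term. The short parallelogram `κ` has `n_κ ≪ Z²` and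
`q_κ ≪ Z⁴`, so the other two form a close pair; they determine `n_κ`, hence `κ` up to `V²`
choices. -/
lemma card_triples (Z Z' : ℕ) (hZ1 : 1 ≤ Z) (hZ : Z' ≤ 2 * Z) (p V : ℝ) (hp : 1 ≤ p)
    (hV0 : 0 ≤ V) (hV : DivBound Z V) (H₁ H₂ R : ℕ) (h1 : H₁ ≤ Z) (h2 : H₂ ≤ Z)
    (hH : H₁ * H₂ ≤ 4 * Z) (hR : R ≤ Z ^ 4) :
    (#{x ∈ (bigBox Z Z' p ×ˢ bigBox Z Z' p) ×ˢ kBox Z Z' H₁ H₂ |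
      frN x.1.1 - frN x.1.2 + frN x.2 = 0 ∧ |frQ x.1.1 - frQ x.1.2 + frQ x.2| < R} : ℝ) ≤
      27 * 354 ^ 2 * ((Z : ℝ) ^ 4 * p ^ 2) * V ^ 2 := by
  classical
  set P := {ij ∈ bigBox Z Z' p ×ˢ bigBox Z Z' p | |(frN ij.1 : ℝ) - frN ij.2| ≤ 16 * (Z : ℝ) ^ 2 ∧
      |(frQ ij.1 : ℝ) - frQ ij.2| ≤ 721 * (Z : ℝ) ^ 4} with hP
  have hsub : {x ∈ (bigBox Z Z' p ×ˢ bigBox Z Z' p) ×ˢ kBox Z Z' H₁ H₂ |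
      frN x.1.1 - frN x.1.2 + frN x.2 = 0 ∧ |frQ x.1.1 - frQ x.1.2 + frQ x.2| < R} ⊆
      {x ∈ P ×ˢ kBox Z Z' H₁ H₂ | frN x.2 = frN x.1.2 - frN x.1.1} := by
    rintro ⟨⟨τ₁, τ₂⟩, κ⟩ hx
    rw [mem_filter, mem_product] at hx
    obtain ⟨⟨hx1, hx2⟩, hx3, hx4⟩ := hx
    simp only at hx1 hx2 hx3 hx4
    rw [mem_filter, mem_product, hP, mem_filter]
    obtain ⟨k1, k2⟩ := frN_kBox hZ h1 h2 hH hx2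
    obtain ⟨t0, t1⟩ := frT_le hZ (mem_kBox h1 h2 hx2).1
    have hQ := two_frQ κ
    have hQ0 : 0 ≤ frQ κ := by
      have : 0 ≤ 5 * frN κ * frT κ := by positivity
      omega
    have hQ1 : frQ κ ≤ 720 * (Z : ℤ) ^ 4 := by
      have : frN κ * frT κ ≤ 16 * (Z : ℤ) ^ 2 * (18 * (Z : ℤ) ^ 2) := by gcongr
      nlinarith
    refine ⟨⟨⟨hx1, ?_, ?_⟩, hx2⟩, ?_⟩
    · have : |frN τ₁ - frN τ₂| ≤ 16 * (Z : ℤ) ^ 2 := by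
        rw [abs_le]; constructor <;> omega
      exact_mod_cast this
    · have hR' : (R : ℤ) ≤ (Z : ℤ) ^ 4 := by exact_mod_cast hR
      have : |frQ τ₁ - frQ τ₂| ≤ 721 * (Z : ℤ) ^ 4 := by
        rw [abs_lt] at hx4
        rw [abs_le]; constructor <;> linarith
      exact_mod_cast this
    · show frN κ = frN τ₂ - frN τ₁
      omega
  have hcount := card_filter_product_le P (kBox Z Z' H₁ H₂)
    (fun ij κ => frN κ = frN ij.2 - frN ij.1) (V ^ 2) (by
      intro ij _
      by_cases h0 : frN ij.2 - frN ij.1 = 0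
      · have : {κ ∈ kBox Z Z' H₁ H₂ | frN κ = frN ij.2 - frN ij.1} = ∅ := by
          rw [Finset.filter_eq_empty_iff]
          intro κ hκ h
          have := (frN_kBox hZ h1 h2 hH hκ).1
          omega
        rw [this]; simp; positivity
      · refine le_trans ?_ (card_fiber_le Z Z' hZ V hV0 hV _ h0)
        norm_cast
        refine Finset.card_le_card fun j hj => ?_
        rw [mem_filter] at hj ⊢
        exact ⟨(mem_kBox h1 h2 hj.1).1, hj.2⟩)
  have hPc := card_close_pairs Z Z' hZ1 hZ p hp
  rw [← hP] at hPc
  calc _ ≤ (#{x ∈ P ×ˢ kBox Z Z' H₁ H₂ | frN x.2 = frN x.1.2 - frN x.1.1} : ℝ) := by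
        exact_mod_cast Finset.card_le_card hsub
    _ ≤ #P * V ^ 2 := hcount
    _ ≤ _ := by gcongr

/-! ### The twentieth moment in the linear variable -/

/-- The part of `W` coming from the large values of `n`. -/
noncomputable def Wb (Z Z' : ℕ) (p b t : ℝ) : ℂ := ∑ τ ∈ bigBox Z Z' p, e (ph τ b t)

/-- The part of `W` coming from the small nonzero values of `n`. -/
noncomputable def Ws (Z Z' : ℕ) (p b t : ℝ) : ℂ := ∑ τ ∈ smallBox Z Z' p, e (ph τ b t)

lemma W_le (Z Z' : ℕ) (hZ1 : 1 ≤ Z) (hZ : Z' ≤ 2 * Z) (p b t : ℝ) :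
    W Z Z' b t ≤ 6 * (Z : ℝ) ^ 2 + ‖Wb Z Z' p b t‖ + ‖Ws Z Z' p b t‖ := by
  classical
  have h1 : (W Z Z' b t : ℂ) = ∑ τ ∈ quadBox Z Z' with frN τ = 0, e (ph τ b t) +
      (Wb Z Z' p b t + Ws Z Z' p b t) := by
    rw [W_eq Z Z' hZ, ← Finset.sum_filter_add_sum_filter_not (quadBox Z Z') (fun τ => frN τ = 0)]
    congr 1
    rw [Wb, Ws, ← Finset.sum_filter_add_sum_filter_not _
      (fun τ => (Z : ℝ) ^ 3 ≤ p * |(frN τ : ℝ)|), Finset.filter_filter, Finset.filter_filter]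
    congr 1
    · refine Finset.sum_congr (Finset.ext fun τ => ?_) fun _ _ => rfl
      rw [mem_filter, bigBox, mem_filter]
      refine ⟨fun h => ⟨h.1, h.2.2⟩, fun h => ⟨h.1, ?_, h.2⟩⟩
      exact frN_ne_zero_of_big hZ1 (mem_filter.2 h)
    · refine Finset.sum_congr (Finset.ext fun τ => ?_) fun _ _ => rfl
      rw [mem_filter, smallBox, mem_filter, not_le]
  have h2 : ‖(W Z Z' b t : ℂ)‖ = W Z Z' b t := by
    rw [Complex.norm_real, Real.norm_of_nonneg (W_nonneg _ _ _ _)]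
  rw [← h2, h1]
  have h3 : ‖∑ τ ∈ quadBox Z Z' with frN τ = 0, e (ph τ b t)‖ ≤ 6 * (Z : ℝ) ^ 2 := by
    refine (norm_sum_le _ _).trans ?_
    simp only [norm_e, Finset.sum_const, nsmul_eq_mul, mul_one]
    exact card_quadBox_zero_le Z Z' hZ1 hZ
  calc _ ≤ _ := norm_add_le _ _
    _ ≤ 6 * (Z : ℝ) ^ 2 + (‖Wb Z Z' p b t‖ + ‖Ws Z Z' p b t‖) := add_le_add h3 (norm_add_le _ _)
    _ = _ := by ring

/-- The weighted sum over short parallelograms produced by two van der Corput steps. -/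
noncomputable def KR (Z Z' H₁ H₂ : ℕ) (b t : ℝ) : ℝ :=
  ∑ κ ∈ kBox Z Z' H₁ H₂, (((H₂ : ℝ) - κ.2.1) / H₂) * (e (ph κ b t)).re

lemma KR_eq (Z Z' H₁ H₂ : ℕ) (b t : ℝ) :
    ∑ h ∈ Ico (1 : ℤ) H₁, ∑ k ∈ Ico (1 : ℤ) H₂, (((H₂ : ℝ) - k) / H₂) * (Shk Z Z' h k b t).re =
      KR Z Z' H₁ H₂ b t := by
  rw [KR, kBox, Finset.sum_filter, Finset.sum_product]
  refine Finset.sum_congr rfl fun h _ => ?_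
  rw [Finset.sum_product]
  refine Finset.sum_congr rfl fun k _ => ?_
  rw [Shk, Complex.re_sum, Finset.mul_sum, ← Finset.sum_filter]
  refine Finset.sum_congr (Finset.ext fun x => ?_) fun _ _ => rfl
  simp only [mem_filter]
  exact ⟨fun h => ⟨(mem_shsh.1 h).1, h⟩, fun h => h.2⟩

/-- The majorant of `‖F‖⁴` produced by two van der Corput steps. -/
noncomputable def Br (Z Z' H₁ H₂ : ℕ) (p b t : ℝ) : ℝ :=
  72 * (Z : ℝ) ^ 4 / p ^ 4 + 128 * (Z : ℝ) ^ 3 / (H₁ * H₂) * KR Z Z' H₁ H₂ b t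

lemma F_pow_four_le_Br (Z Z' : ℕ) (hZ : Z' ≤ 2 * Z) (p : ℝ) (hp : 0 < p) (a b t : ℝ)
    (H₁ H₂ : ℕ) (h1 : 1 ≤ H₁) (h2 : 1 ≤ H₂) (h1Z : H₁ ≤ Z) (h2Z : H₂ ≤ Z)
    (hp1 : p ^ 2 ≤ H₁) (hp2 : p ^ 4 ≤ H₂) :
    ‖F Z Z' a b t‖ ^ 4 ≤ Br Z Z' H₁ H₂ p b t := by
  refine (F_pow_four_le_vdC Z Z' hZ a b t H₁ H₂ h1 h2 h1Z h2Z).trans ?_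
  rw [KR_eq, Br]
  have e1 : 8 * (Z : ℝ) ^ 4 / H₁ ^ 2 ≤ 8 * (Z : ℝ) ^ 4 / p ^ 4 := by
    have : p ^ 4 ≤ (H₁ : ℝ) ^ 2 := by
      calc p ^ 4 = (p ^ 2) ^ 2 := by ring
        _ ≤ _ := by gcongr
    gcongr
  have e2 : 64 * (Z : ℝ) ^ 4 / H₂ ≤ 64 * (Z : ℝ) ^ 4 / p ^ 4 := by gcongr
  have e3 : 8 * (Z : ℝ) ^ 4 / p ^ 4 + 64 * (Z : ℝ) ^ 4 / p ^ 4 = 72 * (Z : ℝ) ^ 4 / p ^ 4 := by ring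
  linarith

lemma norm_F_le (Z Z' : ℕ) (hZ : Z' ≤ 2 * Z) (a b t : ℝ) : ‖F Z Z' a b t‖ ≤ Z := by
  rw [F]
  refine (norm_sum_le _ _).trans ?_
  simp only [norm_e, Finset.sum_const, nsmul_eq_mul, mul_one]
  exact card_block_le hZ subset_rfl

@[fun_prop]
lemma continuous_F (Z Z' : ℕ) {α : Type*} [TopologicalSpace α] {u v w : α → ℝ}
    (hu : Continuous u) (hv : Continuous v) (hw : Continuous w) :
    Continuous fun x => F Z Z' (u x) (v x) (w x) := by
  unfold F; fun_prop

/-- The twentieth moment of `F` in the linear variable. -/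
noncomputable def J20 (Z Z' : ℕ) (b t : ℝ) : ℝ := ∫ a in (0 : ℝ)..1, ‖F Z Z' a b t‖ ^ 20

@[fun_prop]
lemma continuous_J20 (Z Z' : ℕ) {α : Type*} [TopologicalSpace α] {u v : α → ℝ}
    (hu : Continuous u) (hv : Continuous v) : Continuous fun x => J20 Z Z' (u x) (v x) := by
  unfold J20
  exact intervalIntegral.continuous_parametric_intervalIntegral_of_continuous'
    (f := fun x a => ‖F Z Z' a (u x) (v x)‖ ^ 20) (by unfold Function.uncurry; fun_prop) _ _

/-- Sixteen of the twenty factors are bounded pointwise; the remaining fourth moment is `W`. -/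
lemma J20_le (Z Z' : ℕ) (hZ : Z' ≤ 2 * Z) (b t M : ℝ)
    (hM : ∀ a, (‖F Z Z' a b t‖ ^ 4) ^ 4 ≤ M) : J20 Z Z' b t ≤ W Z Z' b t * M := by
  rw [J20, ← integral_F_pow_four Z Z' hZ, ← intervalIntegral.integral_mul_const]
  refine intervalIntegral.integral_mono_on (by norm_num) (Continuous.intervalIntegrable (by fun_prop) _ _)
    (Continuous.intervalIntegrable (by fun_prop) _ _) fun a _ => ?_
  calc ‖F Z Z' a b t‖ ^ 20 = ‖F Z Z' a b t‖ ^ 4 * (‖F Z Z' a b t‖ ^ 4) ^ 4 := by ring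
    _ ≤ _ := by gcongr; exact hM a

/-- With `s = |F|⁴` and `r = √|t|`, the trivial bound and the second-derivative bound combine to a
majorant that is nearly integrable against `dt`. -/
lemma cube_bound {Z p s r t : ℝ} (hp : 0 < p) (hZp : p ^ 6 = Z) (hr : 0 ≤ r) (hr2 : r ^ 2 = |t|)
    (hs : 0 ≤ s) (h4 : s ≤ Z ^ 4) (hrt : r ≤ 1 / p ^ 12)
    (hsr : t ≠ 0 → s ≤ 100000 * (p ^ 9 / r + p ^ 21)) :
    s ^ 3 ≤ 5 * 10 ^ 10 * Z ^ 12 / (1 + Z ^ 5 * |t|) := by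
  have hZ0 : 0 < Z := by rw [← hZp]; positivity
  have hs3 : s ^ 3 ≤ Z ^ 12 := by
    calc s ^ 3 ≤ (Z ^ 4) ^ 3 := by gcongr
      _ = _ := by ring
  rw [le_div_iff₀ (by positivity)]
  rcases eq_or_ne t 0 with h0 | h0
  · rw [h0, abs_zero]
    have : 0 < Z ^ 12 := by positivity
    linarith
  · have hr0 : 0 < r := by
      rcases hr.lt_or_eq with h | h
      · exact h
      · rw [← h] at hr2
        exact absurd (abs_eq_zero.1 (by rw [← hr2]; ring)) h0
    have h1 : s * r ≤ 200000 * p ^ 9 := by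
      have h2 : p ^ 21 * r ≤ p ^ 9 := by
        calc p ^ 21 * r ≤ p ^ 21 * (1 / p ^ 12) := by gcongr
          _ = p ^ 9 := by field_simp
      calc s * r ≤ 100000 * (p ^ 9 / r + p ^ 21) * r := by gcongr; exact hsr h0
        _ = 100000 * (p ^ 9 + p ^ 21 * r) := by field_simp
        _ ≤ _ := by linarith
    have h3 : s ^ 2 * |t| ≤ 4 * 10 ^ 10 * Z ^ 3 := by
      calc s ^ 2 * |t| = (s * r) ^ 2 := by rw [← hr2]; ring
        _ ≤ (200000 * p ^ 9) ^ 2 := by gcongr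
        _ = 4 * 10 ^ 10 * (p ^ 6) ^ 3 := by ring
        _ = _ := by rw [hZp]
    calc s ^ 3 * (1 + Z ^ 5 * |t|) = s ^ 3 + s * Z ^ 5 * (s ^ 2 * |t|) := by ring
      _ ≤ Z ^ 12 + Z ^ 4 * Z ^ 5 * (4 * 10 ^ 10 * Z ^ 3) := by gcongr
      _ ≤ _ := by
        have : 0 < Z ^ 12 := by positivity
        nlinarith

set_option maxHeartbeats 1000000 in
/-- The pointwise bound for the twentieth moment in `a`. The four terms correspond to the
degenerate parallelograms, to `|t| ≤ p⁻²⁴`, and to the small and large values of `n` for the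
remaining `t`, according to which part of `W` dominates. -/
lemma master (Z Z' : ℕ) (hZ1 : 1000 ≤ Z) (hZ : Z' ≤ 2 * Z) (p : ℝ) (hp : 0 < p)
    (hpZ : p ^ 6 = Z) (b t : ℝ) (htp : |t| ≤ 4 / p ^ 20)
    (H₁ H₂ : ℕ) (h1 : 1 ≤ H₁) (h2 : 1 ≤ H₂) (h1Z : H₁ ≤ Z) (h2Z : H₂ ≤ Z)
    (hp1 : p ^ 2 ≤ H₁) (hp2 : p ^ 4 ≤ H₂) :
    J20 Z Z' b t ≤ 10 ^ 18 * ((Z : ℝ) ^ 14 +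
      (Z : ℝ) ^ 13 / (1 + (Z : ℝ) ^ 5 * |t|) * (‖Ws Z Z' p b t‖ ^ 2 + ‖Wb Z Z' p b t‖ ^ 2) +
      p ^ 69 * ‖Ws Z Z' p b t‖ ^ 2 +
      (Z : ℝ) ^ 8 * (‖Wb Z Z' p b t‖ ^ 2 * Br Z Z' H₁ H₂ p b t)) := by
  have hZ0 : (0 : ℝ) < Z := by rw [← hpZ]; positivity
  have hZ1' : 1 ≤ Z := by omega
  set ws := ‖Ws Z Z' p b t‖
  set wb := ‖Wb Z Z' p b t‖
  set w := W Z Z' b t with hw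
  set B := Br Z Z' H₁ H₂ p b t
  set z : ℝ := (Z : ℝ)
  have hws : 0 ≤ ws := norm_nonneg _
  have hwb : 0 ≤ wb := norm_nonneg _
  have hw0 : 0 ≤ w := W_nonneg _ _ _ _
  have hs0 : ∀ a, 0 ≤ ‖F Z Z' a b t‖ ^ 4 := fun a => by positivity
  have hsB : ∀ a, ‖F Z Z' a b t‖ ^ 4 ≤ B := fun a =>
    F_pow_four_le_Br Z Z' hZ p hp a b t H₁ H₂ h1 h2 h1Z h2Z hp1 hp2
  have hB : 0 ≤ B := (hs0 0).trans (hsB 0)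
  have hs4 : ∀ a, ‖F Z Z' a b t‖ ^ 4 ≤ z ^ 4 := fun a => by
    gcongr; exact norm_F_le Z Z' hZ a b t
  have hsW : ∀ a, ‖F Z Z' a b t‖ ^ 4 ≤ 3 * z * w := fun a => F_pow_four_le_W Z Z' hZ1' hZ a b t
  have hst : ∀ a, t ≠ 0 → ‖F Z Z' a b t‖ ^ 4 ≤ 100000 * (p ^ 9 / √|t| + p ^ 21) := fun a h =>
    F_pow_four_le_small_t Z Z' hZ1 hZ p hp hpZ a b t h htp
  have hW3 := W_le Z Z' hZ1' hZ p b t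
  have n1 : 0 ≤ z ^ 14 := by positivity
  have n2 : 0 ≤ z ^ 13 / (1 + z ^ 5 * |t|) * ws ^ 2 := by positivity
  have n2' : 0 ≤ z ^ 13 / (1 + z ^ 5 * |t|) * wb ^ 2 := by positivity
  have n3 : 0 ≤ p ^ 69 * ws ^ 2 := by positivity
  have n4 : 0 ≤ z ^ 8 * (wb ^ 2 * B) := by positivity
  rw [mul_add (z ^ 13 / (1 + z ^ 5 * |t|))]
  have hr0 : 0 ≤ √|t| := Real.sqrt_nonneg _
  have hr2 : √|t| ^ 2 = |t| := Real.sq_sqrt (abs_nonneg _)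
  -- either the degenerate part dominates `W`, or `W ≤ 3 max (|Wb|, |Ws|)`
  by_cases hA : w ≤ 18 * z ^ 2
  · have := J20_le Z Z' hZ b t ((54 * z ^ 3) ^ 4) (fun a => by
      refine pow_le_pow_left₀ (hs0 a) ((hsW a).trans ?_) 4
      calc 3 * z * w ≤ 3 * z * (18 * z ^ 2) := by gcongr
        _ = _ := by ring)
    have h3 : w * (54 * z ^ 3) ^ 4 ≤ 10 ^ 18 * z ^ 14 := by
      calc w * (54 * z ^ 3) ^ 4 ≤ 18 * z ^ 2 * (54 * z ^ 3) ^ 4 := by gcongr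
        _ = 18 * 54 ^ 4 * z ^ 14 := by ring
        _ ≤ _ := by gcongr; norm_num
    linarith
  push Not at hA
  by_cases hT : √|t| ≤ 1 / p ^ 12
  · have hM := J20_le Z Z' hZ b t (3 * z * w * (5 * 10 ^ 10 * z ^ 12 / (1 + z ^ 5 * |t|))) (fun a => by
      have := cube_bound hp hpZ hr0 hr2 (hs0 a) (hs4 a) hT (hst a)
      calc (‖F Z Z' a b t‖ ^ 4) ^ 4 = ‖F Z Z' a b t‖ ^ 4 * (‖F Z Z' a b t‖ ^ 4) ^ 3 := by ring
        _ ≤ _ := by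
          refine mul_le_mul (hsW a) this (by positivity) (by positivity))
    rw [← hw] at hM
    have h3 : ∀ u, w ≤ 3 * u → J20 Z Z' b t ≤ 10 ^ 18 * (z ^ 13 / (1 + z ^ 5 * |t|) * u ^ 2) := by
      intro u hu
      refine hM.trans ?_
      have : w ^ 2 ≤ (3 * u) ^ 2 := by gcongr
      calc w * (3 * z * w * (5 * 10 ^ 10 * z ^ 12 / (1 + z ^ 5 * |t|)))
          = 15 * 10 ^ 10 * (z ^ 13 / (1 + z ^ 5 * |t|)) * w ^ 2 := by ring
        _ ≤ 15 * 10 ^ 10 * (z ^ 13 / (1 + z ^ 5 * |t|)) * (3 * u) ^ 2 := by gcongr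
        _ = 135 * 10 ^ 10 * (z ^ 13 / (1 + z ^ 5 * |t|) * u ^ 2) := by ring
        _ ≤ _ := by
          have : 0 ≤ z ^ 13 / (1 + z ^ 5 * |t|) * u ^ 2 := by positivity
          nlinarith
    rcases le_total ws wb with h | h
    · have := h3 wb (by linarith)
      linarith
    · have := h3 ws (by linarith)
      linarith
  · push Not at hT
    have hr0 : 0 < √|t| := lt_trans (by positivity) hT
    have ht0 : t ≠ 0 := by
      intro h; rw [h, abs_zero, Real.sqrt_zero] at hr0; exact lt_irrefl _ hr0
    have hs21 : ∀ a, ‖F Z Z' a b t‖ ^ 4 ≤ 200000 * p ^ 21 := by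
      intro a
      refine (hst a ht0).trans ?_
      have : p ^ 9 / √|t| ≤ p ^ 21 := by
        rw [div_le_iff₀ hr0]
        calc p ^ 9 = p ^ 21 * (1 / p ^ 12) := by field_simp
          _ ≤ _ := by gcongr
      linarith
    rcases le_total ws wb with h | h
    · have hw3 : w ≤ 3 * wb := by linarith
      have hM := J20_le Z Z' hZ b t (3 * z * w * ((200000 * p ^ 21) ^ 2 * B)) (fun a => by
        calc (‖F Z Z' a b t‖ ^ 4) ^ 4 =
              ‖F Z Z' a b t‖ ^ 4 * ((‖F Z Z' a b t‖ ^ 4) ^ 2 * ‖F Z Z' a b t‖ ^ 4) := by ring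
          _ ≤ _ := by
            refine mul_le_mul (hsW a) (mul_le_mul (pow_le_pow_left₀ (hs0 a) (hs21 a) 2) (hsB a)
              (hs0 a) (by positivity)) (by positivity) (by positivity))
      rw [← hw] at hM
      have : w ^ 2 ≤ (3 * wb) ^ 2 := by gcongr
      have h5 : w * (3 * z * w * ((200000 * p ^ 21) ^ 2 * B)) ≤ 10 ^ 18 * (z ^ 8 * (wb ^ 2 * B)) := by
        calc w * (3 * z * w * ((200000 * p ^ 21) ^ 2 * B))
            = 12 * 10 ^ 10 * (z * (p ^ 6) ^ 7) * B * w ^ 2 := by ring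
          _ = 12 * 10 ^ 10 * (z * z ^ 7) * B * w ^ 2 := by rw [hpZ]
          _ ≤ 12 * 10 ^ 10 * (z * z ^ 7) * B * (3 * wb) ^ 2 := by gcongr
          _ = 108 * 10 ^ 10 * (z ^ 8 * (wb ^ 2 * B)) := by ring
          _ ≤ _ := by linarith
      linarith
    · have hw3 : w ≤ 3 * ws := by linarith
      have hM := J20_le Z Z' hZ b t (3 * z * w * (200000 * p ^ 21) ^ 3) (fun a => by
        calc (‖F Z Z' a b t‖ ^ 4) ^ 4 = ‖F Z Z' a b t‖ ^ 4 * (‖F Z Z' a b t‖ ^ 4) ^ 3 := by ring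
          _ ≤ _ := by
            refine mul_le_mul (hsW a) (pow_le_pow_left₀ (hs0 a) (hs21 a) 3)
              (by positivity) (by positivity))
      rw [← hw] at hM
      have : w ^ 2 ≤ (3 * ws) ^ 2 := by gcongr
      have h5 : w * (3 * z * w * (200000 * p ^ 21) ^ 3) ≤ 10 ^ 18 * (p ^ 69 * ws ^ 2) := by
        calc w * (3 * z * w * (200000 * p ^ 21) ^ 3)
            = 24 * 10 ^ 15 * (z * p ^ 63) * w ^ 2 := by ring
          _ = 24 * 10 ^ 15 * (p ^ 69) * w ^ 2 := by rw [← hpZ]; ring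
          _ ≤ 24 * 10 ^ 15 * (p ^ 69) * (3 * ws) ^ 2 := by gcongr
          _ = 216 * 10 ^ 15 * (p ^ 69 * ws ^ 2) := by ring
          _ ≤ _ := by linarith
      linarith

/-! ### Integration over `b` and the Dirichlet kernel -/

lemma integral_trig_eq {ι : Type*} (P : Finset ι) (m : ι → ℤ) (w : ι → ℂ) (s : ℝ) :
    ∫ θ in s..(s + 1), ∑ i ∈ P, w i * e (m i * θ) = ∑ i ∈ P with m i = 0, w i := by
  rw [intervalIntegral.integral_finsetSum]
  · simp only [intervalIntegral.integral_const_mul, integral_e_int]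
    simp only [mul_ite, mul_one, mul_zero]
    rw [← Finset.sum_filter]
  · intro i _
    exact Continuous.intervalIntegrable (by fun_prop) _ _

lemma norm_integral_trig2_le {ι : Type*} (P : Finset ι) (m l : ι → ℤ) (w : ι → ℂ)
    (hw : ∀ i ∈ P, ‖w i‖ ≤ 1) (s s' : ℝ) :
    ‖∫ t in s..(s + 1), ∫ b in s'..(s' + 1), ∑ i ∈ P, w i * e (m i * b + l i * t)‖ ≤
      #{i ∈ P | m i = 0 ∧ l i = 0} := by
  have h1 : ∀ t : ℝ, ∫ b in s'..(s' + 1), ∑ i ∈ P, w i * e (m i * b + l i * t) =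
      ∑ i ∈ P with m i = 0, w i * e (l i * t) := by
    intro t
    rw [← integral_trig_eq P m (fun i => w i * e (l i * t)) s']
    congr 1; ext b
    refine Finset.sum_congr rfl fun i _ => ?_
    rw [add_comm, e_add]; ring
  simp_rw [h1]
  refine (norm_integral_trig_le _ l w (fun i hi => hw i (mem_filter.1 hi).1) s).trans ?_
  rw [Finset.filter_filter]

/-- Mean square in `b` of a sum of the terms `e(ph τ b t)`. -/
lemma integral_normSq_ph_le (P : Finset (ℤ × ℤ × ℤ)) (t : ℝ) :
    ∫ b in (0 : ℝ)..1, ‖∑ τ ∈ P, e (ph τ b t)‖ ^ 2 ≤ #{ij ∈ P ×ˢ P | frN ij.1 = frN ij.2} := by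
  have h := norm_integral_trig_le (P ×ˢ P) (fun ij => 3 * (frN ij.1 - frN ij.2))
    (fun ij => e ((frQ ij.1 - frQ ij.2) * t)) (fun _ _ => (norm_e _).le) 0
  rw [zero_add] at h
  have h1 : ∀ b : ℝ, ∑ ij ∈ P ×ˢ P, e ((frQ ij.1 - frQ ij.2) * t) *
      e (((3 * (frN ij.1 - frN ij.2) : ℤ) : ℝ) * b) = ((‖∑ τ ∈ P, e (ph τ b t)‖ ^ 2 : ℝ) : ℂ) := by
    intro b
    rw [normSq_sum_e]
    refine Finset.sum_congr rfl fun ij _ => ?_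
    rw [← e_add]; congr 1
    simp only [ph]; push_cast; ring
  simp_rw [h1] at h
  rw [intervalIntegral.integral_ofReal, Complex.norm_real] at h
  refine (Real.le_norm_self _).trans (h.trans ?_)
  norm_cast
  refine Finset.card_le_card fun ij hij => ?_
  rw [mem_filter] at hij ⊢
  exact ⟨hij.1, by omega⟩

/-- The Dirichlet kernel used to localise in `t`. -/
noncomputable def dir (R : ℕ) (t : ℝ) : ℂ := ∑ r ∈ range R, e ((r : ℝ) * t)

@[fun_prop]
lemma continuous_dir (R : ℕ) : Continuous (dir R) := by unfold dir; fun_prop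

lemma half_le_norm_dir (R : ℕ) (t : ℝ) (h : 16 * R * |t| ≤ 1) : (R : ℝ) / 2 ≤ ‖dir R t‖ := by
  have h1 : ‖dir R t - R‖ ≤ (R : ℝ) / 2 := by
    have : dir R t - R = ∑ r ∈ range R, (e ((r : ℝ) * t) - e 0) := by
      rw [Finset.sum_sub_distrib, dir]; simp [e_zero]
    rw [this]
    refine (norm_sum_le _ _).trans ?_
    have h2 : ∀ r ∈ range R, ‖e ((r : ℝ) * t) - e 0‖ ≤ 1 / 2 := by
      intro r hr
      refine (norm_e_sub_e _ _).trans ?_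
      rw [sub_zero, abs_mul, abs_of_nonneg (Nat.cast_nonneg r)]
      have hr' : (r : ℝ) ≤ R := by exact_mod_cast (mem_range.1 hr).le
      have h3 : (r : ℝ) * |t| ≤ R * |t| := by gcongr
      have := Real.pi_lt_four
      have := Real.pi_pos
      have h0 : 0 ≤ (r : ℝ) * |t| := by positivity
      nlinarith
    calc _ ≤ ∑ r ∈ range R, (1 / 2 : ℝ) := Finset.sum_le_sum h2
      _ = _ := by rw [Finset.sum_const, card_range, nsmul_eq_mul]; ring
  have h3 : ‖(R : ℂ)‖ ≤ ‖dir R t‖ + ‖dir R t - R‖ := by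
    calc ‖(R : ℂ)‖ = ‖dir R t - (dir R t - R)‖ := by congr 1; ring
      _ ≤ _ := norm_sub_le _ _
  rw [Complex.norm_natCast] at h3
  linarith

lemma normSq_dir (R : ℕ) (t : ℝ) :
    ((‖dir R t‖ ^ 2 : ℝ) : ℂ) = ∑ r ∈ range R ×ˢ range R, e ((r.1 - r.2) * t) := by
  rw [dir, normSq_sum_e]
  refine Finset.sum_congr rfl fun r _ => ?_
  congr 1; ring

lemma integral_dir (R : ℕ) (s : ℝ) : ∫ t in s..(s + 1), ‖dir R t‖ ^ 2 ≤ R := by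
  have h := norm_integral_trig_le (range R ×ˢ range R) (fun r => (r.1 : ℤ) - r.2)
    (fun _ => 1) (fun _ _ => by simp) s
  have h1 : ∀ t : ℝ, ∑ r ∈ range R ×ˢ range R, (1 : ℂ) * e ((((r.1 : ℤ) - r.2 : ℤ) : ℝ) * t) =
      ((‖dir R t‖ ^ 2 : ℝ) : ℂ) := by
    intro t
    rw [normSq_dir]
    refine Finset.sum_congr rfl fun r _ => ?_
    push_cast; rw [one_mul]
  simp_rw [h1] at h
  rw [intervalIntegral.integral_ofReal, Complex.norm_real] at h
  refine (Real.le_norm_self _).trans (h.trans ?_)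
  refine Nat.cast_le.2 ?_
  calc _ ≤ #(range R) := by
        refine Finset.card_le_card_of_injOn (fun r => r.1) ?_ ?_
        · intro r hr
          exact (mem_product.1 (mem_filter.1 hr).1).1
        · intro r hr q hq h
          have h1 : (r.1 : ℤ) - r.2 = 0 := (mem_filter.1 hr).2
          have h2 : (q.1 : ℤ) - q.2 = 0 := (mem_filter.1 hq).2
          simp only at h
          ext <;> omega
    _ = R := card_range R

@[fun_prop]
lemma continuous_Wb (Z Z' : ℕ) (p : ℝ) {α : Type*} [TopologicalSpace α] {u v : α → ℝ}
    (hu : Continuous u) (hv : Continuous v) : Continuous fun x => Wb Z Z' p (u x) (v x) := by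
  unfold Wb ph; fun_prop

@[fun_prop]
lemma continuous_Ws (Z Z' : ℕ) (p : ℝ) {α : Type*} [TopologicalSpace α] {u v : α → ℝ}
    (hu : Continuous u) (hv : Continuous v) : Continuous fun x => Ws Z Z' p (u x) (v x) := by
  unfold Ws ph; fun_prop

lemma continuous_re_e : Continuous fun x => (e x).re := Complex.continuous_re.comp continuous_e

@[fun_prop]
lemma continuous_KR (Z Z' H₁ H₂ : ℕ) {α : Type*} [TopologicalSpace α] {u v : α → ℝ}
    (hu : Continuous u) (hv : Continuous v) : Continuous fun x => KR Z Z' H₁ H₂ (u x) (v x) := by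
  unfold KR ph
  refine continuous_finsetSum _ fun κ _ => continuous_const.mul (continuous_re_e.comp ?_)
  fun_prop

@[fun_prop]
lemma continuous_Br (Z Z' H₁ H₂ : ℕ) (p : ℝ) {α : Type*} [TopologicalSpace α] {u v : α → ℝ}
    (hu : Continuous u) (hv : Continuous v) : Continuous fun x => Br Z Z' H₁ H₂ p (u x) (v x) := by
  unfold Br; fun_prop

/-- The mixed moment `∫∫ |D_R|² |Wb|² KR` counts solutions with `|q₁ - q₂ + q_κ| < R`. -/
lemma integral_dir_Wb_KR (Z Z' : ℕ) (p : ℝ) (H₁ H₂ R : ℕ) (h1Z : H₁ ≤ Z) (h2Z : H₂ ≤ Z) (s : ℝ) :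
    ∫ t in s..(s + 1), ∫ b in (0 : ℝ)..1,
      ‖dir R t‖ ^ 2 * (‖Wb Z Z' p b t‖ ^ 2 * KR Z Z' H₁ H₂ b t) ≤
    R * #{x ∈ (bigBox Z Z' p ×ˢ bigBox Z Z' p) ×ˢ kBox Z Z' H₁ H₂ |
      frN x.1.1 - frN x.1.2 + frN x.2 = 0 ∧ |frQ x.1.1 - frQ x.1.2 + frQ x.2| < R} := by
  set Q := (bigBox Z Z' p ×ˢ bigBox Z Z' p) ×ˢ kBox Z Z' H₁ H₂ with hQ
  set P := (range R ×ˢ range R) ×ˢ Q with hP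
  set m : (ℕ × ℕ) × (((ℤ × ℤ × ℤ) × (ℤ × ℤ × ℤ)) × (ℤ × ℤ × ℤ)) → ℤ :=
    fun y => 3 * (frN y.2.1.1 - frN y.2.1.2 + frN y.2.2) with hm
  set l : (ℕ × ℕ) × (((ℤ × ℤ × ℤ) × (ℤ × ℤ × ℤ)) × (ℤ × ℤ × ℤ)) → ℤ :=
    fun y => y.1.1 - y.1.2 + (frQ y.2.1.1 - frQ y.2.1.2 + frQ y.2.2) with hl
  set w : (ℕ × ℕ) × (((ℤ × ℤ × ℤ) × (ℤ × ℤ × ℤ)) × (ℤ × ℤ × ℤ)) → ℂ :=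
    fun y => ((((H₂ : ℝ) - y.2.2.2.1) / H₂ : ℝ) : ℂ) with hw
  have hw1 : ∀ y ∈ P, ‖w y‖ ≤ 1 := by
    intro y hy
    obtain ⟨-, -, hk1, hk2⟩ := mem_kBox h1Z h2Z (mem_product.1 (mem_product.1 hy).2).2
    have k1 : (1 : ℝ) ≤ y.2.2.2.1 := by exact_mod_cast hk1
    have k2 : (y.2.2.2.1 : ℝ) < H₂ := by exact_mod_cast hk2
    rw [hw, Complex.norm_real, Real.norm_eq_abs, abs_le]
    constructor
    · rw [le_div_iff₀ (by linarith)]; linarith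
    · rw [div_le_one (by linarith)]; linarith
  have h := norm_integral_trig2_le P m l w hw1 s 0
  rw [zero_add] at h
  have hre : ∀ t b : ℝ, (∑ y ∈ P, w y * e (m y * b + l y * t)).re =
      ‖dir R t‖ ^ 2 * (‖Wb Z Z' p b t‖ ^ 2 * KR Z Z' H₁ H₂ b t) := by
    intro t b
    have : ∑ y ∈ P, w y * e (m y * b + l y * t) = ((‖dir R t‖ ^ 2 : ℝ) : ℂ) *
        (((‖Wb Z Z' p b t‖ ^ 2 : ℝ) : ℂ) *
          ∑ κ ∈ kBox Z Z' H₁ H₂, ((((H₂ : ℝ) - κ.2.1) / H₂ : ℝ) : ℂ) * e (ph κ b t)) := by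
      rw [normSq_dir, Wb, normSq_sum_e, Finset.sum_mul_sum, ← Finset.sum_product',
        Finset.sum_mul_sum, ← Finset.sum_product']
      refine Finset.sum_congr rfl fun y _ => ?_
      simp only [hw, hm, hl]
      have : e (((3 * (frN y.2.1.1 - frN y.2.1.2 + frN y.2.2) : ℤ) : ℝ) * b +
          ((y.1.1 - y.1.2 + (frQ y.2.1.1 - frQ y.2.1.2 + frQ y.2.2) : ℤ) : ℝ) * t) =
          e ((y.1.1 - y.1.2) * t) * (e (ph y.2.1.1 b t - ph y.2.1.2 b t) * e (ph y.2.2 b t)) := by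
        rw [← e_add, ← e_add]; congr 1
        simp only [ph]; push_cast; ring
      rw [this]; ring
    rw [this, Complex.re_ofReal_mul, Complex.re_ofReal_mul, KR, Complex.re_sum]
    simp_rw [Complex.re_ofReal_mul]
  have hcont : Continuous fun x : ℝ × ℝ => ∑ y ∈ P, w y * e (m y * x.2 + l y * x.1) := by fun_prop
  have hdirInt : ∫ t in s..(s + 1), ∫ b in (0 : ℝ)..1,
      ‖dir R t‖ ^ 2 * (‖Wb Z Z' p b t‖ ^ 2 * KR Z Z' H₁ H₂ b t) =
      (∫ t in s..(s + 1), ∫ b in (0 : ℝ)..1, ∑ y ∈ P, w y * e (m y * b + l y * t)).re := by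
    have hc2 : Continuous fun t : ℝ => ∫ b in (0 : ℝ)..1, ∑ y ∈ P, w y * e (m y * b + l y * t) :=
      intervalIntegral.continuous_parametric_intervalIntegral_of_continuous' hcont _ _
    have h3 := Complex.reCLM.intervalIntegral_comp_comm (hc2.intervalIntegrable s (s + 1) (μ := volume))
    rw [← Complex.reCLM_apply, ← h3]
    congr 1; ext t
    have hc3 : Continuous fun b : ℝ => ∑ y ∈ P, w y * e (m y * b + l y * t) := by fun_prop
    rw [← Complex.reCLM.intervalIntegral_comp_comm (hc3.intervalIntegrable 0 1 (μ := volume))]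
    congr 1; ext b
    rw [Complex.reCLM_apply, hre]
  rw [hdirInt]
  refine (Complex.re_le_norm _).trans (h.trans ?_)
  norm_cast
  rw [← card_range R, ← Finset.card_product, card_range]
  refine Finset.card_le_card_of_injOn (fun y => (y.1.1, y.2)) ?_ ?_
  · intro y hy
    rw [mem_coe, mem_filter, hP, mem_product, mem_product, mem_range, mem_range] at hy
    rw [mem_coe, mem_product, mem_range, mem_filter]
    simp only [hm, hl] at hy
    refine ⟨hy.1.1.1, hy.1.2, by simp only; omega, ?_⟩
    simp only
    rw [abs_lt]; constructor <;> omega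
  · intro y hy z hz hyz
    have h1 := (mem_filter.1 hy).2.2
    have h2 := (mem_filter.1 hz).2.2
    simp only [Prod.mk.injEq] at hyz
    obtain ⟨⟨r1, r2⟩, x⟩ := y
    obtain ⟨⟨q1, q2⟩, x'⟩ := z
    simp only [hl] at h1 h2 hyz
    obtain ⟨rfl, rfl⟩ := hyz
    simp only [Prod.mk.injEq, and_true, true_and]
    omega

/-! ### Localisation in `t` -/

lemma integral_inv_one_add (c T : ℝ) (hc : 0 < c) (hT : 0 ≤ T) :
    ∫ t in (-T)..T, 1 / (1 + c * |t|) = 2 * (Real.log (1 + c * T) / c) := by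
  have hcont : Continuous fun t : ℝ => 1 / (1 + c * |t|) := by
    refine continuous_const.div (by fun_prop) fun t => ?_
    positivity
  have hpos : ∫ t in (0 : ℝ)..T, 1 / (1 + c * |t|) = Real.log (1 + c * T) / c := by
    have h1 : ∀ t ∈ Set.uIcc 0 T, HasDerivAt (fun t => Real.log (1 + c * t) / c) (1 / (1 + c * |t|)) t := by
      intro t ht
      rw [Set.uIcc_of_le hT] at ht
      rw [abs_of_nonneg ht.1]
      have hne : 1 + c * t ≠ 0 := by have := ht.1; positivity
      have h2 : HasDerivAt (fun t => 1 + c * t) c t := by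
        simpa using ((hasDerivAt_id t).const_mul c).const_add 1
      have h3 := (h2.log hne).div_const c
      have h4 : 1 / (1 + c * t) = c / (1 + c * t) / c := by field_simp
      rw [h4]
      exact h3
    rw [intervalIntegral.integral_eq_sub_of_hasDerivAt h1 (hcont.intervalIntegrable _ _)]
    simp
  have hneg : ∫ t in (-T)..0, 1 / (1 + c * |t|) = Real.log (1 + c * T) / c := by
    rw [← hpos]
    have := intervalIntegral.integral_comp_neg (a := -T) (b := 0) (fun t : ℝ => 1 / (1 + c * |t|))
    simpa [abs_neg] using this
  rw [← intervalIntegral.integral_add_adjacent_intervals (hcont.intervalIntegrable (-T) 0)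
    (hcont.intervalIntegrable 0 T), hpos, hneg]
  ring

/-- Localisation: a nonnegative function on a short interval is dominated on average by its
product with the squared Dirichlet kernel. -/
lemma integral_le_dir (R : ℕ) (hR : 1 ≤ R) (T : ℝ) (hT : 0 ≤ T) (hRT : 16 * R * T ≤ 1) (Y : ℝ → ℝ)
    (hY : Continuous Y) (hY0 : ∀ t, 0 ≤ Y t) :
    ∫ t in (-T)..T, Y t ≤ 4 / (R : ℝ) ^ 2 * ∫ t in (-(1 / 2) : ℝ)..(-(1 / 2) + 1), ‖dir R t‖ ^ 2 * Y t := by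
  have hR0 : (1 : ℝ) ≤ R := by exact_mod_cast hR
  have hT2 : T ≤ 1 / 2 := by nlinarith
  have hc : Continuous fun t => ‖dir R t‖ ^ 2 * Y t := by fun_prop
  have h1 : ∫ t in (-T)..T, Y t ≤ ∫ t in (-T)..T, 4 / (R : ℝ) ^ 2 * (‖dir R t‖ ^ 2 * Y t) := by
    refine intervalIntegral.integral_mono_on (by linarith) (hY.intervalIntegrable _ _)
      ((hc.const_mul _).intervalIntegrable _ _) fun t ht => ?_
    have ht' : |t| ≤ T := abs_le.2 ht
    have h2 := half_le_norm_dir R t (by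
      calc 16 * R * |t| ≤ 16 * R * T := by gcongr
        _ ≤ 1 := hRT)
    have h3 : ((R : ℝ) / 2) ^ 2 ≤ ‖dir R t‖ ^ 2 := by gcongr
    calc Y t = 4 / (R : ℝ) ^ 2 * (((R : ℝ) / 2) ^ 2 * Y t) := by field_simp; ring
      _ ≤ _ := by gcongr; exact hY0 t
  refine h1.trans ?_
  rw [intervalIntegral.integral_const_mul]
  gcongr
  refine intervalIntegral.integral_mono_interval (by linarith) (by linarith) (by linarith) ?_
    (hc.intervalIntegrable _ _)
  exact Filter.Eventually.of_forall fun t => mul_nonneg (by positivity) (hY0 t)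

/-- The main term: the constant part of `Br` leads to a count of pairs with equal `n`, the part
with `KR` to the count of `card_triples`. -/
lemma integral_Wb_Br (Z Z' : ℕ) (hZ1 : 1 ≤ Z) (hZ : Z' ≤ 2 * Z) (p V : ℝ) (hp : 1 ≤ p)
    (hV0 : 0 ≤ V) (hV : DivBound Z V) (H₁ H₂ R : ℕ) (h1 : 1 ≤ H₁) (h2 : 1 ≤ H₂)
    (h1Z : H₁ ≤ Z) (h2Z : H₂ ≤ Z)
    (hp1 : p ^ 2 ≤ H₁) (hp2 : p ^ 4 ≤ H₂) (hH : H₁ * H₂ ≤ 4 * Z) (hR : R ≤ Z ^ 4) (hR1 : 1 ≤ R)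
    (T : ℝ) (hT : 0 ≤ T) (hRT : 16 * R * T ≤ 1) :
    ∫ t in (-T)..T, ∫ b in (0 : ℝ)..1, ‖Wb Z Z' p b t‖ ^ 2 * Br Z Z' H₁ H₂ p b t ≤
      4 / (R : ℝ) ^ 2 * (72 * (Z : ℝ) ^ 4 / p ^ 4 * (R * (9 * (Z : ℝ) ^ 3 * V ^ 2)) +
        128 * (Z : ℝ) ^ 3 / (H₁ * H₂) * (R * (27 * 354 ^ 2 * ((Z : ℝ) ^ 4 * p ^ 2) * V ^ 2))) := by
  have hp0 : 0 < p := by linarith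
  have hBr0 : ∀ b t, 0 ≤ Br Z Z' H₁ H₂ p b t := fun b t =>
    (by positivity : (0 : ℝ) ≤ ‖F Z Z' 0 b t‖ ^ 4).trans
      (F_pow_four_le_Br Z Z' hZ p hp0 0 b t H₁ H₂ h1 h2 h1Z h2Z hp1 hp2)
  have hY : Continuous fun t : ℝ => ∫ b in (0 : ℝ)..1, ‖Wb Z Z' p b t‖ ^ 2 * Br Z Z' H₁ H₂ p b t :=
    intervalIntegral.continuous_parametric_intervalIntegral_of_continuous'
      (f := fun t b => ‖Wb Z Z' p b t‖ ^ 2 * Br Z Z' H₁ H₂ p b t)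
      (by unfold Function.uncurry; fun_prop) _ _
  refine (integral_le_dir R hR1 T hT hRT _ hY fun t =>
    intervalIntegral.integral_nonneg (by norm_num) fun b _ =>
      mul_nonneg (by positivity) (hBr0 b t)).trans ?_
  gcongr
  -- split `Br` into its constant part and the part with `KR`
  have c1 : Continuous fun t : ℝ => ∫ b in (0 : ℝ)..1, ‖Wb Z Z' p b t‖ ^ 2 :=
    intervalIntegral.continuous_parametric_intervalIntegral_of_continuous'
      (f := fun t b => ‖Wb Z Z' p b t‖ ^ 2) (by unfold Function.uncurry; fun_prop) _ _
  have c2 : Continuous fun t : ℝ => ∫ b in (0 : ℝ)..1,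
      ‖dir R t‖ ^ 2 * (‖Wb Z Z' p b t‖ ^ 2 * KR Z Z' H₁ H₂ b t) :=
    intervalIntegral.continuous_parametric_intervalIntegral_of_continuous'
      (f := fun t b => ‖dir R t‖ ^ 2 * (‖Wb Z Z' p b t‖ ^ 2 * KR Z Z' H₁ H₂ b t))
      (by unfold Function.uncurry; fun_prop) _ _
  set A := 72 * (Z : ℝ) ^ 4 / p ^ 4
  set D := 128 * (Z : ℝ) ^ 3 / (H₁ * H₂)
  have hA : 0 ≤ A := by positivity
  have hD : 0 ≤ D := by positivity
  have hsplit : ∀ t : ℝ, ‖dir R t‖ ^ 2 * ∫ b in (0 : ℝ)..1, ‖Wb Z Z' p b t‖ ^ 2 * Br Z Z' H₁ H₂ p b t =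
      A * (‖dir R t‖ ^ 2 * ∫ b in (0 : ℝ)..1, ‖Wb Z Z' p b t‖ ^ 2) +
      D * ∫ b in (0 : ℝ)..1, ‖dir R t‖ ^ 2 * (‖Wb Z Z' p b t‖ ^ 2 * KR Z Z' H₁ H₂ b t) := by
    intro t
    rw [← intervalIntegral.integral_const_mul, ← intervalIntegral.integral_const_mul,
      ← intervalIntegral.integral_const_mul, ← intervalIntegral.integral_const_mul,
      ← intervalIntegral.integral_add (Continuous.intervalIntegrable (by fun_prop) _ _)
        (Continuous.intervalIntegrable (by fun_prop) _ _)]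
    congr 1; ext b
    rw [Br]; ring
  simp_rw [hsplit]
  rw [intervalIntegral.integral_add (Continuous.intervalIntegrable (by fun_prop) _ _)
        (Continuous.intervalIntegrable (by fun_prop) _ _), intervalIntegral.integral_const_mul,
        intervalIntegral.integral_const_mul]
  have i1 : ∫ t in (-(1 / 2) : ℝ)..(-(1 / 2) + 1), ‖dir R t‖ ^ 2 * ∫ b in (0 : ℝ)..1, ‖Wb Z Z' p b t‖ ^ 2 ≤
      R * (9 * (Z : ℝ) ^ 3 * V ^ 2) := by
    calc _ ≤ ∫ t in (-(1 / 2) : ℝ)..(-(1 / 2) + 1), ‖dir R t‖ ^ 2 * (9 * (Z : ℝ) ^ 3 * V ^ 2) := by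
          refine intervalIntegral.integral_mono_on (by norm_num)
            (Continuous.intervalIntegrable (by fun_prop) _ _)
            (Continuous.intervalIntegrable (by fun_prop) _ _) fun t _ => ?_
          gcongr
          exact (integral_normSq_ph_le _ t).trans (pairs_big_le Z Z' hZ1 hZ p V hV0 hV)
      _ = (∫ t in (-(1 / 2) : ℝ)..(-(1 / 2) + 1), ‖dir R t‖ ^ 2) * (9 * (Z : ℝ) ^ 3 * V ^ 2) :=
          intervalIntegral.integral_mul_const _ _
      _ ≤ _ := by gcongr; exact integral_dir R _
  have i2 := (integral_dir_Wb_KR Z Z' p H₁ H₂ R h1Z h2Z (-(1 / 2))).trans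
    (mul_le_mul_of_nonneg_left (card_triples Z Z' hZ1 hZ p V hp hV0 hV H₁ H₂ R h1Z h2Z hH hR)
      (Nat.cast_nonneg R))
  gcongr

/-! ### The mean value near `t = 0` -/

/-- The moment over all of `a, b ∈ [0,1]`, as a function of `t`. -/
noncomputable def G20 (Z Z' : ℕ) (t : ℝ) : ℝ := ∫ b in (0 : ℝ)..1, J20 Z Z' b t

@[fun_prop]
lemma continuous_G20 (Z Z' : ℕ) : Continuous (G20 Z Z') :=
  intervalIntegral.continuous_parametric_intervalIntegral_of_continuous'
    (f := fun t b => J20 Z Z' b t) (by unfold Function.uncurry; fun_prop) _ _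

lemma one_le_p {Z : ℕ} (hZ1 : 1 ≤ Z) {p : ℝ} (hp : 0 < p) (hpZ : p ^ 6 = Z) : 1 ≤ p := by
  by_contra hlt
  push Not at hlt
  have : p ^ 6 < 1 := pow_lt_one₀ hp.le hlt (by norm_num)
  have : (1 : ℝ) ≤ Z := by exact_mod_cast hZ1
  linarith

set_option maxHeartbeats 1000000 in
/-- The bound of `master` averaged over `b`, with the mean squares of `Wb` and `Ws` replaced by
counts of pairs with equal `n`. -/
lemma G20_le (Z Z' : ℕ) (hZ1 : 1000 ≤ Z) (hZ : Z' ≤ 2 * Z) (p V : ℝ) (hp : 0 < p)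
    (hpZ : p ^ 6 = Z) (hV1 : 1 ≤ V) (hV : DivBound Z V) (t : ℝ) (htp : |t| ≤ 4 / p ^ 20)
    (H₁ H₂ : ℕ) (h1 : 1 ≤ H₁) (h2 : 1 ≤ H₂) (h1Z : H₁ ≤ Z) (h2Z : H₂ ≤ Z)
    (hp1 : p ^ 2 ≤ H₁) (hp2 : p ^ 4 ≤ H₂) :
    G20 Z Z' t ≤ 10 ^ 18 * ((Z : ℝ) ^ 14 +
      (Z : ℝ) ^ 13 * (12 * (Z : ℝ) ^ 3 * V ^ 4) * (1 / (1 + (Z : ℝ) ^ 5 * |t|)) +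
      p ^ 69 * (3 * ((Z : ℝ) ^ 3 / p) * V ^ 4) +
      (Z : ℝ) ^ 8 * ∫ b in (0 : ℝ)..1, ‖Wb Z Z' p b t‖ ^ 2 * Br Z Z' H₁ H₂ p b t) := by
  have hZ1' : 1 ≤ Z := by omega
  have hp1' := one_le_p hZ1' hp hpZ
  have hV0 : 0 ≤ V := by linarith
  have hpZ3 : p ≤ (Z : ℝ) ^ 3 := by
    rw [← hpZ, ← pow_mul]
    exact le_self_pow₀ hp1' (by norm_num)
  have hb := (integral_normSq_ph_le _ t).trans (pairs_big_le Z Z' hZ1' hZ p V hV0 hV)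
  have hs := (integral_normSq_ph_le _ t).trans (pairs_small_le Z Z' hZ1' hZ p V hp hpZ3 hV0 hV)
  have hb' : ∫ b in (0 : ℝ)..1, ‖Wb Z Z' p b t‖ ^ 2 ≤ 9 * (Z : ℝ) ^ 3 * V ^ 2 := hb
  have hs' : ∫ b in (0 : ℝ)..1, ‖Ws Z Z' p b t‖ ^ 2 ≤ 3 * ((Z : ℝ) ^ 3 / p) * V ^ 4 := hs
  have hV24 : V ^ 2 ≤ V ^ 4 := pow_le_pow_right₀ hV1 (by norm_num)
  have hdiv : (Z : ℝ) ^ 3 / p ≤ (Z : ℝ) ^ 3 := div_le_self (by positivity) hp1'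
  have hsum : (∫ b in (0 : ℝ)..1, ‖Ws Z Z' p b t‖ ^ 2) + (∫ b in (0 : ℝ)..1, ‖Wb Z Z' p b t‖ ^ 2) ≤
      12 * (Z : ℝ) ^ 3 * V ^ 4 := by
    have e1 : 9 * (Z : ℝ) ^ 3 * V ^ 2 ≤ 9 * (Z : ℝ) ^ 3 * V ^ 4 := by gcongr
    have e2 : 3 * ((Z : ℝ) ^ 3 / p) * V ^ 4 ≤ 3 * (Z : ℝ) ^ 3 * V ^ 4 := by gcongr
    linarith
  have ii : ∀ {g : ℝ → ℝ}, Continuous g → IntervalIntegrable g volume 0 1 :=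
    fun hg => hg.intervalIntegrable _ _
  calc G20 Z Z' t ≤ ∫ b in (0 : ℝ)..1, 10 ^ 18 * ((Z : ℝ) ^ 14 +
      (Z : ℝ) ^ 13 / (1 + (Z : ℝ) ^ 5 * |t|) * (‖Ws Z Z' p b t‖ ^ 2 + ‖Wb Z Z' p b t‖ ^ 2) +
      p ^ 69 * ‖Ws Z Z' p b t‖ ^ 2 +
      (Z : ℝ) ^ 8 * (‖Wb Z Z' p b t‖ ^ 2 * Br Z Z' H₁ H₂ p b t)) := by
        refine intervalIntegral.integral_mono_on (by norm_num) (ii (by fun_prop))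
          (ii (by fun_prop)) fun b _ => ?_
        exact master Z Z' hZ1 hZ p hp hpZ b t htp H₁ H₂ h1 h2 h1Z h2Z hp1 hp2
    _ = 10 ^ 18 * ((Z : ℝ) ^ 14 +
      (Z : ℝ) ^ 13 / (1 + (Z : ℝ) ^ 5 * |t|) * ((∫ b in (0 : ℝ)..1, ‖Ws Z Z' p b t‖ ^ 2) +
        ∫ b in (0 : ℝ)..1, ‖Wb Z Z' p b t‖ ^ 2) +
      p ^ 69 * (∫ b in (0 : ℝ)..1, ‖Ws Z Z' p b t‖ ^ 2) +
      (Z : ℝ) ^ 8 * ∫ b in (0 : ℝ)..1, ‖Wb Z Z' p b t‖ ^ 2 * Br Z Z' H₁ H₂ p b t) := by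
        rw [intervalIntegral.integral_const_mul, intervalIntegral.integral_add (ii (by fun_prop))
          (ii (by fun_prop)), intervalIntegral.integral_add (ii (by fun_prop))
          (ii (by fun_prop)), intervalIntegral.integral_add (ii (by fun_prop))
          (ii (by fun_prop)), intervalIntegral.integral_const_mul,
          intervalIntegral.integral_const_mul, intervalIntegral.integral_const_mul,
          intervalIntegral.integral_add (ii (by fun_prop)) (ii (by fun_prop))]
        simp
    _ ≤ _ := by
        have e1 : (Z : ℝ) ^ 13 / (1 + (Z : ℝ) ^ 5 * |t|) * ((∫ b in (0 : ℝ)..1, ‖Ws Z Z' p b t‖ ^ 2) +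
            ∫ b in (0 : ℝ)..1, ‖Wb Z Z' p b t‖ ^ 2) ≤
            (Z : ℝ) ^ 13 * (12 * (Z : ℝ) ^ 3 * V ^ 4) * (1 / (1 + (Z : ℝ) ^ 5 * |t|)) := by
          calc _ ≤ (Z : ℝ) ^ 13 / (1 + (Z : ℝ) ^ 5 * |t|) * (12 * (Z : ℝ) ^ 3 * V ^ 4) := by gcongr
            _ = _ := by ring
        have e2 : p ^ 69 * (∫ b in (0 : ℝ)..1, ‖Ws Z Z' p b t‖ ^ 2) ≤
            p ^ 69 * (3 * ((Z : ℝ) ^ 3 / p) * V ^ 4) := by gcongr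
        linarith

set_option maxHeartbeats 1000000 in
/-- The mean value over a neighbourhood of `t = 0`. -/
lemma integral_G20_zero (Z Z' : ℕ) (hZ1 : 1000 ≤ Z) (hZ : Z' ≤ 2 * Z) (p V : ℝ) (hp : 0 < p)
    (hpZ : p ^ 6 = Z) (hV1 : 1 ≤ V) (hV : DivBound Z V) (T : ℝ) (hT : 0 ≤ T)
    (hTp : T ≤ 4 / p ^ 20) :
    ∫ t in (-T)..T, G20 Z Z' t ≤
      10 ^ 30 * (Z : ℝ) ^ 11 * V ^ 4 * (1 + Real.log (1 + 4 * (Z : ℝ) ^ 5)) := by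
  have hZ1' : 1 ≤ Z := by omega
  have hp1 := one_le_p hZ1' hp hpZ
  have hV0 : 0 ≤ V := by linarith
  have hZr : (1000 : ℝ) ≤ Z := by exact_mod_cast hZ1
  have hZ0 : (0 : ℝ) < Z := by linarith
  have hp3 : 3 ≤ p := by
    by_contra hlt
    push Not at hlt
    have : p ^ 6 ≤ 3 ^ 6 := by gcongr
    norm_num at this
    linarith
  have hp2' : 9 ≤ p ^ 2 := by nlinarith
  -- `H₁ ≈ Z^{1/3}` and `H₂ ≈ Z^{2/3}` balance the two van der Corput steps, and `R ≈ 1/T`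
  set H₁ := ⌈p ^ 2⌉₊ with hH1
  set H₂ := ⌈p ^ 4⌉₊ with hH2
  set R := ⌊p ^ 20 / 64⌋₊ with hRdef
  have a1 : p ^ 2 ≤ H₁ := Nat.le_ceil _
  have a2 : p ^ 4 ≤ H₂ := Nat.le_ceil _
  have b1 : (H₁ : ℝ) ≤ 2 * p ^ 2 := by
    have := Nat.ceil_lt_add_one (show 0 ≤ p ^ 2 by positivity)
    rw [← hH1] at this; linarith
  have hp4 : 81 ≤ p ^ 4 := by nlinarith
  have b2 : (H₂ : ℝ) ≤ 2 * p ^ 4 := by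
    have := Nat.ceil_lt_add_one (show 0 ≤ p ^ 4 by positivity)
    rw [← hH2] at this; linarith
  have c1 : 1 ≤ H₁ := by
    have : (1 : ℝ) ≤ H₁ := by linarith
    exact_mod_cast this
  have c2 : 1 ≤ H₂ := by
    have : (1 : ℝ) ≤ H₂ := by linarith
    exact_mod_cast this
  have d1 : H₁ ≤ Z := by
    have : (H₁ : ℝ) ≤ Z := by
      rw [← hpZ]
      calc (H₁ : ℝ) ≤ 2 * p ^ 2 := b1
        _ ≤ p ^ 4 * p ^ 2 := by gcongr; linarith
        _ = _ := by ring
    exact_mod_cast this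
  have d2 : H₂ ≤ Z := by
    have : (H₂ : ℝ) ≤ Z := by
      rw [← hpZ]
      calc (H₂ : ℝ) ≤ 2 * p ^ 4 := b2
        _ ≤ p ^ 2 * p ^ 4 := by gcongr; linarith
        _ = _ := by ring
    exact_mod_cast this
  have hH : H₁ * H₂ ≤ 4 * Z := by
    have : (H₁ : ℝ) * H₂ ≤ 4 * Z := by
      rw [← hpZ]
      calc (H₁ : ℝ) * H₂ ≤ (2 * p ^ 2) * (2 * p ^ 4) := by gcongr
        _ = _ := by ring
    exact_mod_cast this
  have hHl : (Z : ℝ) ≤ H₁ * H₂ := by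
    rw [← hpZ]
    calc p ^ 6 = p ^ 2 * p ^ 4 := by ring
      _ ≤ _ := by gcongr
  have hp20 : (128 : ℝ) ≤ p ^ 20 := by
    calc (128 : ℝ) ≤ 3 ^ 20 := by norm_num
      _ ≤ _ := by gcongr
  have r1 : (R : ℝ) ≤ p ^ 20 / 64 := Nat.floor_le (by positivity)
  have r2 : p ^ 20 / 128 ≤ R := by
    have := Nat.lt_floor_add_one (p ^ 20 / 64)
    rw [← hRdef] at this; linarith
  have hR1 : 1 ≤ R := by
    have : (1 : ℝ) ≤ R := by linarith
    exact_mod_cast this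
  have hRZ : R ≤ Z ^ 4 := by
    have : (R : ℝ) ≤ (Z : ℝ) ^ 4 := by
      rw [← hpZ]
      calc (R : ℝ) ≤ p ^ 20 / 64 := r1
        _ ≤ p ^ 20 := div_le_self (by positivity) (by norm_num)
        _ ≤ p ^ 24 := pow_le_pow_right₀ hp1 (by norm_num)
        _ = _ := by ring
    exact_mod_cast this
  have hRT : 16 * R * T ≤ 1 := by
    calc 16 * R * T ≤ 16 * (p ^ 20 / 64) * (4 / p ^ 20) := by gcongr
      _ = 1 := by field_simp; norm_num
  have hY := integral_Wb_Br Z Z' hZ1' hZ p V hp1 hV0 hV H₁ H₂ R c1 c2 d1 d2 a1 a2 hH hRZ hR1 T hT hRT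
  set Y : ℝ → ℝ := fun t => ∫ b in (0 : ℝ)..1, ‖Wb Z Z' p b t‖ ^ 2 * Br Z Z' H₁ H₂ p b t with hYdef
  have cY : Continuous Y := intervalIntegral.continuous_parametric_intervalIntegral_of_continuous'
      (f := fun t b => ‖Wb Z Z' p b t‖ ^ 2 * Br Z Z' H₁ H₂ p b t)
      (by unfold Function.uncurry; fun_prop) _ _
  have cI : Continuous fun t : ℝ => 1 / (1 + (Z : ℝ) ^ 5 * |t|) := by
    refine continuous_const.div (by fun_prop) fun t => ?_
    positivity
  have ii : ∀ {g : ℝ → ℝ}, Continuous g → IntervalIntegrable g volume (-T) T :=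
    fun hg => hg.intervalIntegrable _ _
  set L := Real.log (1 + 4 * (Z : ℝ) ^ 5) with hL
  have hL0 : 0 ≤ L := Real.log_nonneg (by have : 0 ≤ (Z : ℝ) ^ 5 := by positivity
                                          linarith)
  have hlog : Real.log (1 + (Z : ℝ) ^ 5 * T) ≤ L := by
    apply Real.log_le_log (by positivity)
    have : T ≤ 4 := hTp.trans (div_le_self (by norm_num) (one_le_pow₀ hp1))
    have : (Z : ℝ) ^ 5 * T ≤ (Z : ℝ) ^ 5 * 4 := by gcongr
    linarith
  have hmain : ∫ t in (-T)..T, G20 Z Z' t ≤ 10 ^ 18 * ((2 * T) * (Z : ℝ) ^ 14 +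
      (Z : ℝ) ^ 13 * (12 * (Z : ℝ) ^ 3 * V ^ 4) * (2 * (Real.log (1 + (Z : ℝ) ^ 5 * T) / (Z : ℝ) ^ 5)) +
      (2 * T) * (p ^ 69 * (3 * ((Z : ℝ) ^ 3 / p) * V ^ 4)) +
      (Z : ℝ) ^ 8 * ∫ t in (-T)..T, Y t) := by
    rw [← integral_inv_one_add _ T (by positivity) hT]
    calc _ ≤ ∫ t in (-T)..T, 10 ^ 18 * ((Z : ℝ) ^ 14 +
        (Z : ℝ) ^ 13 * (12 * (Z : ℝ) ^ 3 * V ^ 4) * (1 / (1 + (Z : ℝ) ^ 5 * |t|)) +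
        p ^ 69 * (3 * ((Z : ℝ) ^ 3 / p) * V ^ 4) + (Z : ℝ) ^ 8 * Y t) := by
          refine intervalIntegral.integral_mono_on (by linarith) (ii (by fun_prop))
            (ii (by fun_prop)) fun t ht => ?_
          exact G20_le Z Z' hZ1 hZ p V hp hpZ hV1 hV t ((abs_le.2 ht).trans hTp) H₁ H₂ c1 c2 d1 d2 a1 a2
      _ = _ := by
          rw [intervalIntegral.integral_const_mul, intervalIntegral.integral_add (ii (by fun_prop))
            (ii (by fun_prop)), intervalIntegral.integral_add (ii (by fun_prop))
            (ii (by fun_prop)), intervalIntegral.integral_add (ii (by fun_prop))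
            (ii (by fun_prop)), intervalIntegral.integral_const_mul ((Z : ℝ) ^ 8) Y, intervalIntegral.integral_const,
            intervalIntegral.integral_const_mul ((Z : ℝ) ^ 13 * (12 * (Z : ℝ) ^ 3 * V ^ 4)),
            intervalIntegral.integral_const, smul_eq_mul, smul_eq_mul]
          ring
  refine hmain.trans ?_
  have hZ11 : (Z : ℝ) ^ 11 = p ^ 66 := by rw [← hpZ]; ring
  have hV2 : 1 ≤ V ^ 4 := one_le_pow₀ hV1
  have hV24 : V ^ 2 ≤ V ^ 4 := pow_le_pow_right₀ hV1 (by norm_num)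
  set A := (Z : ℝ) ^ 11 * V ^ 4 with hA
  have hA0 : 0 ≤ A := by positivity
  have t1 : (2 * T) * (Z : ℝ) ^ 14 ≤ 8 * A := by
    calc (2 * T) * (Z : ℝ) ^ 14 ≤ (2 * (4 / p ^ 20)) * (Z : ℝ) ^ 14 := by gcongr
      _ = 8 * p ^ 64 := by rw [← hpZ]; field_simp; ring
      _ ≤ 8 * p ^ 66 * 1 := by
          rw [mul_one]; gcongr; norm_num
      _ ≤ 8 * p ^ 66 * V ^ 4 := by gcongr
      _ = _ := by rw [hA, hZ11]; ring
  have t2 : (Z : ℝ) ^ 13 * (12 * (Z : ℝ) ^ 3 * V ^ 4) * (2 * (Real.log (1 + (Z : ℝ) ^ 5 * T) / (Z : ℝ) ^ 5))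
      ≤ 24 * A * L := by
    calc _ ≤ (Z : ℝ) ^ 13 * (12 * (Z : ℝ) ^ 3 * V ^ 4) * (2 * (L / (Z : ℝ) ^ 5)) := by gcongr
      _ = _ := by rw [hA]; field_simp; ring
  have t3 : (2 * T) * (p ^ 69 * (3 * ((Z : ℝ) ^ 3 / p) * V ^ 4)) ≤ 24 * A := by
    calc _ ≤ (2 * (4 / p ^ 20)) * (p ^ 69 * (3 * ((Z : ℝ) ^ 3 / p) * V ^ 4)) := by gcongr
      _ = 24 * (p ^ 66 * V ^ 4) := by rw [← hpZ]; field_simp; ring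
      _ = _ := by rw [hA, hZ11]
  have hR0 : (0 : ℝ) < R := by exact_mod_cast hR1
  have hRi : 4 / (R : ℝ) ^ 2 * R ≤ 512 / p ^ 20 := by
    have : 4 / (R : ℝ) ^ 2 * R = 4 / R := by field_simp
    rw [this, div_le_div_iff₀ hR0 (by positivity)]
    linarith
  have hHi : 128 * (Z : ℝ) ^ 3 / (H₁ * H₂) ≤ 128 * (Z : ℝ) ^ 2 := by
    rw [div_le_iff₀ (by positivity)]
    calc 128 * (Z : ℝ) ^ 3 = 128 * (Z : ℝ) ^ 2 * Z := by ring
      _ ≤ _ := by gcongr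
  have t4 : (Z : ℝ) ^ 8 * ∫ t in (-T)..T, Y t ≤ 10 ^ 12 / 2 * A := by
    calc (Z : ℝ) ^ 8 * ∫ t in (-T)..T, Y t ≤ (Z : ℝ) ^ 8 * (4 / (R : ℝ) ^ 2 *
        (72 * (Z : ℝ) ^ 4 / p ^ 4 * (R * (9 * (Z : ℝ) ^ 3 * V ^ 2)) +
        128 * (Z : ℝ) ^ 3 / (H₁ * H₂) * (R * (27 * 354 ^ 2 * ((Z : ℝ) ^ 4 * p ^ 2) * V ^ 2)))) := by
          gcongr
      _ = (Z : ℝ) ^ 8 * ((4 / (R : ℝ) ^ 2 * R) *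
        (72 * (Z : ℝ) ^ 4 / p ^ 4 * (9 * (Z : ℝ) ^ 3 * V ^ 2) +
        128 * (Z : ℝ) ^ 3 / (H₁ * H₂) * (27 * 354 ^ 2 * ((Z : ℝ) ^ 4 * p ^ 2) * V ^ 2))) := by ring
      _ ≤ (Z : ℝ) ^ 8 * ((512 / p ^ 20) *
        (72 * (Z : ℝ) ^ 4 / p ^ 4 * (9 * (Z : ℝ) ^ 3 * V ^ 4) +
        128 * (Z : ℝ) ^ 2 * (27 * 354 ^ 2 * ((Z : ℝ) ^ 4 * p ^ 2) * V ^ 4))) := by gcongr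
      _ = (512 * 72 * 9 + 512 * 128 * 27 * 354 ^ 2) * (p ^ 66 * V ^ 4) := by
          rw [← hpZ]; field_simp
      _ = (512 * 72 * 9 + 512 * 128 * 27 * 354 ^ 2) * A := by rw [hA, hZ11]
      _ ≤ _ := by gcongr; norm_num
  have hAL : 0 ≤ A * L := by positivity
  calc _ ≤ 10 ^ 18 * (8 * A + 24 * A * L + 24 * A + 10 ^ 12 / 2 * A) := by
        gcongr
    _ ≤ 10 ^ 18 * (10 ^ 12 * (A + A * L)) := by
        have : 8 * A + 24 * A * L + 24 * A + 10 ^ 12 / 2 * A ≤ 10 ^ 12 * (A + A * L) := by nlinarith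
        gcongr
    _ = _ := by rw [hA]; ring

/-! ### Shifting the centre of the interval -/

lemma integral_e_conj (q S : ℝ) (hS : 0 ≤ S) :
    ∫ v in (-S)..S, e (q * -v) = (starRingEnd ℂ) (∫ u in (-S)..S, e (q * u)) := by
  rw [intervalIntegral.integral_of_le (by linarith), intervalIntegral.integral_of_le (by linarith),
    ← integral_conj]
  congr 1; ext v
  rw [conj_e]; congr 1; ring

/-- For a nonnegative trigonometric polynomial with nonnegative coefficients, the integral over an
interval is controlled by the integral over a longer interval around `0`: the convolution of `g`
with two copies of the indicator of `[-2 T, 2 T]` has nonnegative Fourier coefficients, so it is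
largest at `0`. -/
lemma integral_shift_le {ι : Type*} (P : Finset ι) (Q : ι → ℝ) (g : ℝ → ℝ)
    (hg : ∀ t, (g t : ℂ) = ∑ i ∈ P, e (Q i * t)) (hc : Continuous g) (hg0 : ∀ t, 0 ≤ g t)
    (c T : ℝ) (hT : 0 ≤ T) :
    ∫ t in (c - T)..(c + T), g t ≤ 2 * ∫ t in (-(4 * T))..(4 * T), g t := by
  rcases hT.eq_or_lt with h0 | hT
  · rw [← h0]; simp
  set S := 2 * T with hS
  have hS0 : 0 ≤ S := by linarith
  set Φ : ℝ → ℝ := fun c => ∫ v in (-S)..S, ∫ u in (-S)..S, g (c + u - v) with hΦ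
  have hΦe : ∀ c, (Φ c : ℂ) = ∑ i ∈ P, e (Q i * c) * ((‖∫ u in (-S)..S, e (Q i * u)‖ ^ 2 : ℝ) : ℂ) := by
    intro c
    simp only [hΦ]
    rw [← intervalIntegral.integral_ofReal]
    have h1 : ∀ v : ℝ, ((∫ u in (-S)..S, g (c + u - v) : ℝ) : ℂ) =
        ∑ i ∈ P, (e (Q i * c) * ∫ u in (-S)..S, e (Q i * u)) * e (Q i * -v) := by
      intro v
      rw [← intervalIntegral.integral_ofReal]
      simp_rw [hg]
      rw [intervalIntegral.integral_finsetSum fun i _ => Continuous.intervalIntegrable (by fun_prop) _ _]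
      refine Finset.sum_congr rfl fun i _ => ?_
      rw [mul_right_comm, ← intervalIntegral.integral_const_mul]
      congr 1; ext u
      rw [← e_add, ← e_add]; congr 1; ring
    simp_rw [h1]
    rw [intervalIntegral.integral_finsetSum fun i _ => Continuous.intervalIntegrable (by fun_prop) _ _]
    refine Finset.sum_congr rfl fun i _ => ?_
    rw [intervalIntegral.integral_const_mul, integral_e_conj _ _ hS0, mul_assoc, Complex.mul_conj']
    push_cast; rfl
  have hle : Φ c ≤ Φ 0 := by
    have h0 : Φ 0 = ∑ i ∈ P, ‖∫ u in (-S)..S, e (Q i * u)‖ ^ 2 := by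
      have := hΦe 0
      simp only [mul_zero, e_zero, one_mul] at this
      exact_mod_cast this
    have h1 : ‖(Φ c : ℂ)‖ ≤ Φ 0 := by
      rw [hΦe c, h0]
      refine (norm_sum_le _ _).trans (Finset.sum_le_sum fun i _ => ?_)
      rw [norm_mul, norm_e, one_mul, Complex.norm_real, Real.norm_of_nonneg (by positivity)]
    rw [Complex.norm_real] at h1
    exact (Real.le_norm_self _).trans h1
  have hsub : ∀ c v : ℝ, ∫ u in (-S)..S, g (c + u - v) = ∫ x in (c - v - S)..(c - v + S), g x := by
    intro c v
    have := intervalIntegral.integral_comp_add_right (a := -S) (b := S) g (c - v)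
    rw [show c - v - S = -S + (c - v) by ring, show c - v + S = S + (c - v) by ring, ← this]
    congr 1; ext u; congr 1; ring
  have hcin : ∀ c, Continuous fun v : ℝ => ∫ u in (-S)..S, g (c + u - v) := fun c =>
    intervalIntegral.continuous_parametric_intervalIntegral_of_continuous'
      (f := fun v u => g (c + u - v)) (by unfold Function.uncurry; fun_prop) _ _
  have hpos : ∀ a b : ℝ, 0 ≤ᵐ[volume.restrict (Set.Ioc a b)] g := fun a b =>
    Filter.Eventually.of_forall hg0
  have hlow : S * ∫ t in (c - T)..(c + T), g t ≤ Φ c := by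
    calc S * ∫ t in (c - T)..(c + T), g t = ∫ v in (-T)..T, ∫ t in (c - T)..(c + T), g t := by
          rw [intervalIntegral.integral_const, smul_eq_mul, hS]; ring
      _ ≤ ∫ v in (-T)..T, ∫ u in (-S)..S, g (c + u - v) := by
          refine intervalIntegral.integral_mono_on (by linarith)
            (continuous_const.intervalIntegrable _ _) ((hcin c).intervalIntegrable _ _) fun v hv => ?_
          rw [hsub]
          exact intervalIntegral.integral_mono_interval (by linarith [hv.1]) (by linarith)
            (by linarith [hv.2]) (hpos _ _) (hc.intervalIntegrable _ _)
      _ ≤ Φ c := by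
          refine intervalIntegral.integral_mono_interval (by linarith) (by linarith) (by linarith)
            (Filter.Eventually.of_forall fun v => ?_) ((hcin c).intervalIntegrable _ _)
          exact intervalIntegral.integral_nonneg (by linarith) fun u _ => hg0 _
  have hup : Φ 0 ≤ 2 * S * ∫ t in (-(4 * T))..(4 * T), g t := by
    calc Φ 0 ≤ ∫ v in (-S)..S, ∫ t in (-(4 * T))..(4 * T), g t := by
          refine intervalIntegral.integral_mono_on (by linarith)
            ((hcin 0).intervalIntegrable _ _) (continuous_const.intervalIntegrable _ _) fun v hv => ?_
          rw [hsub]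
          exact intervalIntegral.integral_mono_interval (by linarith [hv.2]) (by linarith)
            (by linarith [hv.1]) (hpos _ _) (hc.intervalIntegrable _ _)
      _ = _ := by rw [intervalIntegral.integral_const, smul_eq_mul]; ring
  have h := hlow.trans (hle.trans hup)
  have : S * ∫ t in (c - T)..(c + T), g t ≤ S * (2 * ∫ t in (-(4 * T))..(4 * T), g t) := by linarith
  exact le_of_mul_le_mul_left this (by linarith)

lemma e_sum {ι : Type*} (s : Finset ι) (φ : ι → ℝ) : ∏ i ∈ s, e (φ i) = e (∑ i ∈ s, φ i) := by
  classical
  induction s using Finset.induction_on with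
  | empty => simp [e_zero]
  | insert a s ha ih => rw [Finset.prod_insert ha, Finset.sum_insert ha, e_add, ih]

/-- `G20` is a trigonometric polynomial with nonnegative coefficients: its frequencies are the
values of `∑ (xᵢ⁵ - yᵢ⁵)` over the solutions of `∑ (xᵢ - yᵢ) = ∑ (xᵢ³ - yᵢ³) = 0`. -/
lemma G20_eq_sum (Z Z' : ℕ) : ∃ (P : Finset ((Fin 10 → ℤ) × (Fin 10 → ℤ)))
    (Q : (Fin 10 → ℤ) × (Fin 10 → ℤ) → ℝ), ∀ t, (G20 Z Z' t : ℂ) = ∑ i ∈ P, e (Q i * t) := by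
  set X := Fintype.piFinset fun _ : Fin 10 => Ioc (Z : ℤ) Z' with hX
  set m : ℕ → (Fin 10 → ℤ) × (Fin 10 → ℤ) → ℤ :=
    fun k x => ∑ i, x.1 i ^ k - ∑ i, x.2 i ^ k with hm
  have hF : ∀ a b t : ℝ, ((‖F Z Z' a b t‖ ^ 20 : ℝ) : ℂ) =
      ∑ x ∈ X ×ˢ X, e (m 5 x * t) * e (m 3 x * b) * e (m 1 x * a) := by
    intro a b t
    have h10 : F Z Z' a b t ^ 10 = ∑ x ∈ X, e (∑ i, (a * (x i : ℝ) + b * (x i : ℝ) ^ 3 + t * (x i : ℝ) ^ 5)) := by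
      have := Finset.prod_univ_sum (fun _ : Fin 10 => Ioc (Z : ℤ) Z')
        (fun _ (x : ℤ) => e (a * (x : ℝ) + b * (x : ℝ) ^ 3 + t * (x : ℝ) ^ 5))
      rw [Finset.prod_const, Finset.card_univ, Fintype.card_fin] at this
      rw [F, this]
      refine Finset.sum_congr rfl fun x _ => ?_
      rw [e_sum]
    rw [show ‖F Z Z' a b t‖ ^ 20 = ‖F Z Z' a b t ^ 10‖ ^ 2 by rw [norm_pow]; ring, h10, normSq_sum_e]
    refine Finset.sum_congr rfl fun x _ => ?_
    rw [← e_add, ← e_add]; congr 1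
    simp only [hm, Finset.sum_add_distrib, ← Finset.mul_sum]
    push_cast
    simp only [pow_one]
    ring
  refine ⟨{x ∈ {x ∈ X ×ˢ X | m 1 x = 0} | m 3 x = 0}, fun x => m 5 x, fun t => ?_⟩
  have hJ : ∀ b, (J20 Z Z' b t : ℂ) = ∑ x ∈ X ×ˢ X with m 1 x = 0, e (m 5 x * t) * e (m 3 x * b) := by
    intro b
    rw [J20, ← intervalIntegral.integral_ofReal]
    simp_rw [hF]
    have := integral_trig_eq (X ×ˢ X) (m 1) (fun x => e (m 5 x * t) * e (m 3 x * b)) 0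
    rw [zero_add] at this
    exact this
  rw [G20, ← intervalIntegral.integral_ofReal]
  simp_rw [hJ]
  have := integral_trig_eq {x ∈ X ×ˢ X | m 1 x = 0} (m 3) (fun x => e (m 5 x * t)) 0
  rw [zero_add] at this
  exact this

lemma J20_nonneg (Z Z' : ℕ) (b t : ℝ) : 0 ≤ J20 Z Z' b t :=
  intervalIntegral.integral_nonneg (by norm_num) fun _ _ => by positivity

lemma G20_nonneg (Z Z' : ℕ) (t : ℝ) : 0 ≤ G20 Z Z' t :=
  intervalIntegral.integral_nonneg (by norm_num) fun _ _ => J20_nonneg _ _ _ _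

lemma integral_G20_shift (Z Z' : ℕ) (c T : ℝ) (hT : 0 ≤ T) :
    ∫ t in (c - T)..(c + T), G20 Z Z' t ≤ 2 * ∫ t in (-(4 * T))..(4 * T), G20 Z Z' t := by
  obtain ⟨P, Q, h⟩ := G20_eq_sum Z Z'
  exact integral_shift_le P Q _ h (continuous_G20 Z Z') (G20_nonneg Z Z') c T hT

/-! ### The bound for one dyadic block -/

lemma divBound_rpow (η : ℝ) (hη : 0 < η) : ∃ C : ℝ, 1 ≤ C ∧ ∀ Z : ℕ, 4 ≤ Z →
    DivBound Z (C * ((Z : ℝ) ^ η) ^ 4) := by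
  obtain ⟨C, hC, h⟩ := card_divisors_le η hη
  refine ⟨2 * C, by linarith, fun Z hZ n hn hnZ => ?_⟩
  have h1 := card_int_divisors_le (Icc (-(Z : ℤ)) Z) n hn
  have h2 := h n.natAbs (by simpa using hn)
  have hZ' : (4 : ℝ) ≤ Z := by exact_mod_cast hZ
  have h3 : (n.natAbs : ℝ) ≤ (Z : ℝ) ^ 4 := by
    rw [Nat.cast_natAbs]
    have : ((|n| : ℤ) : ℝ) ≤ 4 * (Z : ℝ) ^ 3 := by exact_mod_cast hnZ
    nlinarith [pow_pos (by linarith : (0 : ℝ) < Z) 3]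
  have h4 : (n.natAbs : ℝ) ^ η ≤ ((Z : ℝ) ^ η) ^ 4 := by
    refine (Real.rpow_le_rpow (by positivity) h3 hη.le).trans_eq ?_
    rw [← Real.rpow_natCast, ← Real.rpow_natCast, ← Real.rpow_mul (by positivity),
      ← Real.rpow_mul (by positivity), mul_comm]
  calc _ ≤ ((2 * #n.natAbs.divisors : ℕ) : ℝ) := Nat.cast_le.2 h1
    _ = 2 * (#n.natAbs.divisors : ℝ) := by push_cast; ring
    _ ≤ 2 * (C * (n.natAbs : ℝ) ^ η) := by linarith
    _ ≤ 2 * C * ((Z : ℝ) ^ η) ^ 4 := by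
      rw [mul_assoc]
      gcongr

lemma G20_le_trivial (Z Z' : ℕ) (hZ : Z' ≤ 2 * Z) (t : ℝ) : G20 Z Z' t ≤ (Z : ℝ) ^ 20 := by
  have hJ : ∀ b, J20 Z Z' b t ≤ (Z : ℝ) ^ 20 := by
    intro b
    have := intervalIntegral.integral_mono_on (μ := volume) (a := 0) (b := 1) zero_le_one
      (f := fun a => ‖F Z Z' a b t‖ ^ 20) (g := fun _ => (Z : ℝ) ^ 20)
      (Continuous.intervalIntegrable (by
        have := continuous_F Z Z' (u := fun a : ℝ => a) (v := fun _ => b) (w := fun _ => t)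
          continuous_id continuous_const continuous_const
        fun_prop) _ _) (by simp) (fun a _ => pow_le_pow_left₀ (norm_nonneg _) (norm_F_le Z Z' hZ a b t) _)
    simpa [J20] using this
  have := intervalIntegral.integral_mono_on (μ := volume) (a := 0) (b := 1) zero_le_one
      (f := fun b => J20 Z Z' b t) (g := fun _ => (Z : ℝ) ^ 20)
      (Continuous.intervalIntegrable (by
        exact continuous_J20 Z Z' (u := fun a : ℝ => a) (v := fun _ => t)
          continuous_id continuous_const) _ _) (by simp) (fun b _ => hJ b)
  simpa [G20] using this

/-- The mean value over one dyadic block, with all logarithmic and divisor losses absorbed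
into `Z ^ ε`. -/
lemma block_bound (ε : ℝ) (hε : 0 < ε) : ∃ C : ℝ, 0 ≤ C ∧ ∀ Z Z' : ℕ, 1 ≤ Z → Z' ≤ 2 * Z →
    ∀ c T : ℝ, 0 ≤ T → T ≤ (Z : ℝ) ^ (-(10 : ℝ) / 3) →
    ∫ t in (c - T)..(c + T), G20 Z Z' t ≤ C * (Z : ℝ) ^ (11 + ε) := by
  -- the losses are `V ^ 4 ≪ Z ^ (16 η)` and `log Z ≪ Z ^ η`
  set η := ε / 17 with hη
  have hη0 : 0 < η := by positivity
  obtain ⟨D, hD, hdiv⟩ := divBound_rpow η hη0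
  refine ⟨2 * (10 ^ 30 * D ^ 4 * (1 + 6 / η)) + 2 * 1000 ^ 20, by positivity, ?_⟩
  intro Z Z' hZ hZ' c T hT hTZ
  have hZ1 : (1 : ℝ) ≤ Z := by exact_mod_cast hZ
  have hZ0 : (0 : ℝ) < Z := by linarith
  have hbig : (1 : ℝ) ≤ (Z : ℝ) ^ (11 + ε) := Real.one_le_rpow hZ1 (by linarith)
  rcases lt_or_ge Z 1000 with hlt | hge
  · have hT1 : T ≤ 1 := hTZ.trans (Real.rpow_le_one_of_one_le_of_nonpos hZ1 (by norm_num))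
    have h20 : (Z : ℝ) ^ 20 ≤ 1000 ^ 20 :=
      pow_le_pow_left₀ hZ0.le (by exact_mod_cast hlt.le) _
    have h1 := intervalIntegral.integral_mono_on (μ := volume) (a := c - T) (b := c + T)
      (by linarith)
      (f := fun t => G20 Z Z' t) (g := fun _ => (1000 : ℝ) ^ 20)
      ((continuous_G20 Z Z').intervalIntegrable _ _) (by simp)
      (fun t _ => (G20_le_trivial Z Z' hZ' t).trans h20)
    rw [intervalIntegral.integral_const, smul_eq_mul] at h1
    have h2 : (c + T - (c - T)) * (1000 : ℝ) ^ 20 ≤ 2 * 1000 ^ 20 := by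
      nlinarith
    have h3 : (0 : ℝ) ≤ 2 * (10 ^ 30 * D ^ 4 * (1 + 6 / η)) := by positivity
    calc _ ≤ 2 * (1000 : ℝ) ^ 20 := h1.trans h2
      _ ≤ (2 * (10 ^ 30 * D ^ 4 * (1 + 6 / η)) + 2 * 1000 ^ 20) * 1 := by linarith
      _ ≤ _ := by gcongr
  · set p : ℝ := (Z : ℝ) ^ ((1 : ℝ) / 6) with hp
    have hp0 : 0 < p := by positivity
    have hp6 : p ^ 6 = Z := by
      rw [hp, ← Real.rpow_natCast, ← Real.rpow_mul hZ0.le]; norm_num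
    have hp20 : (Z : ℝ) ^ (-(10 : ℝ) / 3) = 1 / p ^ 20 := by
      rw [hp, ← Real.rpow_natCast, ← Real.rpow_mul hZ0.le, one_div, ← Real.rpow_neg hZ0.le]
      norm_num
    set q : ℝ := (Z : ℝ) ^ η with hq
    have hq1 : 1 ≤ q := Real.one_le_rpow hZ1 hη0.le
    have hq4 : 1 ≤ q ^ 4 := one_le_pow₀ hq1
    have h1 := integral_G20_shift Z Z' c T hT
    have h2 := integral_G20_zero Z Z' hge hZ' p (D * q ^ 4) hp0 hp6 (by nlinarith)
      (hdiv Z (by omega)) (4 * T) (by linarith) (by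
        rw [hp20] at hTZ
        calc 4 * T ≤ 4 * (1 / p ^ 20) := by linarith
          _ = _ := by ring)
    have hlog : 1 + Real.log (1 + 4 * (Z : ℝ) ^ 5) ≤ (1 + 6 / η) * q := by
      have hge' : (1000 : ℝ) ≤ Z := by exact_mod_cast hge
      have h5 : (1 : ℝ) ≤ (Z : ℝ) ^ 5 := one_le_pow₀ hZ1
      have h6 : 1 + 4 * (Z : ℝ) ^ 5 ≤ (Z : ℝ) ^ 6 := by
        rw [pow_succ _ 5]; nlinarith
      have h7 : Real.log (1 + 4 * (Z : ℝ) ^ 5) ≤ 6 * Real.log Z := by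
        have := Real.log_le_log (by positivity) h6
        rwa [Real.log_pow] at this
      have h8 := Real.log_le_rpow_div hZ0.le hη0
      have h9 : 6 * Real.log Z ≤ 6 / η * q := by
        calc _ ≤ 6 * (q / η) := by linarith
          _ = _ := by ring
      linarith
    have hfin : (Z : ℝ) ^ (11 + ε) = (Z : ℝ) ^ 11 * q ^ 17 := by
      rw [Real.rpow_add hZ0, hq, ← Real.rpow_natCast ((Z : ℝ) ^ η), ← Real.rpow_mul hZ0.le,
        ← Real.rpow_natCast (Z : ℝ) 11]
      norm_num [hη]
    have h3 : ∫ t in (-(4 * T))..(4 * T), G20 Z Z' t ≤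
        10 ^ 30 * D ^ 4 * (1 + 6 / η) * (Z : ℝ) ^ (11 + ε) := by
      refine h2.trans ?_
      calc 10 ^ 30 * (Z : ℝ) ^ 11 * (D * q ^ 4) ^ 4 * (1 + Real.log (1 + 4 * (Z : ℝ) ^ 5))
          ≤ 10 ^ 30 * (Z : ℝ) ^ 11 * (D * q ^ 4) ^ 4 * ((1 + 6 / η) * q) := by gcongr
        _ = _ := by rw [hfin]; ring
    have h4 : (0 : ℝ) ≤ 2 * 1000 ^ 20 * (Z : ℝ) ^ (11 + ε) := by positivity
    calc _ ≤ 2 * (10 ^ 30 * D ^ 4 * (1 + 6 / η) * (Z : ℝ) ^ (11 + ε)) := by linarith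
      _ ≤ _ := by linarith

/-! ### Dyadic decomposition -/

/-- The terms `x` and `-x` are complex conjugates. -/
lemma f135_norm_le (X : ℝ) (hX : 1 ≤ X) (a b t : ℝ) :
    ‖f135 a b t X‖ ≤ 1 + 2 * ‖F 0 ⌊X⌋₊ a b t‖ := by
  set M := ⌊X⌋₊ with hM
  have hMX : ⌊X⌋ = (M : ℤ) := by rw [hM, Int.natCast_floor_eq_floor (by linarith)]
  set g : ℤ → ℂ := fun x => e (a * (x : ℝ) + b * (x : ℝ) ^ 3 + t * (x : ℝ) ^ 5) with hg
  have hneg : ∀ x, g (-x) = (starRingEnd ℂ) (g x) := by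
    intro x
    simp only [hg, conj_e]
    congr 1; push_cast; ring
  have hF : F 0 M a b t = ∑ x ∈ Ioc (0 : ℤ) M, g x := by simp [F, hg]
  have hset : Icc (-(M : ℤ)) M =
      insert 0 (Ioc (0 : ℤ) M ∪ (Ioc (0 : ℤ) M).image (fun x => -x)) := by
    ext x
    simp only [mem_Icc, mem_insert, mem_union, mem_Ioc, mem_image]
    constructor
    · intro h
      rcases lt_trichotomy x 0 with h0 | h0 | h0
      · exact Or.inr (Or.inr ⟨-x, by omega, by omega⟩)
      · exact Or.inl h0
      · exact Or.inr (Or.inl ⟨h0, h.2⟩)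
    · rintro (h | h | ⟨y, h, rfl⟩) <;> omega
  have hsum : f135 a b t X = g 0 + (F 0 M a b t + (starRingEnd ℂ) (F 0 M a b t)) := by
    rw [f135, hMX, hset, Finset.sum_insert, Finset.sum_union, Finset.sum_image, hF, map_sum]
    · simp_rw [← hneg]
      rfl
    · intro x _ y _ h; simpa using h
    · rw [Finset.disjoint_left]
      intro x hx hx'
      simp only [mem_Ioc, mem_image] at hx hx'
      obtain ⟨y, hy, rfl⟩ := hx'
      omega
    · simp only [mem_union, mem_Ioc, mem_image, not_or, not_exists]
      exact ⟨by omega, fun y hy => by omega⟩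
  rw [hsum]
  have h0 : ‖g 0‖ = 1 := norm_e _
  calc _ ≤ ‖g 0‖ + (‖F 0 M a b t‖ + ‖(starRingEnd ℂ) (F 0 M a b t)‖) :=
        (norm_add_le _ _).trans (by gcongr; exact norm_add_le _ _)
    _ = _ := by rw [h0, Complex.norm_conj]; ring

/-- Decomposition of `(0, M]` into the blocks `(2^j, 2^(j+1)]`, truncated at `M`. -/
lemma F_telescope (M : ℕ) (hM : 1 ≤ M) (a b t : ℝ) (J : ℕ) :
    F 0 (min (2 ^ J) M) a b t =
      F 0 1 a b t + ∑ j ∈ range J, F (min (2 ^ j) M) (min (2 ^ (j + 1)) M) a b t := by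
  induction J with
  | zero => simp [hM]
  | succ J ih =>
    rw [Finset.sum_range_succ, ← add_assoc, ← ih]
    have hle : min (2 ^ J) M ≤ min (2 ^ (J + 1)) M :=
      min_le_min_right _ (Nat.pow_le_pow_right (by norm_num) (by omega))
    simp only [F]
    generalize min (2 ^ J) M = u at *
    generalize min (2 ^ (J + 1)) M = v at *
    rw [← Finset.sum_union, ]
    · congr 1
      ext x; simp only [mem_union, mem_Ioc]; omega
    · rw [Finset.disjoint_left]; intro x; simp only [mem_Ioc]; omega

lemma f135_pow_le (X : ℝ) (hX : 1 ≤ X) (a b t : ℝ) (J : ℕ) (hJ : ⌊X⌋₊ ≤ 2 ^ J) :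
    ‖f135 a b t X‖ ^ 20 ≤ 2 ^ 19 * (3 ^ 20 + 2 ^ 20 * (J : ℝ) ^ 19 *
      ∑ j ∈ range J, ‖F (min (2 ^ j) ⌊X⌋₊) (min (2 ^ (j + 1)) ⌊X⌋₊) a b t‖ ^ 20) := by
  set M := ⌊X⌋₊ with hM
  have hM1 : 1 ≤ M := Nat.le_floor (by simpa using hX)
  have h1 := f135_norm_le X hX a b t
  have h2 := F_telescope M hM1 a b t J
  rw [min_eq_right hJ] at h2
  set S := ∑ j ∈ range J, ‖F (min (2 ^ j) M) (min (2 ^ (j + 1)) M) a b t‖ with hS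
  have h01 : ‖F 0 1 a b t‖ ≤ 1 := by
    have : Ioc (0 : ℤ) 1 = {1} := by ext x; simp; omega
    simp [F, this, norm_e]
  have h3 : ‖F 0 M a b t‖ ≤ 1 + S := by
    rw [h2]
    exact (norm_add_le _ _).trans (add_le_add h01 (norm_sum_le _ _))
  have hS0 : 0 ≤ S := Finset.sum_nonneg fun _ _ => norm_nonneg _
  have h4 : S ^ 20 ≤ (J : ℝ) ^ 19 *
      ∑ j ∈ range J, ‖F (min (2 ^ j) M) (min (2 ^ (j + 1)) M) a b t‖ ^ 20 := by
    have := pow_sum_le_card_mul_sum_pow (s := range J)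
      (f := fun j => ‖F (min (2 ^ j) M) (min (2 ^ (j + 1)) M) a b t‖)
      (fun _ _ => norm_nonneg _) 19
    simpa using this
  calc ‖f135 a b t X‖ ^ 20 ≤ (3 + 2 * S) ^ 20 :=
        pow_le_pow_left₀ (norm_nonneg _) (by rw [← hM] at h1; linarith) _
    _ ≤ 2 ^ 19 * (3 ^ 20 + (2 * S) ^ 20) := add_pow_le (by norm_num) (by positivity) 20
    _ = 2 ^ 19 * (3 ^ 20 + 2 ^ 20 * S ^ 20) := by ring
    _ ≤ _ := by
      rw [mul_assoc (2 ^ 20 : ℝ)]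
      gcongr

lemma continuous_f135 (X : ℝ) {α : Type*} [TopologicalSpace α] {u v w : α → ℝ}
    (hu : Continuous u) (hv : Continuous v) (hw : Continuous w) :
    Continuous fun x => f135 (u x) (v x) (w x) X := by
  have := continuous_e
  unfold f135; fun_prop

/-- Fubini's theorem over `[0, 1] × s`, integrating the first variable innermost. -/
lemma setIntegral_prod_swap {β : Type*} [MeasureSpace β] [SFinite (volume : Measure β)]
    (f : ℝ × β → ℝ) (s : Set β) (hf : IntegrableOn f (Set.Icc (0 : ℝ) 1 ×ˢ s)) :
    ∫ z in Set.Icc (0 : ℝ) 1 ×ˢ s, f z = ∫ y in s, ∫ x in (0 : ℝ)..1, f (x, y) := by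
  rw [Measure.volume_eq_prod] at hf ⊢
  rw [IntegrableOn, ← Measure.prod_restrict] at hf
  rw [← Measure.prod_restrict, integral_prod_symm _ hf]
  simp_rw [intervalIntegral.integral_of_le zero_le_one, integral_Icc_eq_integral_Ioc]

lemma integral_box_F (Z Z' : ℕ) (c T : ℝ) (hT : 0 ≤ T) :
    ∫ α : ℝ × ℝ × ℝ in
      Set.Icc (0 : ℝ) 1 ×ˢ Set.Icc (0 : ℝ) 1 ×ˢ Set.Icc (c - T) (c + T),
      ‖F Z Z' α.1 α.2.1 α.2.2‖ ^ 20 = ∫ t in (c - T)..(c + T), G20 Z Z' t := by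
  have hc : Continuous fun α : ℝ × ℝ × ℝ => ‖F Z Z' α.1 α.2.1 α.2.2‖ ^ 20 := by fun_prop
  have hc' : Continuous fun z : ℝ × ℝ => J20 Z Z' z.1 z.2 := by fun_prop
  rw [setIntegral_prod_swap _ _ (hc.continuousOn.integrableOn_compact
    (isCompact_Icc.prod (isCompact_Icc.prod isCompact_Icc)))]
  change ∫ z in Set.Icc (0 : ℝ) 1 ×ˢ Set.Icc (c - T) (c + T), J20 Z Z' z.1 z.2 = _
  rw [setIntegral_prod_swap _ _ (hc'.continuousOn.integrableOn_compact
    (isCompact_Icc.prod isCompact_Icc)), intervalIntegral.integral_of_le (by linarith),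
    integral_Icc_eq_integral_Ioc]
  rfl

/-- The number of dyadic blocks costs only a power `X ^ δ`. -/
lemma natLog_floor_le (δ : ℝ) (hδ : 0 < δ) (X : ℝ) (hX : 1 ≤ X) :
    ((Nat.log 2 ⌊X⌋₊ + 1 : ℕ) : ℝ) ≤ (1 + 2 / δ) * X ^ δ := by
  set L := Nat.log 2 ⌊X⌋₊
  have hM1 : 1 ≤ ⌊X⌋₊ := Nat.le_floor (by simpa using hX)
  have h1 : (2 : ℝ) ^ L ≤ X := by
    have h : 2 ^ L ≤ ⌊X⌋₊ := Nat.pow_log_le_self 2 (by omega)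
    calc (2 : ℝ) ^ L = ((2 ^ L : ℕ) : ℝ) := by push_cast; rfl
      _ ≤ (⌊X⌋₊ : ℝ) := Nat.cast_le.2 h
      _ ≤ X := Nat.floor_le (by linarith)
  have h2 := Real.log_le_log (by positivity) h1
  rw [Real.log_pow] at h2
  have h3 := Real.log_two_gt_d9
  have h4 : (L : ℝ) ≤ 2 * Real.log X := by
    have : (0 : ℝ) ≤ L := by positivity
    nlinarith
  have h5 := Real.log_le_rpow_div (by linarith : 0 ≤ X) hδ
  have h6 : 1 ≤ X ^ δ := Real.one_le_rpow hX hδ.le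
  push_cast
  calc (L : ℝ) + 1 ≤ 2 * (X ^ δ / δ) + X ^ δ := by linarith
    _ = _ := by ring

theorem stmt14 (ε : ℝ) (hε : 0 < ε) :
    ∃ C : ℝ, ∀ X : ℝ, 1 ≤ X → ∀ c ∈ Set.Icc (0 : ℝ) 1, ∀ T : ℝ,
      0 ≤ T → T ≤ X ^ (-(10 : ℝ) / 3) →
      (∫ α : ℝ × ℝ × ℝ in
          Set.Icc (0 : ℝ) 1 ×ˢ Set.Icc (0 : ℝ) 1 ×ˢ Set.Icc (c - T) (c + T),
          ‖f135 α.1 α.2.1 α.2.2 X‖ ^ (20 : ℕ)) ≤ C * X ^ ((11 : ℝ) + ε) := by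
  -- half of `ε` is spent on the blocks, the other half on the `20`-th power of their number
  set δ := ε / 40 with hδ
  have hδ0 : 0 < δ := by positivity
  obtain ⟨K, hK, hblock⟩ := block_bound (ε / 2) (by positivity)
  refine ⟨2 ^ 19 * (3 ^ 20 * 2 + 2 ^ 20 * (1 + 2 / δ) ^ 20 * K), ?_⟩
  intro X hX c _ T hT hTX
  have hX0 : 0 < X := by linarith
  set M := ⌊X⌋₊ with hM
  have hM1 : 1 ≤ M := Nat.le_floor (by simpa using hX)
  have hMX : (M : ℝ) ≤ X := Nat.floor_le hX0.le
  set J := Nat.log 2 M + 1 with hJ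
  have hMJ : M ≤ 2 ^ J := (Nat.lt_pow_succ_log_self (by norm_num) M).le
  have hJX : (J : ℝ) ≤ (1 + 2 / δ) * X ^ δ := natLog_floor_le δ hδ0 X hX
  set B := Set.Icc (0 : ℝ) 1 ×ˢ Set.Icc (0 : ℝ) 1 ×ˢ Set.Icc (c - T) (c + T) with hB
  have hBc : IsCompact B := isCompact_Icc.prod (isCompact_Icc.prod isCompact_Icc)
  have hInt : ∀ g : ℝ × ℝ × ℝ → ℝ, Continuous g → IntegrableOn g B := fun g hg =>
    hg.continuousOn.integrableOn_compact hBc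
  have hvol : (volume : Measure (ℝ × ℝ × ℝ)).real B = 2 * T := by
    rw [hB, Measure.volume_eq_prod, measureReal_prod_prod, Measure.volume_eq_prod,
      measureReal_prod_prod, Real.volume_real_Icc_of_le (by norm_num),
      Real.volume_real_Icc_of_le (by linarith)]
    ring
  have hT1 : T ≤ 1 := hTX.trans (Real.rpow_le_one_of_one_le_of_nonpos hX (by norm_num))
  set Y : ℕ → ℝ × ℝ × ℝ → ℝ := fun j α =>
    ‖F (min (2 ^ j) M) (min (2 ^ (j + 1)) M) α.1 α.2.1 α.2.2‖ ^ 20 with hY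
  have hYc : ∀ j, Continuous (Y j) := fun j => by simp only [hY]; fun_prop
  have hYb : ∀ j, ∫ α in B, Y j α ≤ K * X ^ (11 + ε / 2) := by
    intro j
    have hZ1 : 1 ≤ min (2 ^ j) M := le_min Nat.one_le_two_pow hM1
    have hZX : ((min (2 ^ j) M : ℕ) : ℝ) ≤ X := (Nat.cast_le.2 (min_le_right _ _)).trans hMX
    have hZ0 : (0 : ℝ) < ((min (2 ^ j) M : ℕ) : ℝ) := Nat.cast_pos.2 hZ1
    have h := hblock (min (2 ^ j) M) (min (2 ^ (j + 1)) M) hZ1 (by rw [pow_succ]; omega) c T hT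
      (hTX.trans (Real.rpow_le_rpow_of_nonpos hZ0 hZX (by norm_num)))
    rw [← integral_box_F _ _ _ _ hT] at h
    refine h.trans ?_
    gcongr
  have hle : ∫ α in B, ‖f135 α.1 α.2.1 α.2.2 X‖ ^ 20 ≤
      ∫ α in B, 2 ^ 19 * (3 ^ 20 + 2 ^ 20 * (J : ℝ) ^ 19 * ∑ j ∈ range J, Y j α) := by
    refine setIntegral_mono (hInt _ ?_) (hInt _ ?_) fun α => f135_pow_le X hX _ _ _ J hMJ
    · have := continuous_f135 X (u := fun α : ℝ × ℝ × ℝ => α.1) (v := fun α => α.2.1)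
        (w := fun α => α.2.2) (by fun_prop) (by fun_prop) (by fun_prop)
      fun_prop
    · fun_prop
  have heq : ∫ α in B, 2 ^ 19 * (3 ^ 20 + 2 ^ 20 * (J : ℝ) ^ 19 * ∑ j ∈ range J, Y j α) =
      2 ^ 19 * (3 ^ 20 * (2 * T) + 2 ^ 20 * (J : ℝ) ^ 19 * ∑ j ∈ range J, ∫ α in B, Y j α) := by
    rw [integral_const_mul, integral_add (hInt _ continuous_const) (hInt _ (by fun_prop)),
      integral_const_mul, integral_finsetSum _ (fun j _ => hInt _ (hYc j)),
      setIntegral_const, hvol, smul_eq_mul, mul_comm (2 * T)]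
  have hsum : ∑ j ∈ range J, ∫ α in B, Y j α ≤ J * (K * X ^ (11 + ε / 2)) := by
    refine (Finset.sum_le_sum fun j _ => hYb j).trans_eq ?_
    rw [Finset.sum_const, card_range, nsmul_eq_mul]
  have hJ20 : (J : ℝ) ^ 20 ≤ (1 + 2 / δ) ^ 20 * X ^ (ε / 2) := by
    refine (pow_le_pow_left₀ (by positivity) hJX 20).trans_eq ?_
    rw [mul_pow, ← Real.rpow_natCast (X ^ δ), ← Real.rpow_mul hX0.le]
    congr 2
    rw [hδ]; push_cast; ring
  have hone : (1 : ℝ) ≤ X ^ (11 + ε) := Real.one_le_rpow hX (by linarith)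
  have hXX : X ^ (11 + ε) = X ^ (ε / 2) * X ^ (11 + ε / 2) := by
    rw [← Real.rpow_add hX0]; congr 1; ring
  calc ∫ α in B, ‖f135 α.1 α.2.1 α.2.2 X‖ ^ 20
      ≤ 2 ^ 19 * (3 ^ 20 * (2 * T) +
          2 ^ 20 * (J : ℝ) ^ 19 * ∑ j ∈ range J, ∫ α in B, Y j α) := heq ▸ hle
    _ ≤ 2 ^ 19 * (3 ^ 20 * (2 * 1) +
          2 ^ 20 * (J : ℝ) ^ 19 * (J * (K * X ^ (11 + ε / 2)))) := by gcongr
    _ = 2 ^ 19 * (3 ^ 20 * 2 * 1 + 2 ^ 20 * (J : ℝ) ^ 20 * (K * X ^ (11 + ε / 2))) := by ring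
    _ ≤ 2 ^ 19 * (3 ^ 20 * 2 * X ^ (11 + ε) +
          2 ^ 20 * ((1 + 2 / δ) ^ 20 * X ^ (ε / 2)) * (K * X ^ (11 + ε / 2))) := by gcongr
    _ = _ := by rw [hXX]; ring
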